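/- arXiv:1408.2618 — 2 statements merged into one kernel-verified Lean document; each statement's English description precedes it below -/
import Mathlib

section
/- Let R be a commutative Noetherian ring of finite Krull dimension d, let B = R[X_1,…,X_m,Y_1^{±1},…,Y_n^{±1}] be a Laurent polynomial ring over R, let f ∈ R[Y] be a monic polynomial in one further variable Y, and let A = B[Y, f^{-1}] be the localization of B[Y] at the powers of f. Then every finitely generated projective A-module of constant rank ≥ d+1 has a unimodular element. -/
open MvPolynomial TensorProduct

noncomputable section

/-- The submonoid of the polynomial ring `R[X_1,…,X_m,Y_1,…,Y_n]` generated by the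
`Y`-variables; inverting it produces the Laurent polynomial ring
`B = R[X_1,…,X_m,Y_1^{±1},…,Y_n^{±1}]`. -/
def Ymonoid (R : Type*) [CommRing R] (m n : ℕ) :
    Submonoid (MvPolynomial (Fin m ⊕ Fin n) R) :=
  Submonoid.closure (Set.range fun j : Fin n => (X (Sum.inr j) : MvPolynomial (Fin m ⊕ Fin n) R))

/-!
Induct on `dim R`. Modulo the nilradical, the total ring of fractions of `R` is a product of fields,
and over a field projective modules of constant rank are free: exchanging `Y` with another variable
makes the principal ideal domain `K[Y]_f` a base of dimension one. So the module `P` has a basis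
after inverting a nonzerodivisor `s ∈ R`.

By induction `P / s P` has a unimodular element. It lifts to `x ∈ P` whose order ideal is comaximal
with `s`, and prime avoidance makes the height of that order ideal greater than `dim R`. A change of
variables in the style of Noether normalization turns one coordinate of `x` over `A[1/s]`, and an
element of the order ideal, into polynomials in `Y` that are monic and coprime to `f`. Horrocks'
theorem then connects the row of coordinates of `x` to a standard row by a polynomial homotopy, and
Quillen's splitting of the homotopy glues `x` to a basis vector over `A[1/s]`.
-/

universe u

namespace SerreDimension

open Matrix
open scoped Polynomial

/-! ### Isotopies of vectors -/

section Isotopy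

variable {A ι : Type*} [CommRing A] [Fintype ι] [DecidableEq ι]

/-- `v` and `w` are isotopic if `v = γ(1) w` for an invertible matrix `γ` over `A[T]` with
`γ(0) = 1`. Quillen's splitting applies to `γ`, but not to an arbitrary matrix moving `w` to `v`. -/
def IsIsotopic (v w : ι → A) : Prop :=
  ∃ γ : GL ι A[X], GeneralLinearGroup.map (Polynomial.evalRingHom 0) γ = 1 ∧
    v = (GeneralLinearGroup.map (Polynomial.evalRingHom 1) γ).1 *ᵥ w

namespace IsIsotopic

variable {u v w : ι → A}

variable (v) in
theorem refl : IsIsotopic v v :=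
  ⟨1, map_one _, by rw [map_one, Units.val_one, one_mulVec]⟩

theorem symm (h : IsIsotopic v w) : IsIsotopic w v := by
  obtain ⟨γ, hγ, rfl⟩ := h
  refine ⟨γ⁻¹, by rw [map_inv, hγ, inv_one], ?_⟩
  rw [map_inv, mulVec_mulVec, Units.inv_mul, one_mulVec]

theorem trans (h : IsIsotopic u v) (h' : IsIsotopic v w) : IsIsotopic u w := by
  obtain ⟨γ, hγ, rfl⟩ := h
  obtain ⟨δ, hδ, rfl⟩ := h'
  refine ⟨γ * δ, by rw [map_mul, hγ, hδ, one_mul], ?_⟩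
  rw [map_mul, Units.val_mul, mulVec_mulVec]

theorem smul (c : A) (h : IsIsotopic v w) : IsIsotopic (c • v) (c • w) := by
  obtain ⟨γ, hγ, rfl⟩ := h
  exact ⟨γ, hγ, (mulVec_smul _ _ _).symm⟩

variable (v) in
theorem add_dotProduct_smul {a b : ι → A} (hab : b ⬝ᵥ a = 0) :
    IsIsotopic (v + (b ⬝ᵥ v) • a) v := by
  have hsq : vecMulVec a b * vecMulVec a b = 0 := by
    rw [vecMulVec_mul_vecMulVec, hab, zero_smul, vecMulVec_zero]
  set N := (Polynomial.X : A[X]) • (vecMulVec a b).map Polynomial.C with hN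
  have hN2 : N * N = 0 := by
    rw [hN, smul_mul_smul_comm, ← Matrix.map_mul, hsq]
    simp
  let γ : GL ι A[X] :=
    ⟨1 + N, 1 - N, by simp [mul_sub, add_mul, hN2], by simp [mul_add, sub_mul, hN2]⟩
  have hγ (x : A) : (GeneralLinearGroup.map (Polynomial.evalRingHom x) γ).1 =
      1 + x • vecMulVec a b := by
    ext i j
    rcases eq_or_ne i j with rfl | hij <;> simp [γ, mul_comm x, *]
  refine ⟨γ, Units.ext ?_, ?_⟩
  · rw [hγ, zero_smul, add_zero, Units.val_one]
  · rw [hγ, one_smul, add_mulVec, one_mulVec, vecMulVec_mulVec, op_smul_eq_smul]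

end IsIsotopic

end Isotopy

/-! ### Divided differences of polynomials -/

section Slope

variable {A : Type*} [CommRing A]

/-- The divided difference `(p(x + t) - p(x)) / t`, as an additive function of `p`. -/
def slope (x t : A) : A[X] →+ A :=
  (Polynomial.evalRingHom t).toAddMonoidHom.comp
    (Polynomial.divX_hom.comp (Polynomial.taylorAlgHom x).toRingHom.toAddMonoidHom)

theorem slope_apply (x t : A) (p : A[X]) :
    slope x t p = (Polynomial.taylor x p).divX.eval t := rfl

theorem eval_add_eq_slope (x t : A) (p : A[X]) :
    p.eval (x + t) = p.eval x + t * slope x t p := by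
  have := congrArg (Polynomial.eval t) (Polynomial.divX_mul_X_add (Polynomial.taylor x p))
  rw [Polynomial.taylor_coeff_zero, Polynomial.taylor_eval] at this
  rw [add_comm x, ← this, slope_apply]
  simp only [Polynomial.eval_add, Polynomial.eval_mul, Polynomial.eval_X, Polynomial.eval_C]
  ring

theorem slope_C (x t a : A) : slope x t (Polynomial.C a) = 0 := by
  rw [slope_apply, Polynomial.taylor_C, Polynomial.divX_C, Polynomial.eval_zero]

theorem slope_mul (x t : A) (p q : A[X]) :
    slope x t (p * q) = slope x t p * q.eval (x + t) + p.eval x * slope x t q := by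
  have hdiv : ∀ f g : A[X], ∀ c, f = g * Polynomial.X + Polynomial.C c → f.divX = g := by
    rintro f g c rfl
    ext n
    simp
  set a := Polynomial.taylor x p with ha
  set b := Polynomial.taylor x q with hb
  have hab : (a * b).divX = a.divX * b + Polynomial.C (a.coeff 0) * b.divX := by
    apply hdiv _ _ (a.coeff 0 * b.coeff 0)
    rw [Polynomial.C_mul]
    linear_combination (-b) * Polynomial.divX_mul_X_add a -
      Polynomial.C (a.coeff 0) * Polynomial.divX_mul_X_add b
  rw [slope_apply, Polynomial.taylor_mul, hab, slope_apply, slope_apply, Polynomial.eval_add,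
    Polynomial.eval_mul, Polynomial.eval_mul, Polynomial.eval_C, ha, hb,
    Polynomial.taylor_coeff_zero, Polynomial.taylor_eval, add_comm t]

variable {ι : Type*}

theorem map_eval_add_eq_map_slope (x t : A) (G : Matrix ι ι A[X]) :
    G.map (Polynomial.eval (x + t)) = G.map (Polynomial.eval x) + t • G.map (slope x t) := by
  ext i j
  simp [eval_add_eq_slope]

variable [Fintype ι]

theorem map_slope_mul (x t : A) (G H : Matrix ι ι A[X]) :
    (G * H).map (slope x t) = G.map (slope x t) * H.map (Polynomial.eval (x + t)) +
      G.map (Polynomial.eval x) * H.map (slope x t) := by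
  ext i j
  simp [mul_apply, slope_mul, Finset.sum_add_distrib]

variable [DecidableEq ι]

theorem exists_isUnit_one_add_smul_mul_map_eval (G : Matrix ι ι A[X]) {c : A}
    (hG : G.det = Polynomial.C c) (x y : A) :
    ∃ K : Matrix ι ι A, IsUnit (1 + y • K) ∧
      (1 + y • K) * G.map (Polynomial.eval x) = G.map (Polynomial.eval (x + c * y)) := by
  set G₀ := G.map (Polynomial.eval x)
  set H₀ := G.adjugate.map (Polynomial.eval x)
  set D := G.map (slope x (c * y))
  set D' := G.adjugate.map (slope x (c * y))
  have hc : (Polynomial.C c • (1 : Matrix ι ι A[X])).map (Polynomial.eval x) = c • 1 := by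
    ext i j
    rcases eq_or_ne i j with rfl | hij <;> simp [*]
  have hH₀ : H₀ * G₀ = c • 1 := by
    have := congrArg (Polynomial.evalRingHom x).mapMatrix G.adjugate_mul
    rw [map_mul, hG] at this
    exact this.trans hc
  have hleibniz : D * (H₀ + (c * y) • D') + G₀ * D' = 0 := by
    rw [← map_eval_add_eq_map_slope, ← map_slope_mul, mul_adjugate, hG]
    ext i j
    rcases eq_or_ne i j with rfl | hij <;> simp [slope_C, *]
  have hinv : (1 + y • (D * H₀)) * (1 + y • (G₀ * D')) = 1 := by
    have hmid : D * H₀ * (G₀ * D') = c • (D * D') := by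
      rw [Matrix.mul_assoc, ← Matrix.mul_assoc H₀, hH₀, smul_mul, Matrix.one_mul, Matrix.mul_smul]
    calc _ = 1 + y • (D * (H₀ + (c * y) • D') + G₀ * D') := by
          simp only [mul_add, add_mul, smul_add, smul_mul, Matrix.mul_smul, one_mul, mul_one, hmid,
            smul_smul, mul_comm c y]
          abel
      _ = 1 := by rw [hleibniz, smul_zero, add_zero]
  refine ⟨D * H₀, ⟨⟨_, _, hinv, mul_eq_one_comm.1 hinv⟩, rfl⟩, ?_⟩
  rw [add_mul, one_mul, smul_mul, Matrix.mul_assoc, hH₀, map_eval_add_eq_map_slope,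
    Matrix.mul_smul, Matrix.mul_one, smul_smul, mul_comm y]

end Slope

section Suslin

variable {S A ι : Type*} [CommRing S] [CommRing A] [Algebra S A] [Fintype ι] [DecidableEq ι]

theorem det_updateCol_updateCol_one (f : ι → S) {i j : ι} (hij : i ≠ j) (a b : S) :
    (((1 : Matrix ι ι S).updateCol i f).updateCol j
      (a • Pi.single j 1 - b • Pi.single i 1)).det = f i * a + f j * b := by
  have hdet (k : ι) : ((1 : Matrix ι ι S).updateCol k f).det = f k := by
    rw [← cramer_apply, cramer_one, Module.End.one_apply]
  have hone : ((1 : Matrix ι ι S).updateCol i f).updateCol j (Pi.single j 1) =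
      (1 : Matrix ι ι S).updateCol i f := by
    ext k l
    rcases eq_or_ne l j with rfl | hl
    · simp [hij.symm, one_apply, Pi.single_apply]
    · simp [updateCol_apply, hl]
  have hswap : ((1 : Matrix ι ι S).updateCol i f).updateCol j (Pi.single i 1) =
      ((1 : Matrix ι ι S).updateCol j f).submatrix id (Equiv.swap i j) := by
    ext k l
    rcases eq_or_ne l j with rfl | hl
    · simp [hij, one_apply, Pi.single_apply]
    · rcases eq_or_ne l i with rfl | hl'
      · simp [hij]
      · simp [hl, hl', Equiv.swap_apply_of_ne_of_ne]
  rw [sub_eq_add_neg, ← neg_smul, det_updateCol_add, det_updateCol_smul, det_updateCol_smul, hone,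
    hswap, det_permute', hdet, hdet, Equiv.Perm.sign_swap hij]
  push_cast
  ring

theorem isIsotopic_aeval_add (f : ι → S[X]) {i j : ι} (hij : i ≠ j) {g₁ g₂ : S[X]} {c : S}
    (h : f i * g₁ + f j * g₂ = Polynomial.C c) (x y : A) :
    IsIsotopic (fun l => Polynomial.aeval (x + algebraMap S A c * y) (f l))
      (fun l => Polynomial.aeval x (f l)) := by
  set G : Matrix ι ι S[X] := ((1 : Matrix ι ι S[X]).updateCol i f).updateCol j
      (g₁ • Pi.single j 1 - g₂ • Pi.single i 1)
  have hGi (l : ι) : G l i = f l := by simp [G, hij]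
  obtain ⟨K, hK, hKG⟩ := exists_isUnit_one_add_smul_mul_map_eval
    ((Polynomial.mapRingHom (algebraMap S A[X])).mapMatrix G) (c := algebraMap S A[X] c)
    (by rw [← RingHom.map_det, det_updateCol_updateCol_one f hij, h, Polynomial.coe_mapRingHom,
      Polynomial.map_C]) (Polynomial.C x) (Polynomial.C y * Polynomial.X)
  refine ⟨hK.unit, ?_, ?_⟩
  · ext k l
    rcases eq_or_ne k l with rfl | hkl <;> simp [*]
  · ext l
    have hcol := congrArg (fun M : Matrix ι ι A[X] => (M l i).eval 1) hKG
    simp only [Matrix.mul_apply, RingHom.mapMatrix_apply, Matrix.map_apply, hGi,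
      Polynomial.coe_mapRingHom, Polynomial.eval_map_algebraMap, Polynomial.eval_finsetSum,
      Polynomial.eval_mul] at hcol
    have heval (z : A[X]) (p : S[X]) :
        (Polynomial.aeval z p).eval 1 = Polynomial.aeval (z.eval 1) p :=
      (Polynomial.aeval_algHom_apply ((Polynomial.aeval (1 : A)).restrictScalars S) z p).symm
    simp only [heval] at hcol
    simpa [mulVec, dotProduct] using hcol.symm

end Suslin

section Horrocks

theorem exists_isCoprime_add_mul {k : Type*} [CommRing k] [IsDomain k] [IsPrincipalIdealRing k]
    {a b h : k} (hh : h ≠ 0) (hab : ∃ x y z, x * a + y * b + z * h = 1) :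
    ∃ c, IsCoprime (a + c * b) h := by
  classical
  obtain ⟨x, y, z, e⟩ := hab
  let s := (UniqueFactorizationMonoid.factors h).filter (fun p => ¬ p ∣ a)
  refine ⟨s.prod, (isCoprime_of_prime_dvd (by simp [hh]) fun p hp hph hpa => ?_).symm⟩
  obtain ⟨q, hq, hpq⟩ := UniqueFactorizationMonoid.exists_mem_factors_of_dvd hh hp.irreducible hph
  by_cases hpa' : p ∣ a
  · rcases hp.dvd_or_dvd ((dvd_add_right hpa').1 hpa) with hs | hb
    · obtain ⟨q', hq', hpq'⟩ := hp.exists_mem_multiset_dvd hs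
      rw [Multiset.mem_filter] at hq'
      have hirr := UniqueFactorizationMonoid.irreducible_of_factor _ hq'.1
      exact hq'.2 ((hp.irreducible.associated_of_dvd hirr hpq').symm.dvd.trans hpa')
    · refine hp.not_isUnit (isUnit_of_dvd_one ?_)
      rw [← e]
      exact dvd_add (dvd_add (hpa'.mul_left _) (hb.mul_left _)) (hph.mul_left _)
  · have hps : p ∣ s.prod := hpq.dvd.trans <| Multiset.dvd_prod <|
      Multiset.mem_filter.2 ⟨hq, fun h => hpa' (hpq.dvd.trans h)⟩
    exact hpa' ((dvd_add_left (hps.mul_right b)).1 hpa)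

variable {S : Type*} [CommRing S]

theorem exists_notMem_mul_add_mul_eq_C (m : Ideal S) [m.IsMaximal] {f g : S[X]} {D : ℕ}
    (hD : f.natDegree ≤ D) (hc : f.coeff D ∉ m)
    (hfg : IsCoprime (f.map (Ideal.Quotient.mk m)) (g.map (Ideal.Quotient.mk m))) :
    ∃ c ∉ m, ∃ p q, f * p + g * q = Polynomial.C c := by
  let _ := Ideal.Quotient.field m
  set φ := Ideal.Quotient.mk m
  rcases Nat.eq_zero_or_pos D with rfl | hD0
  · exact ⟨f.coeff 0, hc, 1, 0, by
      rw [mul_one, mul_zero, add_zero, ← Polynomial.eq_C_of_natDegree_le_zero hD]⟩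
  obtain ⟨p, q, -, -, h⟩ :=
    Polynomial.exists_mul_add_mul_eq_C_resultant f g hD le_rfl (Or.inl hD0.ne')
  refine ⟨_, fun hmem => ?_, p, q, h⟩
  have hfc : (f.map φ).coeff D ≠ 0 := by
    rwa [Polynomial.coeff_map, Ne, Ideal.Quotient.eq_zero_iff_mem]
  have hfD : (f.map φ).natDegree = D :=
    le_antisymm (Polynomial.natDegree_map_le.trans hD) (Polynomial.le_natDegree_of_ne_zero hfc)
  rw [← Ideal.Quotient.eq_zero_iff_mem, ← Polynomial.resultant_map_map] at hmem
  obtain ⟨k, hk⟩ := Nat.exists_eq_add_of_le (Polynomial.natDegree_map_le (p := g) (f := φ))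
  rw [hk, Polynomial.resultant_add_right_deg _ _ _ _ k le_rfl] at hmem
  rcases mul_eq_zero.1 hmem with h | h
  · exact pow_ne_zero _ hfc h
  · rw [← hfD, Polynomial.resultant_eq_zero_iff] at h
    exact h.2 hfg

variable {A ι : Type*} [CommRing A] [Algebra S A] [Fintype ι] [DecidableEq ι] [Nontrivial ι]

theorem exists_notMem_isIsotopic_aeval {f : ι → S[X]} (hf : Ideal.span (Set.range f) = ⊤)
    (m : Ideal S) [m.IsMaximal] {j : ι} {D : ℕ} (hD : (f j).natDegree ≤ D)
    (hj : (f j).coeff D ∉ m) :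
    ∃ c ∉ m, ∀ x y : A, IsIsotopic (fun l => Polynomial.aeval (x + algebraMap S A c * y) (f l))
      (fun l => Polynomial.aeval x (f l)) := by
  let _ := Ideal.Quotient.field m
  set φ := Ideal.Quotient.mk m
  obtain ⟨i, hij⟩ := exists_ne j
  obtain ⟨g, hg⟩ := Ideal.mem_span_range_iff_exists_fun.1 ((Ideal.eq_top_iff_one _).1 hf)
  set w : ι → S[X] := g - Pi.single i (g i) - Pi.single j (g j)
  have hwi : w i = 0 := by simp [w, hij.symm]
  have hw : g i * f i + w ⬝ᵥ f + g j * f j = 1 := by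
    rw [← hg, sub_dotProduct, sub_dotProduct, single_dotProduct, single_dotProduct, dotProduct]
    ring
  obtain ⟨c', hc'⟩ : ∃ c', IsCoprime ((f i).map φ + c' * (w ⬝ᵥ f).map φ) ((f j).map φ) := by
    refine exists_isCoprime_add_mul (fun h => hj ?_)
      ⟨(g i).map φ, 1, (g j).map φ, by simpa using congrArg (Polynomial.map φ) hw⟩
    rw [← Ideal.Quotient.eq_zero_iff_mem, ← Polynomial.coeff_map, h, Polynomial.coeff_zero]
  obtain ⟨c, rfl⟩ := Polynomial.map_surjective φ Ideal.Quotient.mk_surjective c'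
  rw [← Polynomial.map_mul, ← Polynomial.map_add] at hc'
  obtain ⟨r, hr, p, q, hpq⟩ := exists_notMem_mul_add_mul_eq_C m hD hj hc'.symm
  let f' : ι → S[X] := f + (c * (w ⬝ᵥ f)) • Pi.single i 1
  have hf' (x : A) : IsIsotopic (fun l => Polynomial.aeval x (f' l))
      (fun l => Polynomial.aeval x (f l)) := by
    convert IsIsotopic.add_dotProduct_smul (fun l => Polynomial.aeval x (f l))
      (a := Pi.single i 1) (b := fun l => Polynomial.aeval x (c * w l)) (by simp [hwi])
      using 2 with l
    rcases eq_or_ne l i with rfl | hl <;> simp [f', dotProduct, Finset.mul_sum, mul_assoc, *]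
  refine ⟨r, hr, fun x y => ((hf' _).symm.trans ?_).trans (hf' x)⟩
  exact isIsotopic_aeval_add f' hij.symm (by simpa [f', hij.symm] using hpq) x y

/-- Horrocks' theorem for unimodular rows: the `c ∈ S` such that displacements by multiples of `c`
do not change the isotopy class form an ideal. -/
theorem isIsotopic_aeval_aeval {f : ι → S[X]} (hf : Ideal.span (Set.range f) = ⊤)
    (hm : ∀ m : Ideal S, m.IsMaximal → ∃ j D, (f j).natDegree ≤ D ∧ (f j).coeff D ∉ m) (x y : A) :
    IsIsotopic (fun l => Polynomial.aeval x (f l)) (fun l => Polynomial.aeval y (f l)) := by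
  let I : Ideal S :=
    { carrier := {c | ∀ x y : A, IsIsotopic
        (fun l => Polynomial.aeval (x + algebraMap S A c * y) (f l))
        (fun l => Polynomial.aeval x (f l))}
      zero_mem' := fun x y => by simpa using IsIsotopic.refl _
      add_mem' := fun {a b} ha hb x y => by
        rw [map_add, add_mul, ← add_assoc]
        exact (hb _ y).trans (ha x y)
      smul_mem' := fun c a ha x y => by
        rw [smul_eq_mul, map_mul, mul_comm (algebraMap S A c), mul_assoc]
        exact ha x _ }
  have hI : I = ⊤ := by
    by_contra hne
    obtain ⟨m, hmm, hle⟩ := Ideal.exists_le_maximal I hne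
    obtain ⟨j, D, hD, hj⟩ := hm m hmm
    obtain ⟨c, hc, h⟩ := exists_notMem_isIsotopic_aeval (A := A) hf m hD hj
    exact hc (hle h)
  simpa using (Ideal.eq_top_iff_one I).1 hI y (x - y)

end Horrocks

section Row

variable {S ι : Type*} [CommRing S]

theorem span_range_reflect_eq_top [Finite ι] {w : ι → S[X]} (hw : Ideal.span (Set.range w) = ⊤)
    {D : ℕ} (hD : ∀ i, (w i).natDegree ≤ D) {i₀ : ι} (h₀ : (w i₀).coeff D = 1) :
    Ideal.span (Set.range fun i => (w i).reflect D) = ⊤ := by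
  have := Fintype.ofFinite ι
  obtain ⟨g, hg⟩ := Ideal.mem_span_range_iff_exists_fun.1 ((Ideal.eq_top_iff_one _).1 hw)
  let N := Finset.univ.sup fun i => (g i).natDegree
  have hX : Polynomial.X ^ (N + D) ∈ Ideal.span (Set.range fun i => (w i).reflect D) := by
    have hsum (s : Finset ι) : (∑ i ∈ s, g i * w i).reflect (N + D) =
        ∑ i ∈ s, (g i).reflect N * (w i).reflect D := by
      classical
      induction s using Finset.induction_on with
      | empty => simp
      | insert a s ha ih =>
        rw [Finset.sum_insert ha, Finset.sum_insert ha, Polynomial.reflect_add, ih,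
          Polynomial.reflect_mul _ _
            (Finset.le_sup (f := fun i => (g i).natDegree) (Finset.mem_univ a)) (hD a)]
    rw [← Polynomial.reflect_one, ← hg, hsum]
    exact Ideal.sum_mem _ fun i _ => Ideal.mul_mem_left _ _ (Ideal.subset_span ⟨i, rfl⟩)
  have hcoprime : IsCoprime (Polynomial.X : S[X]) ((w i₀).reflect D) := by
    refine ⟨-((w i₀).reflect D).divX, 1, ?_⟩
    have hdiv := Polynomial.divX_mul_X_add ((w i₀).reflect D)
    rw [Polynomial.coeff_reflect, Polynomial.revAt_zero, h₀, Polynomial.C_1] at hdiv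
    linear_combination -hdiv
  obtain ⟨a, b, hab⟩ := hcoprime.pow_left (m := N + D)
  rw [Ideal.eq_top_iff_one, ← hab]
  exact Ideal.add_mem _ (Ideal.mul_mem_left _ _ hX)
    (Ideal.mul_mem_left _ _ (Ideal.subset_span ⟨i₀, rfl⟩))

variable {A : Type*} [CommRing A]

theorem exists_eq_algebraMap_add_mul_of_monic [Algebra S[X] A] (f : S[X])
    [IsLocalization.Away f A] {g₀ : S[X]} (hg₀ : g₀.Monic) (hco : IsCoprime g₀ f) (a : A) :
    ∃ (h : S[X]) (e : A), (∀ n, g₀.natDegree ≤ n → h.coeff n = 0) ∧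
      a = algebraMap S[X] A h + e * algebraMap S[X] A g₀ := by
  rcases subsingleton_or_nontrivial S with _ | _
  · have : Subsingleton A := (algebraMap S[X] A).codomain_trivial
    exact ⟨0, 0, by simp, Subsingleton.elim _ _⟩
  obtain ⟨⟨p, ⟨_, k, rfl⟩⟩, hp⟩ := IsLocalization.surj (Submonoid.powers f) a
  obtain ⟨u, v, huv⟩ := hco.pow_right (n := k)
  have hdiv := congrArg (algebraMap S[X] A) (Polynomial.modByMonic_add_div (v * p) g₀)
  replace huv := congrArg (algebraMap S[X] A) huv
  refine ⟨v * p %ₘ g₀, a * algebraMap S[X] A u + algebraMap S[X] A (v * p /ₘ g₀), fun n hn =>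
    Polynomial.coeff_eq_zero_of_degree_lt
      ((Polynomial.degree_modByMonic_lt _ hg₀).trans_le ?_), ?_⟩
  · rw [Polynomial.degree_eq_natDegree hg₀.ne_zero]
    exact_mod_cast hn
  · simp only [map_add, map_mul, map_one] at hp huv hdiv
    linear_combination (-a) * huv - hdiv + algebraMap S[X] A v * hp

theorem exists_polynomial_representatives [Algebra S[X] A] (f : S[X])
    [IsLocalization.Away f A] {g₀ : S[X]} (hg₀ : g₀.Monic) (hco : IsCoprime g₀ f) {v : ι → A}
    {i₀ : ι} (hi₀ : v i₀ = algebraMap S[X] A g₀) : ∃ (w : ι → S[X]) (e : ι → A),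
      w i₀ = g₀ ∧ e i₀ = 0 ∧ (∀ i ≠ i₀, ∀ n, g₀.natDegree ≤ n → (w i).coeff n = 0) ∧
      ∀ i, v i = algebraMap S[X] A (w i) + e i * algebraMap S[X] A g₀ := by
  classical
  choose h e hdeg hhe using fun i => exists_eq_algebraMap_add_mul_of_monic f hg₀ hco (v i)
  refine ⟨Function.update h i₀ g₀, Function.update e i₀ 0, by simp, by simp,
    fun i hi => by simpa [hi] using hdeg i, fun i => ?_⟩
  rcases eq_or_ne i i₀ with rfl | hi
  · simp [hi₀]
  · simpa [hi] using hhe i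

theorem span_range_eq_top_of_isLocalization_away [Algebra S[X] A] {f : S[X]}
    [IsLocalization.Away f A] {w : ι → S[X]}
    (hw : Ideal.span (Set.range fun i => algebraMap S[X] A (w i)) = ⊤) {i₀ : ι}
    (hco : IsCoprime (w i₀) f) : Ideal.span (Set.range w) = ⊤ := by
  have hone : algebraMap S[X] A 1 ∈ (Ideal.span (Set.range w)).map (algebraMap S[X] A) := by
    rw [Ideal.map_span, ← Set.range_comp]
    exact hw ▸ Submodule.mem_top
  rw [IsLocalization.algebraMap_mem_map_algebraMap_iff (Submonoid.powers f)] at hone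
  obtain ⟨_, ⟨k, rfl⟩, hk⟩ := hone
  obtain ⟨a, b, hab⟩ := hco.pow_right (n := k)
  rw [Ideal.eq_top_iff_one, ← hab]
  refine Ideal.add_mem _ (Ideal.mul_mem_left _ _ (Ideal.subset_span ⟨i₀, rfl⟩))
    (Ideal.mul_mem_left _ _ ?_)
  rwa [mul_one] at hk

variable [Fintype ι] [DecidableEq ι] [Nontrivial ι]

/-- Move the point `a` to `1`, replace `w` by its reciprocal, and move `1` to `0`. -/
theorem isIsotopic_aeval_single [Algebra S A] {w : ι → S[X]}
    (hw : Ideal.span (Set.range w) = ⊤) {D : ℕ} (hD : ∀ i, (w i).natDegree ≤ D) {i₀ : ι}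
    (h₀ : (w i₀).coeff D = 1) (hi : ∀ i ≠ i₀, (w i).coeff D = 0) (a : A) :
    IsIsotopic (fun i => Polynomial.aeval a (w i)) (Pi.single i₀ 1) := by
  have hrefl : ∀ m : Ideal S, m.IsMaximal →
      ∃ j E, ((w j).reflect D).natDegree ≤ E ∧ ((w j).reflect D).coeff E ∉ m := by
    intro m hm
    by_contra! hmem
    obtain ⟨g, hg⟩ := Ideal.mem_span_range_iff_exists_fun.1 ((Ideal.eq_top_iff_one _).1 hw)
    refine hm.ne_top ((Ideal.eq_top_iff_one _).2 ?_)
    rw [← Polynomial.eval_one (x := 0), ← hg, Polynomial.eval_finsetSum]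
    refine Ideal.sum_mem _ fun i _ => ?_
    have hi := hmem i D (Polynomial.natDegree_reflect_le.trans (by simp [hD i]))
    rw [Polynomial.coeff_reflect, Polynomial.revAt_le le_rfl, Nat.sub_self,
      Polynomial.coeff_zero_eq_eval_zero] at hi
    rw [Polynomial.eval_mul]
    exact Ideal.mul_mem_left _ _ hi
  have hone : (fun i => Polynomial.aeval (1 : A) (w i)) =
      fun i => Polynomial.aeval (1 : A) ((w i).reflect D) := by
    ext i
    let _ : Invertible (1 : A) := invertibleOne
    have := Polynomial.eval₂_reflect_mul_pow (algebraMap S A) 1 D (w i) (hD i)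
    rw [invOf_one, one_pow, mul_one] at this
    exact this.symm
  have hzero : (fun i => Polynomial.aeval (0 : A) ((w i).reflect D)) = Pi.single i₀ 1 := by
    ext i
    rw [Polynomial.aeval_def, Polynomial.eval₂_at_zero, Polynomial.coeff_reflect,
      Polynomial.revAt_zero]
    rcases eq_or_ne i i₀ with rfl | h
    · simp [h₀]
    · simp [hi i h, h]
  have hpoint := isIsotopic_aeval_aeval hw (fun m hm => ⟨i₀, D, hD i₀, by
    rw [h₀]; exact (Ideal.ne_top_iff_one m).1 hm.ne_top⟩) a 1
  have hreflpoint :=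
    isIsotopic_aeval_aeval (A := A) (span_range_reflect_eq_top hw hD h₀) hrefl 1 0
  rw [hone] at hpoint
  rw [hzero] at hreflpoint
  exact hpoint.trans hreflpoint

theorem isIsotopic_single_one_of_monic [Algebra S[X] A] (f : S[X]) [IsLocalization.Away f A]
    {v : ι → A} (hv : Ideal.span (Set.range v) = ⊤) {i₀ : ι} {g₀ : S[X]} (hg₀ : g₀.Monic)
    (hco : IsCoprime g₀ f) (hi₀ : v i₀ = algebraMap S[X] A g₀) :
    IsIsotopic v (Pi.single i₀ 1) := by
  let _ : Algebra S A := ((algebraMap S[X] A).comp Polynomial.C).toAlgebra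
  have haeval (p : S[X]) : Polynomial.aeval (algebraMap S[X] A Polynomial.X) p =
      algebraMap S[X] A p := by
    rw [Polynomial.aeval_def, RingHom.algebraMap_toAlgebra, ← Polynomial.hom_eval₂,
      Polynomial.eval₂_C_X]
  obtain ⟨w, e, rfl, he₀, hdeg, hv_eq⟩ := exists_polynomial_representatives f hg₀ hco hi₀
  have hmem (i : ι) : algebraMap S[X] A (w i) ∈
      Ideal.span (Set.range fun i => algebraMap S[X] A (w i)) := Ideal.subset_span ⟨i, rfl⟩
  have hw : Ideal.span (Set.range w) = ⊤ := by
    refine span_range_eq_top_of_isLocalization_away (A := A) (f := f) (i₀ := i₀) ?_ hco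
    refine top_le_iff.1 (hv ▸ Ideal.span_le.2 ?_)
    rintro _ ⟨i, rfl⟩
    rw [hv_eq]
    exact Ideal.add_mem _ (hmem i) (Ideal.mul_mem_left _ _ (hmem i₀))
  have hnatDegree (i : ι) : (w i).natDegree ≤ (w i₀).natDegree := by
    rcases eq_or_ne i i₀ with rfl | hi
    · rfl
    · exact Polynomial.natDegree_le_iff_coeff_eq_zero.2 fun n hn => hdeg i hi n hn.le
  have hpoly := isIsotopic_aeval_single (A := A) hw hnatDegree hg₀
    (fun i hi => hdeg i hi _ le_rfl) (algebraMap S[X] A Polynomial.X)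
  simp only [haeval] at hpoly
  have helem := IsIsotopic.add_dotProduct_smul (fun i => algebraMap S[X] A (w i)) (a := e)
    (b := Pi.single i₀ 1) (by simp [he₀])
  convert helem.trans hpoly using 1
  ext i
  simp [hv_eq i, Algebra.smul_def, mul_comm]

theorem isIsotopic_single_of_monic [Algebra S[X] A] (f : S[X]) [IsLocalization.Away f A] {v : ι → A}
    (hv : Ideal.span (Set.range v) = ⊤) {i₀ : ι} {c : A} (hc : IsUnit c) {g₀ : S[X]}
    (hg₀ : g₀.Monic) (hco : IsCoprime g₀ f) (hi₀ : v i₀ = c * algebraMap S[X] A g₀) :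
    IsIsotopic v (Pi.single i₀ c) := by
  obtain ⟨c', hc'⟩ := hc.exists_left_inv
  have hcv : c • c' • v = v := by rw [smul_smul, mul_comm, hc', one_smul]
  have hspan : Ideal.span (Set.range (c' • v)) = ⊤ := by
    refine top_le_iff.1 (hv ▸ Ideal.span_le.2 ?_)
    rintro _ ⟨i, rfl⟩
    rw [← congrFun hcv i]
    exact Ideal.mul_mem_left _ c (Ideal.subset_span ⟨i, rfl⟩)
  have hi₀' : (c' • v) i₀ = algebraMap S[X] A g₀ := by
    rw [Pi.smul_apply, hi₀, smul_eq_mul, ← mul_assoc, hc', one_mul]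
  have h := (isIsotopic_single_one_of_monic f hspan hg₀ hco hi₀').smul c
  rwa [hcv, ← Pi.single_smul, smul_eq_mul, mul_one] at h

end Row

/-! ### Patching unimodular elements -/

section OrderIdeal

variable {A P : Type*} [CommRing A] [AddCommGroup P] [Module A P]

/-- The order ideal of `x`: the values at `x` of the linear forms on `P`. The element `x` is
unimodular if and only if its order ideal is the unit ideal. -/
def orderIdeal (x : P) : Ideal A := LinearMap.range (Module.Dual.eval A P x)

theorem mem_orderIdeal {x : P} {a : A} : a ∈ orderIdeal x ↔ ∃ φ : P →ₗ[A] A, φ x = a := Iff.rfl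

theorem apply_mem_orderIdeal (φ : P →ₗ[A] A) (x : P) : φ x ∈ orderIdeal (A := A) x := ⟨φ, rfl⟩

theorem smul_apply_mem_orderIdeal_of_smul_eq {a b : A} {x y : P} (h : a • x = b • y)
    (φ : P →ₗ[A] A) : b * φ y ∈ orderIdeal x :=
  ⟨a • φ, by
    rw [Module.Dual.eval_apply, LinearMap.smul_apply, ← map_smul, h, map_smul, smul_eq_mul]⟩

theorem exists_smul_eq_and_smul_eq_of_isCoprime {a b : A} (hab : IsCoprime a b) {n m : P}
    (h : a • n = b • m) : ∃ x : P, b • x = n ∧ a • x = m := by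
  obtain ⟨α, β, hαβ⟩ := hab
  refine ⟨α • m + β • n, ?_, ?_⟩
  · rw [smul_add, smul_comm b α, ← h, smul_comm b β, smul_smul, smul_smul, ← add_smul, hαβ,
      one_smul]
  · rw [smul_add, smul_comm a β, h, smul_comm a α, smul_smul, smul_smul, ← add_smul, hαβ,
      one_smul]

end OrderIdeal

section ScaledBasis

/-- A basis of `P` after inverting `s`, with cleared denominators: mutually inverse isomorphisms
between `P` and `ι → A` up to the factor `s`. -/
structure ScaledBasis {A : Type*} [CommRing A] (s : A) (ι P : Type*) [AddCommGroup P]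
    [Module A P] where
  coords : P →ₗ[A] (ι → A)
  lift : (ι → A) →ₗ[A] P
  coords_lift (v : ι → A) : coords (lift v) = s • v
  lift_coords (x : P) : lift (coords x) = s • x

variable {A P ι : Type*} [CommRing A] [AddCommGroup P] [Module A P] [Fintype ι]

theorem ScaledBasis.not_orderIdeal_le {s : A} (b : ScaledBasis s ι P) (K : Matrix ι ι A) (r : A)
    (p : P) (ψ : P →ₗ[A] A) {Q : Ideal A} [Q.IsPrime] (hs : s ∈ Q) (hr : r ∉ Q) (hψ : ψ p ∉ Q) :
    ¬ orderIdeal (r • p + b.lift (K *ᵥ b.coords p)) ≤ Q := by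
  intro hle
  let φ : P →ₗ[A] A := ψ ∘ₗ (r • LinearMap.id - b.lift ∘ₗ K.mulVecLin ∘ₗ b.coords)
  have hφ : φ (r • p + b.lift (K *ᵥ b.coords p)) =
      r * (r * ψ p) - s * ψ (b.lift (K *ᵥ K *ᵥ b.coords p)) := by
    simp [φ, b.coords_lift, mulVec_add, mulVec_smul]
    ring
  have hmem := hle (apply_mem_orderIdeal φ _)
  rw [hφ, Submodule.sub_mem_iff_left _ (Q.mul_mem_right _ hs)] at hmem
  exact (Ideal.IsPrime.mul_notMem ‹_› hr (Ideal.IsPrime.mul_notMem ‹_› hr hψ)) hmem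

end ScaledBasis

section ClearDenominators

variable {R R' : Type*} [CommRing R] [CommRing R'] [Algebra R R'] (x : R) [IsLocalization.Away x R']
  {ι κ : Type*} [Finite ι]

theorem exists_algebraMap_eq_pow_mul (v : ι → R') :
    ∃ (n : ℕ) (w : ι → R), ∀ i, algebraMap R R' (w i) = algebraMap R R' x ^ n * v i := by
  obtain ⟨⟨_, n, rfl⟩, h⟩ := IsLocalization.exist_integer_multiples_of_finite (.powers x) v
  choose w hw using h
  exact ⟨n, w, fun i => by rw [hw, Algebra.smul_def, map_pow]⟩

variable (R') in
theorem exists_pow_mul_eq_of_algebraMap_eq {v w : ι → R}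
    (h : ∀ i, algebraMap R R' (v i) = algebraMap R R' (w i)) :
    ∃ n, ∀ i, x ^ n * v i = x ^ n * w i := by
  have := Fintype.ofFinite ι
  choose n hn using fun i => IsLocalization.Away.exists_of_eq x (h i)
  refine ⟨Finset.univ.sup n, fun i => ?_⟩
  obtain ⟨k, hk⟩ := Nat.exists_eq_add_of_le (Finset.le_sup (f := n) (Finset.mem_univ i))
  rw [hk, pow_add, mul_comm (x ^ n i), mul_assoc, hn, mul_assoc]

variable (R') in
theorem exists_pow_smul_eq_of_map_eq {M N : Matrix ι ι R}
    (h : M.map (algebraMap R R') = N.map (algebraMap R R')) :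
    ∃ n, ∀ k, n ≤ k → x ^ k • M = x ^ k • N := by
  obtain ⟨n, hn⟩ := exists_pow_mul_eq_of_algebraMap_eq R' x (v := fun k : ι × ι => M k.1 k.2)
    (w := fun k => N k.1 k.2) fun k => congrFun (congrFun h k.1) k.2
  refine ⟨n, fun k hk => Matrix.ext fun i j => ?_⟩
  obtain ⟨l, rfl⟩ := Nat.exists_eq_add_of_le' hk
  simp only [Matrix.smul_apply, smul_eq_mul, pow_add, mul_assoc, hn (i, j)]

theorem exists_mul_eq_pow_smul_one [Fintype κ] [DecidableEq κ] (γ : GL κ R') :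
    ∃ (n : ℕ) (G H : Matrix κ κ R), G * H = x ^ (2 * n) • 1 ∧ H * G = x ^ (2 * n) • 1 ∧
      G.map (algebraMap R R') = algebraMap R R' x ^ n • γ.1 ∧
      H.map (algebraMap R R') = algebraMap R R' x ^ n • (γ⁻¹).1 := by
  let ρ : Matrix κ κ R →+* Matrix κ κ R' := (algebraMap R R').mapMatrix
  have hρ (n : ℕ) (N : Matrix κ κ R) : ρ (x ^ n • N) = algebraMap R R' x ^ n • ρ N := by
    ext1 i j
    simp [ρ]
  obtain ⟨n, w, hw⟩ := exists_algebraMap_eq_pow_mul x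
    fun k : (κ × κ) ⊕ (κ × κ) => k.elim (fun k => γ.1 k.1 k.2) fun k => (γ⁻¹).1 k.1 k.2
  let G : Matrix κ κ R := .of fun i j => w (.inl (i, j))
  let H : Matrix κ κ R := .of fun i j => w (.inr (i, j))
  have hG : ρ G = algebraMap R R' x ^ n • γ.1 := Matrix.ext fun i j => hw (.inl (i, j))
  have hH : ρ H = algebraMap R R' x ^ n • (γ⁻¹).1 := Matrix.ext fun i j => hw (.inr (i, j))
  obtain ⟨k₁, hGH⟩ := exists_pow_smul_eq_of_map_eq R' x (M := G * H) (N := x ^ (2 * n) • 1) <| by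
    change ρ (G * H) = ρ _
    rw [map_mul, hρ, hG, hH, map_one, smul_mul_smul_comm, Units.mul_inv, ← pow_add, two_mul]
  obtain ⟨k₂, hHG⟩ := exists_pow_smul_eq_of_map_eq R' x (M := H * G) (N := x ^ (2 * n) • 1) <| by
    change ρ (H * G) = ρ _
    rw [map_mul, hρ, hG, hH, map_one, smul_mul_smul_comm, Units.inv_mul, ← pow_add, two_mul]
  let k := k₁ + k₂
  have hpow : k + k + 2 * n = 2 * (n + k) := by ring
  refine ⟨n + k, x ^ k • G, x ^ k • H, ?_, ?_, ?_, ?_⟩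
  · rw [smul_mul_smul_comm, ← pow_add, hGH _ (by lia), smul_smul, ← pow_add, hpow]
  · rw [smul_mul_smul_comm, ← pow_add, hHG _ (by lia), smul_smul, ← pow_add, hpow]
  · exact (hρ k G).trans (by rw [hG, smul_smul, ← pow_add, add_comm])
  · exact (hρ k H).trans (by rw [hH, smul_smul, ← pow_add, add_comm])

end ClearDenominators

section Patch

variable {A B ι : Type*} [CommRing A] [CommRing B] [Algebra A B] [Fintype ι] [DecidableEq ι]

theorem exists_clear_denominators (q : A) [IsLocalization.Away q B] (γ : GL ι B[X])
    (hγ : GeneralLinearGroup.map (Polynomial.evalRingHom 0) γ = 1) :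
    ∃ (M : ℕ) (G H : Matrix ι ι A[X]), G * H = Polynomial.C (q ^ (2 * M)) • 1 ∧
      H * G = Polynomial.C (q ^ (2 * M)) • 1 ∧ G.map (Polynomial.eval 0) = q ^ M • 1 ∧
      H.map (Polynomial.map (algebraMap A B)) =
        Polynomial.C (algebraMap A B q ^ M) • (γ⁻¹ : GL ι B[X]).1 := by
  let _ := Polynomial.algebra A B
  have : IsLocalization.Away (Polynomial.C q) B[X] := by
    have := Polynomial.isLocalization (.powers q) B
    rwa [Submonoid.map_powers] at this
  obtain ⟨n, G, H, hGH, hHG, hG, hH⟩ := exists_mul_eq_pow_smul_one (Polynomial.C q) γ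
  obtain ⟨k, hG₀⟩ := exists_pow_smul_eq_of_map_eq B q (M := G.map (Polynomial.eval 0))
    (N := q ^ n • 1) <| by
    ext i j
    have hGij : Polynomial.map (algebraMap A B) (G i j) =
        Polynomial.C (algebraMap A B q) ^ n * γ.1 i j := by
      simpa [Polynomial.algebraMap_def] using congrFun (congrFun hG i) j
    have hγij : (γ.1 i j).eval 0 = (1 : Matrix ι ι B) i j :=
      congrArg (fun g : GL ι B => g.1 i j) hγ
    have heval := congrArg (Polynomial.eval 0) hGij
    rw [Polynomial.eval_mul, hγij, Polynomial.eval_zero_map] at heval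
    rcases eq_or_ne i j with rfl | hij <;> simp [*]
  have hpow : 2 * k + 2 * n = 2 * (n + k) := by ring
  refine ⟨n + k, Polynomial.C q ^ k • G, Polynomial.C q ^ k • H, ?_, ?_, ?_, ?_⟩
  · rw [smul_mul_smul_comm, ← pow_add, hGH, smul_smul, ← pow_add, ← two_mul, hpow, map_pow]
  · rw [smul_mul_smul_comm, ← pow_add, hHG, smul_smul, ← pow_add, ← two_mul, hpow, map_pow]
  · have heval : (Polynomial.C q ^ k • G).map (Polynomial.eval 0) =
        q ^ k • G.map (Polynomial.eval 0) := by
      ext i j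
      simp
    rw [heval, hG₀ _ le_rfl, smul_smul, ← pow_add, add_comm]
  · ext1 i j
    have hHij := congrFun (congrFun hH i) j
    simp only [Matrix.map_apply, Matrix.smul_apply, Polynomial.algebraMap_def,
      Polynomial.coe_mapRingHom, smul_eq_mul, Polynomial.map_C] at hHij ⊢
    rw [Polynomial.map_mul, hHij]
    simp [pow_add]
    ring

/-- Quillen's splitting: up to denominators, `γ(1) = γ(x) (γ(x)⁻¹ γ(1))`, where `x` is close to `0`
at `t` and close to `1` at `s`, so that the two factors are defined over `A[1/s]` and `A[1/t]`. -/
theorem exists_quillen_splitting {s t : A} (hst : IsCoprime s t) [IsLocalization.Away (s * t) B]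
    (γ : GL ι B[X]) (hγ : GeneralLinearGroup.map (Polynomial.evalRingHom 0) γ = 1) :
    ∃ (M : ℕ) (a : A) (U' V V' : Matrix ι ι A),
      t ^ M • ((s ^ M • 1 + t • U') * V) = (s * t) ^ (2 * M) • 1 ∧
      t ^ M • (V * (s ^ M • 1 + t • U')) = (s * t) ^ (2 * M) • 1 ∧
      (V + (a * s ^ (2 * M + 1)) • V').map (algebraMap A B) = algebraMap A B (s * t) ^ M •
        (GeneralLinearGroup.map (Polynomial.evalRingHom 1) γ)⁻¹.1 := by
  obtain ⟨M, G, H, hGH, hHG, hG₀, hH⟩ := exists_clear_denominators (s * t) γ hγ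
  obtain ⟨a, b, hab⟩ : IsCoprime (s ^ (2 * M + 1)) (t ^ (2 * M + 1)) := hst.pow
  set x := b * t ^ (2 * M + 1)
  have hGx : G.map (Polynomial.eval x) =
      t ^ M • (s ^ M • 1 + t • (b * t ^ M) • G.map (slope 0 x)) := by
    have heval := map_eval_add_eq_map_slope 0 x G
    rw [zero_add, hG₀] at heval
    rw [heval, smul_add, smul_smul, smul_smul, smul_smul, mul_pow, mul_comm (t ^ M)]
    congr 2
    ring
  have heval {G H : Matrix ι ι A[X]} (h : G * H = Polynomial.C ((s * t) ^ (2 * M)) • 1) :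
      G.map (Polynomial.eval x) * H.map (Polynomial.eval x) = (s * t) ^ (2 * M) • 1 := by
    have := congrArg (Polynomial.evalRingHom x).mapMatrix h
    rw [map_mul] at this
    refine this.trans (Matrix.ext fun i j => ?_)
    rcases eq_or_ne i j with rfl | hij <;> simp [*]
  refine ⟨M, a, (b * t ^ M) • G.map (slope 0 x), H.map (Polynomial.eval x),
    H.map (slope x (a * s ^ (2 * M + 1))), ?_, ?_, ?_⟩
  · rw [← smul_mul, ← hGx, heval hGH]
  · rw [← Matrix.mul_smul, ← hGx, heval hHG]
  · rw [← map_eval_add_eq_map_slope, add_comm, hab, ← map_inv]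
    ext i j
    have hij := congrArg (fun N : Matrix ι ι B[X] => (N i j).eval 1) hH
    generalize γ⁻¹ = δ at hij ⊢
    rw [Matrix.map_apply, Matrix.map_apply]
    simpa [Polynomial.eval_one_map, -Polynomial.eval_map_algebraMap] using hij

variable {P : Type*} [AddCommGroup P] [Module A P] {s t : A}

theorem orderIdeal_eq_top_of_patching (hst : IsCoprime s t) (b : ScaledBasis s ι P) {p : P}
    {ψ : P →ₗ[A] A} (hψ : ψ p = t) {c : A} {N : ℕ} (hc : c ∣ s ^ N) (i₀ : ι) {M k l : ℕ}
    {U' V K : Matrix ι ι A} (hVU : t ^ M • (V * (s ^ M • 1 + t • U')) = (s * t) ^ (2 * M) • 1)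
    {x : P}
    (hn : ∀ φ : P →ₗ[A] A,
      t ^ k * φ (t ^ (2 * M) • p + b.lift (K *ᵥ b.coords p)) ∈ orderIdeal x)
    (hm : ∀ φ : P →ₗ[A] A,
      s ^ l * φ (b.lift ((s ^ M • 1 + t • U') *ᵥ Pi.single i₀ c)) ∈ orderIdeal x) :
    orderIdeal (A := A) x = ⊤ := by
  by_contra hne
  obtain ⟨Q, hQ, hle⟩ := Ideal.exists_le_maximal _ hne
  have := hQ.isPrime
  have hstQ : ¬ (s ∈ Q ∧ t ∈ Q) := by
    rintro ⟨hs, ht⟩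
    obtain ⟨α, β, h⟩ := hst
    exact this.one_notMem (h ▸ Q.add_mem (Q.mul_mem_left _ hs) (Q.mul_mem_left _ ht))
  set U := s ^ M • (1 : Matrix ι ι A) + t • U' with hU
  by_cases hs : s ∈ Q
  · have ht : t ∉ Q := fun ht => hstQ ⟨hs, ht⟩
    refine b.not_orderIdeal_le K (t ^ (2 * M)) p ψ hs (mt (this.mem_of_pow_mem _) ht) (hψ ▸ ht) ?_
    rintro _ ⟨φ, rfl⟩
    exact (this.mem_or_mem (hle (hn φ))).resolve_left (mt (this.mem_of_pow_mem _) ht)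
  have hcQ : c ∉ Q := fun h => hs (this.mem_of_pow_mem _ (Q.mem_of_dvd hc h))
  have hUQ (i : ι) : U i i₀ ∈ Q := by
    have hi := hle (hm (LinearMap.proj i ∘ₗ b.coords))
    have hcoords : b.coords (b.lift (U *ᵥ Pi.single i₀ c)) i = s * (U i i₀ * c) := by
      simp [b.coords_lift, mul_comm c, mul_assoc]
    rw [LinearMap.comp_apply, LinearMap.proj_apply, hcoords] at hi
    exact (this.mem_or_mem ((this.mem_or_mem ((this.mem_or_mem hi).resolve_left
      (mt (this.mem_of_pow_mem _) hs))).resolve_left hs)).resolve_right hcQ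
  by_cases ht : t ∈ Q
  · have hdiag : U i₀ i₀ = s ^ M + t * U' i₀ i₀ := by simp [hU]
    have hi₀ := hUQ i₀
    rw [hdiag, Submodule.add_mem_iff_left _ (Q.mul_mem_right _ ht)] at hi₀
    exact hs (this.mem_of_pow_mem _ hi₀)
  · have hi₀ := congrFun (congrFun hVU i₀) i₀
    simp only [Matrix.smul_apply, Matrix.mul_apply, one_apply_eq, smul_eq_mul, mul_one] at hi₀
    have hmem : (s * t) ^ (2 * M) ∈ Q :=
      hi₀ ▸ Q.mul_mem_left _ (Q.sum_mem fun i _ => Q.mul_mem_left _ (hUQ i))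
    exact (this.mem_or_mem (this.mem_of_pow_mem _ hmem)).elim hs ht

theorem exists_orderIdeal_eq_top_of_isIsotopic (hst : IsCoprime s t)
    [IsLocalization.Away (s * t) B] (b : ScaledBasis s ι P) {p : P} {ψ : P →ₗ[A] A}
    (hψ : ψ p = t) {i₀ : ι} {c : A} {N : ℕ} (hc : c ∣ s ^ N)
    (hp : IsIsotopic (fun i => algebraMap A B (b.coords p i)) (Pi.single i₀ (algebraMap A B c))) :
    ∃ x : P, orderIdeal (A := A) x = ⊤ := by
  obtain ⟨γ, hγ, hγp⟩ := hp
  obtain ⟨M, a, U', V, V', hUV, hVU, hV⟩ := exists_quillen_splitting hst γ hγ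
  set U := s ^ M • (1 : Matrix ι ι A) + t • U'
  set K := (t ^ M * a) • (U * V') with hK
  set n₀ := t ^ (2 * M) • p + b.lift (K *ᵥ b.coords p) with hn₀
  set m₀ := b.lift (U *ᵥ Pi.single i₀ c) with hm₀
  have hn₀coords : s ^ (2 * M) • b.coords n₀ =
      (t ^ M • U) *ᵥ ((V + (a * s ^ (2 * M + 1)) • V') *ᵥ b.coords p) := by
    rw [mulVec_mulVec, smul_mul, mul_add, smul_add, hUV, Matrix.mul_smul, hn₀, map_add, map_smul,
      b.coords_lift, hK, add_mulVec, smul_mulVec, smul_mulVec, smul_mulVec, smul_mulVec, one_mulVec,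
      smul_add, smul_smul, smul_smul, smul_smul, smul_smul, mul_pow]
    congr 2
    ring
  have hB (i : ι) : algebraMap A B (s ^ (2 * M + 1) * b.coords n₀ i) =
      algebraMap A B (s ^ M * t ^ (2 * M) * b.coords m₀ i) := by
    have hy : algebraMap A B ∘ ((V + (a * s ^ (2 * M + 1)) • V') *ᵥ b.coords p) =
        algebraMap A B ∘ ((s * t) ^ M • Pi.single i₀ c) := by
      ext j
      rw [Function.comp_apply, RingHom.map_mulVec, hV, smul_mulVec,
        show algebraMap A B ∘ b.coords p = _ from hγp, mulVec_mulVec, Units.inv_mul, one_mulVec]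
      rcases eq_or_ne j i₀ with rfl | hj <;> simp [*]
    rw [pow_succ', mul_assoc, ← smul_eq_mul (s ^ _), ← Pi.smul_apply, hn₀coords, map_mul,
      RingHom.map_mulVec, hy, ← RingHom.map_mulVec, ← map_mul, hm₀, b.coords_lift, mulVec_smul,
      smul_mulVec]
    simp only [Pi.smul_apply, smul_eq_mul]
    ring_nf
  obtain ⟨k, hk⟩ := exists_pow_mul_eq_of_algebraMap_eq B (s * t) hB
  have hnm : s ^ (k + 2 * M + 2) • t ^ k • n₀ = t ^ (k + 2 * M) • s ^ (k + M + 1) • m₀ := by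
    have hlift := congrArg b.lift (show ((s * t) ^ k * s ^ (2 * M + 1)) • b.coords n₀ =
      ((s * t) ^ k * (s ^ M * t ^ (2 * M))) • b.coords m₀ from funext fun i => by
        simpa only [Pi.smul_apply, smul_eq_mul, mul_assoc] using hk i)
    rw [map_smul, map_smul, b.lift_coords, b.lift_coords, smul_smul, smul_smul] at hlift
    rw [smul_smul, smul_smul]
    convert hlift using 2 <;> ring
  obtain ⟨x, hxn, hxm⟩ := exists_smul_eq_and_smul_eq_of_isCoprime (IsCoprime.pow hst) hnm
  exact ⟨x, orderIdeal_eq_top_of_patching hst b hψ hc i₀ hVU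
    (smul_apply_mem_orderIdeal_of_smul_eq hxn) (smul_apply_mem_orderIdeal_of_smul_eq hxm)⟩

end Patch

/-! ### Heights and leading coefficients -/

section LeadingCoeff

variable {R : Type*} [CommRing R]

theorem leadingCoeff_mul_leadingCoeff_le {I J K : Ideal R[X]} (h : I * J ≤ K) :
    I.leadingCoeff * J.leadingCoeff ≤ K.leadingCoeff := by
  refine Ideal.mul_le.2 fun a ha b hb => ?_
  obtain ⟨F, hF, rfl⟩ := Ideal.mem_leadingCoeff _ _ |>.1 ha
  obtain ⟨G, hG, rfl⟩ := Ideal.mem_leadingCoeff _ _ |>.1 hb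
  by_cases h0 : F.leadingCoeff * G.leadingCoeff = 0
  · exact h0 ▸ zero_mem _
  · exact (Ideal.mem_leadingCoeff _ _).2
      ⟨F * G, h (Ideal.mul_mem_mul hF hG), Polynomial.leadingCoeff_mul' h0⟩

theorem comap_C_le_leadingCoeff (I : Ideal R[X]) : I.comap Polynomial.C ≤ I.leadingCoeff :=
  fun a ha => (Ideal.mem_leadingCoeff _ _).2 ⟨Polynomial.C a, ha, Polynomial.leadingCoeff_C a⟩

theorem le_map_comap_C_of_leadingCoeff_le {I : Ideal R[X]}
    (h : I.leadingCoeff ≤ I.comap Polynomial.C) : I ≤ (I.comap Polynomial.C).map Polynomial.C := by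
  intro F hF
  induction hn : F.support.card using Nat.strong_induction_on generalizing F with
  | h n ih =>
    rcases eq_or_ne F 0 with rfl | hF0
    · exact zero_mem _
    have hlead : F.leadingCoeff ∈ I.comap Polynomial.C :=
      h ((Ideal.mem_leadingCoeff _ _).2 ⟨F, hF, rfl⟩)
    have herase : F.eraseLead ∈ I := by
      rw [← Polynomial.self_sub_C_mul_X_pow]
      exact sub_mem hF (I.mul_mem_right _ hlead)
    rw [← Polynomial.eraseLead_add_C_mul_X_pow F]
    exact add_mem (ih _ (hn ▸ Polynomial.eraseLead_support_card_lt hF0) herase rfl)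
      (Ideal.mul_mem_right _ _ (Ideal.mem_map_of_mem _ hlead))

variable [IsNoetherianRing R]

theorem exists_isPrime_leadingCoeff_le (p : Ideal R) [hp : p.IsPrime] {I : Ideal R[X]}
    (hI : I.leadingCoeff ≤ p) : ∃ q : Ideal R[X], q.IsPrime ∧ I ≤ q ∧ q.leadingCoeff ≤ p := by
  obtain ⟨q, hIq, hq⟩ := exists_maximal_ge_of_wellFoundedGT
    (fun J : Ideal R[X] => J.leadingCoeff ≤ p) I hI
  refine ⟨q, ⟨?_, fun {a b} hab => ?_⟩, hIq, hq.prop⟩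
  · rintro rfl
    exact hp.one_notMem (hq.prop ((Ideal.mem_leadingCoeff _ _).2 ⟨1, trivial, by simp⟩))
  have hmul : (q ⊔ Ideal.span {a}).leadingCoeff * (q ⊔ Ideal.span {b}).leadingCoeff ≤ p := by
    refine (leadingCoeff_mul_leadingCoeff_le ?_).trans hq.prop
    rw [Ideal.sup_mul, Ideal.mul_sup (Ideal.span {a}), Ideal.span_singleton_mul_span_singleton]
    exact sup_le Ideal.mul_le_left
      (sup_le Ideal.mul_le_right ((Ideal.span_singleton_le_iff_mem _).2 hab))
  refine (hp.mul_le.1 hmul).imp (fun h => ?_) (fun h => ?_) <;>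
    exact hq.le_of_ge h le_sup_left (Ideal.mem_sup_right (Ideal.mem_span_singleton_self _))

attribute [local instance] Polynomial.algebra Polynomial.isLocalization in
theorem height_le_height_add_one_of_liesOver (p : Ideal R) (q : Ideal R[X]) [q.IsPrime]
    [q.LiesOver p] : q.height ≤ p.height + 1 := by
  have : p.IsPrime := q.over_def p ▸ inferInstance
  let Rₚ := Localization.AtPrime p
  have disj : Disjoint (p.primeCompl.map Polynomial.C : Set R[X]) q := by
    refine Set.disjoint_left.mpr fun a ⟨b, hb⟩ ha ↦ hb.1 ?_
    rwa [SetLike.mem_coe, q.over_def p, Ideal.mem_comap, Polynomial.algebraMap_eq, hb.2]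
  let p' : Ideal Rₚ := p.map (algebraMap R Rₚ)
  let q' : Ideal Rₚ[X] := q.map (algebraMap R[X] Rₚ[X])
  have hp' : p'.IsMaximal := inferInstanceAs (p.map (algebraMap R Rₚ)).IsMaximal
  have hq' : q'.IsPrime := IsLocalization.isPrime_of_isPrime_disjoint _ _ q ‹_› disj
  obtain ⟨m, hm, hle⟩ := Ideal.exists_le_maximal q' hq'.ne_top
  have : q'.LiesOver p' := IsLocalization.liesOver_of_isPrime_of_disjoint p.primeCompl _ _ disj
  have : m.LiesOver p' := ⟨hp'.eq_of_le (Ideal.IsPrime.under Rₚ m).ne_top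
    (q'.over_def p' ▸ Ideal.comap_mono hle)⟩
  rw [← IsLocalization.height_map_of_disjoint p.primeCompl (S := Rₚ) p
      (Set.disjoint_left.2 fun _ h h' => h h'),
    ← IsLocalization.height_map_of_disjoint (p.primeCompl.map Polynomial.C) (S := Rₚ[X]) q disj,
    ← Polynomial.height_eq_height_add_one p' m]
  exact Ideal.height_mono hle

theorem height_le_of_leadingCoeff_le {p : Ideal R} [p.IsPrime] {q : Ideal R[X]} [q.IsPrime]
    (h : q.leadingCoeff ≤ p) : q.height ≤ p.height := by
  set p₀ := q.comap Polynomial.C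
  have hp₀ : p₀.IsPrime := inferInstance
  have : q.LiesOver p₀ := ⟨rfl⟩
  have hp₀p : p₀ ≤ p := (comap_C_le_leadingCoeff q).trans h
  rcases hp₀p.eq_or_lt with heq | hlt
  · have hq : p₀.map (algebraMap R R[X]) = q :=
      Ideal.map_comap_le.antisymm (le_map_comap_C_of_leadingCoeff_le (h.trans heq.ge))
    have hheight := Ideal.height_le_height_add_of_liesOver p₀ q
    rw [hq, Ideal.map_quotient_self, Ideal.height_bot, add_zero] at hheight
    exact hheight.trans (Ideal.height_mono hp₀p)
  · exact (height_le_height_add_one_of_liesOver p₀ q).trans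
      (Ideal.height_add_one_le_of_lt_of_isPrime hlt)

theorem height_le_height_leadingCoeff (I : Ideal R[X]) : I.height ≤ I.leadingCoeff.height := by
  rw [I.leadingCoeff.height_eq_inf_minimalPrimes]
  refine le_iInf₂ fun p hp => ?_
  have := hp.1.1
  obtain ⟨q, _, hIq, hqp⟩ := exists_isPrime_leadingCoeff_le p hp.1.2
  exact (Ideal.height_mono hIq).trans (height_le_of_leadingCoeff_le hqp)

theorem exists_monic_mem_of_lt_height {d : ℕ} (hd : ringKrullDim R ≤ d) {I : Ideal R[X]}
    (hI : (d + 1 : ℕ) ≤ I.height) : ∃ F ∈ I, F.Monic := by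
  refine (Ideal.mem_leadingCoeff _ _).1 ((Ideal.eq_top_iff_one _).1 ?_)
  by_contra hne
  have hle := (Ideal.height_le_ringKrullDim_of_ne_top hne).trans hd
  have hlt := (hI.trans (height_le_height_leadingCoeff I)).trans (WithBot.coe_le_coe.1 hle)
  exact absurd (Nat.cast_le.1 hlt) (by lia)

theorem isMaximal_of_lt_height {d : ℕ} (hd : ringKrullDim R ≤ d) {q : Ideal R[X]} [q.IsPrime]
    (hq : (d + 1 : ℕ) ≤ q.height) : q.IsMaximal := by
  obtain ⟨m, hm, hqm⟩ := q.exists_le_maximal (Ideal.IsPrime.ne_top ‹_›)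
  rcases hqm.eq_or_lt with rfl | hlt
  · exact hm
  have hdim : ringKrullDim R[X] ≤ (d + 1 : ℕ) := by
    nontriviality R
    rw [Polynomial.ringKrullDim_of_isNoetherianRing]
    push_cast
    exact add_le_add_left hd 1
  have hle := WithBot.coe_le_coe.1 ((Ideal.height_le_ringKrullDim_of_ne_top hm.ne_top).trans hdim)
  have hlt' := (add_le_add_left hq 1).trans (Ideal.height_add_one_le_of_lt_of_isPrime hlt)
  exact absurd (Nat.cast_le.1 (hlt'.trans hle)) (by lia)

theorem sup_span_eq_top_of_lt_height {d : ℕ} (hd : ringKrullDim R ≤ d) (f : R[X]) {C : Type*}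
    [CommRing C] [Algebra R[X] C] [IsLocalization.Away f C] {I : Ideal C}
    (hI : (d + 1 : ℕ) ≤ I.height) : I.comap (algebraMap R[X] C) ⊔ Ideal.span {f} = ⊤ := by
  by_contra hne
  obtain ⟨m, hm, hle⟩ := Ideal.exists_le_maximal _ hne
  obtain ⟨q, hq, hqm⟩ := Ideal.exists_minimalPrimes_le (le_sup_left.trans hle)
  have := hq.1.1
  have hfm : f ∈ m := hle (Ideal.mem_sup_right (Ideal.mem_span_singleton_self f))
  have hfq : f ∉ q := by
    rw [IsLocalization.minimalPrimes_comap (.powers f) C] at hq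
    obtain ⟨q', hq', rfl⟩ := hq
    exact fun hf => hq'.1.1.ne_top
      (Ideal.eq_top_of_isUnit_mem _ hf (IsLocalization.Away.algebraMap_isUnit f))
  have hq_height : (d + 1 : ℕ) ≤ q.height :=
    (hI.trans (IsLocalization.height_under (.powers f) I).ge).trans (Ideal.height_mono hq.1.2)
  exact hfq ((isMaximal_of_lt_height hd hq_height).eq_of_le hm.ne_top hqm ▸ hfm)

theorem exists_monic_isCoprime_mem_comap {d : ℕ} (hd : ringKrullDim R ≤ d) {f : R[X]}
    (hf : f.Monic) {C : Type*} [CommRing C] [Algebra R[X] C] [IsLocalization.Away f C]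
    {I : Ideal C} (hI : (d + 1 : ℕ) ≤ I.height) :
    ∃ g ∈ I.comap (algebraMap R[X] C), g.Monic ∧ IsCoprime g f := by
  cases subsingleton_or_nontrivial R
  · exact ⟨0, zero_mem _, Subsingleton.elim _ _, 0, 0, Subsingleton.elim _ _⟩
  obtain ⟨F, hF, hFm⟩ := exists_monic_mem_of_lt_height hd
    (hI.trans (IsLocalization.height_under (.powers f) I).ge)
  obtain ⟨u, hu, w, hw, huw⟩ := Submodule.mem_sup.1
    ((Ideal.eq_top_iff_one _).1 (sup_span_eq_top_of_lt_height hd f hI))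
  obtain ⟨w, rfl⟩ := Ideal.mem_span_singleton.1 hw
  refine ⟨f * F * Polynomial.X ^ (u.natDegree + 1) + u,
    add_mem (Ideal.mul_mem_right _ _ (Ideal.mul_mem_left _ _ hF)) hu, ?_,
    1, w - F * Polynomial.X ^ (u.natDegree + 1), by linear_combination huw⟩
  refine ((hf.mul hFm).mul (Polynomial.monic_X_pow _)).add_of_left
    (Polynomial.degree_lt_degree ?_)
  rw [(hf.mul hFm).natDegree_mul (Polynomial.monic_X_pow _), Polynomial.natDegree_X_pow]
  lia

end LeadingCoeff

/-! ### Presentations of `D[X]_h` and towers of polynomial and Laurent extensions -/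

/-- `A` is the localization `D[X]_h`, with structure map `j : D →+* A` and with `x : A` the image of
the variable. Since `A` carries several such presentations at once, this is a predicate on `j` and
`x` and not on an `Algebra` instance. -/
def IsAdjoinAway {D A : Type*} [CommRing D] [CommRing A] (j : D →+* A) (h : D[X]) (x : A) : Prop :=
  letI := (Polynomial.eval₂RingHom j x).toAlgebra
  IsLocalization.Away h A

namespace IsAdjoinAway

section

variable {D A E : Type*} [CommRing D] [CommRing A] [CommRing E] {j : D →+* A} {h : D[X]} {x : A}

theorem of_isLocalization [Algebra D[X] A] (h : D[X]) [IsLocalization.Away h A] :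
    IsAdjoinAway ((algebraMap D[X] A).comp Polynomial.C) h (algebraMap D[X] A Polynomial.X) := by
  have heval : Polynomial.eval₂RingHom ((algebraMap D[X] A).comp Polynomial.C)
      (algebraMap D[X] A Polynomial.X) = algebraMap D[X] A :=
    Polynomial.ringHom_ext (by simp) (by simp)
  rw [IsAdjoinAway, heval]
  convert ‹IsLocalization.Away h A›
  exact Algebra.algebra_ext _ _ fun _ => rfl

protected theorem isUnit (H : IsAdjoinAway j h x) : IsUnit (h.eval₂ j x) :=
  letI := (Polynomial.eval₂RingHom j x).toAlgebra
  haveI : IsLocalization.Away h A := H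
  IsLocalization.Away.algebraMap_isUnit h

theorem exists_lift (H : IsAdjoinAway j h x) (g : D →+* E) {e : E} (he : IsUnit (h.eval₂ g e)) :
    ∃ k : A →+* E, k.comp j = g ∧ k x = e := by
  let _ := (Polynomial.eval₂RingHom j x).toAlgebra
  have : IsLocalization.Away h A := H
  have hlift := IsLocalization.Away.lift_eq (S := A) (g := Polynomial.eval₂RingHom g e) h he
  refine ⟨IsLocalization.Away.lift (S := A) (g := Polynomial.eval₂RingHom g e) h he,
    RingHom.ext fun a => ?_, ?_⟩
  · simpa [RingHom.algebraMap_toAlgebra] using hlift (Polynomial.C a)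
  · simpa [RingHom.algebraMap_toAlgebra] using hlift Polynomial.X

theorem hom_ext (H : IsAdjoinAway j h x) {k k' : A →+* E} (hj : k.comp j = k'.comp j)
    (hx : k x = k' x) : k = k' := by
  let _ := (Polynomial.eval₂RingHom j x).toAlgebra
  have : IsLocalization.Away h A := H
  refine IsLocalization.ringHom_ext (Submonoid.powers h) (Polynomial.ringHom_ext (fun a => ?_) ?_)
  · simpa [RingHom.algebraMap_toAlgebra] using RingHom.congr_fun hj a
  · simpa [RingHom.algebraMap_toAlgebra] using hx

theorem congr {A' : Type*} [CommRing A'] (H : IsAdjoinAway j h x) (e : A ≃+* A') :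
    IsAdjoinAway (e.toRingHom.comp j) h (e x) := by
  let _ := (Polynomial.eval₂RingHom j x).toAlgebra
  let _ := (Polynomial.eval₂RingHom (e.toRingHom.comp j) (e x)).toAlgebra
  have : IsLocalization.Away h A := H
  refine IsLocalization.isLocalization_of_algEquiv (Submonoid.powers h)
    (AlgEquiv.ofRingEquiv (f := e) fun p => ?_)
  exact Polynomial.hom_eval₂ p j e.toRingHom x

theorem isNoetherianRing [IsNoetherianRing D] (H : IsAdjoinAway j h x) : IsNoetherianRing A := by
  let _ := (Polynomial.eval₂RingHom j x).toAlgebra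
  have : IsLocalization.Away h A := H
  exact IsLocalization.isNoetherianRing (Submonoid.powers h) A inferInstance

theorem exists_mul_pow_eq {ι : Type*} [Finite ι] (H : IsAdjoinAway j h x) (b : ι → A) :
    ∃ (n : ℕ) (w : ι → D[X]), ∀ i, b i * h.eval₂ j x ^ n = (w i).eval₂ j x := by
  let _ := (Polynomial.eval₂RingHom j x).toAlgebra
  have : IsLocalization.Away h A := H
  obtain ⟨n, w, hw⟩ := exists_algebraMap_eq_pow_mul h b
  exact ⟨n, w, fun i => (mul_comm _ _).trans (hw i).symm⟩

end

section

variable {D A D' A' : Type u} [CommRing D] [CommRing A] [CommRing D'] [CommRing A']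

theorem of_universal {j : D →+* A} {h : D[X]} {x : A} (hx : IsUnit (h.eval₂ j x))
    (hlift : ∀ (E : Type u) [CommRing E] (g : D →+* E) (e : E), IsUnit (h.eval₂ g e) →
      ∃ k : A →+* E, k.comp j = g ∧ k x = e)
    (hext : ∀ (E : Type u) [CommRing E] (k k' : A →+* E), k.comp j = k'.comp j → k x = k' x →
      k = k') :
    IsAdjoinAway j h x := by
  have hL : IsAdjoinAway _ h _ := of_isLocalization (A := Localization.Away h) h
  obtain ⟨k, hkj, hkx⟩ := hL.exists_lift j hx
  obtain ⟨k', hkj', hkx'⟩ := hlift _ _ _ hL.isUnit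
  have hkk' : k.comp k' = RingHom.id A :=
    hext _ _ _ (by rw [RingHom.comp_assoc, hkj', hkj, RingHom.id_comp]) (by simp [hkx', hkx])
  have hk'k : k'.comp k = RingHom.id _ :=
    hL.hom_ext (by rw [RingHom.comp_assoc, hkj, hkj', RingHom.id_comp]) (by simp [hkx', hkx])
  have := hL.congr (RingEquiv.ofRingHom k k' hkk' hk'k)
  rwa [show (RingEquiv.ofRingHom k k' hkk' hk'k).toRingHom.comp _ = j from hkj,
    show RingEquiv.ofRingHom k k' hkk' hk'k _ = x from hkx] at this

theorem inv {j : D →+* A} {x x' : A} (H : IsAdjoinAway j Polynomial.X x) (hx : x * x' = 1) :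
    IsAdjoinAway j Polynomial.X x' := by
  refine of_universal ?_ (fun E _ g e he => ?_) (fun E _ k k' hj hk => H.hom_ext hj ?_)
  · rw [Polynomial.eval₂_X]
    exact .of_mul_eq_one _ ((mul_comm _ _).trans hx)
  · rw [Polynomial.eval₂_X] at he
    obtain ⟨e', he'⟩ := he.exists_right_inv
    obtain ⟨k, hkj, hkx⟩ := H.exists_lift g (e := e')
      (by rw [Polynomial.eval₂_X]; exact .of_mul_eq_one _ ((mul_comm _ _).trans he'))
    refine ⟨k, hkj, ?_⟩
    have hkxx' := congrArg k hx
    rw [map_mul, hkx, map_one] at hkxx'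
    exact (left_inv_eq_right_inv he' hkxx').symm
  · have hkx := congrArg k hx
    have hkx' := congrArg k' hx
    rw [map_mul, map_one] at hkx hkx'
    rw [hk] at hkx
    exact left_inv_eq_right_inv hkx ((mul_comm _ _).trans hkx')

/-- Two variables `y` and `x` adjoined in this order can be adjoined in the other order, after
replacing `x` by `x - w` in the polynomial case, or by `x / w` in the Laurent case. -/
theorem comm {S S' : Type u} [CommRing S] [CommRing S'] {i : S →+* D} {f : S[X]} {y : D}
    (hy : IsAdjoinAway i f y) {j : D →+* A} {h : D[X]} {x : A} (hx : IsAdjoinAway j h x)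
    {k : S →+* S'} {h' : S[X]} {t : S'} (ht : IsAdjoinAway k h' t) {ι : S' →+* A}
    (hι : ι.comp k = j.comp i)
    (hcase : (h = 1 ∧ ∃ w, x = ι t + j w) ∨
      (h = Polynomial.X ∧ h' = Polynomial.X ∧ ∃ w, IsUnit w ∧ x = ι t * j w)) :
    IsAdjoinAway ι (f.map k) (j y) := by
  refine of_universal ?_ (fun E _ g e he => ?_) (fun E _ k₁ k₂ hι' hy' => ?_)
  · rw [Polynomial.eval₂_map, hι, ← Polynomial.hom_eval₂]
    exact hy.isUnit.map j
  · rw [Polynomial.eval₂_map] at he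
    obtain ⟨g', hg'i, hg'y⟩ := hy.exists_lift (g.comp k) he
    suffices ∃ k' : A →+* E, k'.comp j = g' ∧ k' (ι t) = g t by
      obtain ⟨k', hk'j, hk't⟩ := this
      refine ⟨k', ht.hom_ext ?_ hk't, by rw [← hg'y, ← hk'j, RingHom.comp_apply]⟩
      rw [RingHom.comp_assoc, hι, ← RingHom.comp_assoc, hk'j, hg'i]
    rcases hcase with ⟨rfl, w, hw⟩ | ⟨rfl, rfl, w, hwu, hw⟩
    · obtain ⟨k', hk'j, hk'x⟩ := hx.exists_lift g' (e := g t + g' w) (by simp)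
      refine ⟨k', hk'j, ?_⟩
      rw [hw, map_add, ← hk'j] at hk'x
      exact add_right_cancel hk'x
    · have htu : IsUnit t := by simpa using ht.isUnit
      obtain ⟨k', hk'j, hk'x⟩ := hx.exists_lift g' (e := g t * g' w)
        (by rw [Polynomial.eval₂_X]; exact (htu.map g).mul (hwu.map g'))
      refine ⟨k', hk'j, ?_⟩
      rw [hw, map_mul, ← hk'j] at hk'x
      exact ((hwu.map j).map k').mul_right_cancel hk'x
  · have hj : k₁.comp j = k₂.comp j := by
      refine hy.hom_ext ?_ hy'
      rw [RingHom.comp_assoc, RingHom.comp_assoc, ← hι, ← RingHom.comp_assoc, hι',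
        RingHom.comp_assoc]
    have ht' : k₁ (ι t) = k₂ (ι t) := RingHom.congr_fun hι' t
    have hw' (w : D) : k₁ (j w) = k₂ (j w) := RingHom.congr_fun hj w
    refine hx.hom_ext hj ?_
    rcases hcase with ⟨-, w, rfl⟩ | ⟨-, -, w, -, rfl⟩
    · rw [map_add, map_add, ht', hw']
    · rw [map_mul, map_mul, ht', hw']

theorem pushout {j : D →+* A} {h : D[X]} {x : A} (H : IsAdjoinAway j h x) (δ : D →+* D')
    (α : A →+* A') (j' : D' →+* A') (hcomm : α.comp j = j'.comp δ)
    (hdesc : ∀ (E : Type u) [CommRing E] (g : D' →+* E) (k : A →+* E), k.comp j = g.comp δ →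
      ∃ k' : A' →+* E, k'.comp j' = g ∧ k'.comp α = k)
    (hext : ∀ (E : Type u) [CommRing E] (k k' : A' →+* E), k.comp j' = k'.comp j' →
      k.comp α = k'.comp α → k = k') :
    IsAdjoinAway j' (h.map δ) (α x) := by
  refine of_universal ?_ (fun E _ g e he => ?_)
    (fun E _ k k' hj hk => hext E k k' hj (H.hom_ext ?_ hk))
  · have := H.isUnit.map α
    rwa [Polynomial.hom_eval₂, hcomm, ← Polynomial.eval₂_map] at this
  · rw [Polynomial.eval₂_map] at he
    obtain ⟨k, hkj, hkx⟩ := H.exists_lift _ he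
    obtain ⟨k', hk'j, hk'α⟩ := hdesc E g k hkj
    exact ⟨k', hk'j, by rw [← hkx, ← hk'α, RingHom.comp_apply]⟩
  · rw [RingHom.comp_assoc, hcomm, ← RingHom.comp_assoc, hj, RingHom.comp_assoc, ← hcomm,
      RingHom.comp_assoc]

theorem exists_ringHom (h : D[X]) :
    ∃ (A : Type u) (_ : CommRing A) (j : D →+* A) (x : A), IsAdjoinAway j h x :=
  ⟨Localization.Away h, inferInstance, _, _, of_isLocalization h⟩

end

end IsAdjoinAway

/-- The polynomial inverted when a variable is adjoined to `D`: the variable itself for a Laurent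
variable (`true`), and `1` for a polynomial variable (`false`). -/
def adjoinDenom (D : Type u) [CommRing D] (b : Bool) : D[X] :=
  if b then Polynomial.X else 1

theorem map_adjoinDenom {D D' : Type u} [CommRing D] [CommRing D'] (φ : D →+* D') (b : Bool) :
    (adjoinDenom D b).map φ = adjoinDenom D' b := by
  cases b <;> simp [adjoinDenom]

/-- `A` is obtained from `R` by first forming `R[Y]_f` and then adjoining one variable for each
entry of the list, from right to left: a Laurent variable for `true` and a polynomial variable for
`false`. -/
def IsLaurentTower (R : Type u) [CommRing R] (f : R[X]) :
    List Bool → ∀ (A : Type u) [CommRing A] [Algebra R A], Prop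
  | [], A, _, _ => ∃ y, IsAdjoinAway (algebraMap R A) f y
  | b :: l, A, _, _ => ∃ (D : Type u) (_ : CommRing D) (_ : Algebra R D) (j : D →ₐ[R] A) (x : A),
      IsLaurentTower R f l D ∧ IsAdjoinAway j.toRingHom (adjoinDenom D b) x

section

variable {R R' A D E : Type u} [CommRing R] [CommRing R'] [Algebra R R'] [CommRing A] [Algebra R A]
  [CommRing D] [Algebra R D] [CommRing E]

theorem exists_ringHom_tensorProduct (g : R' →+* E) (k : A →+* E)
    (h : k.comp (algebraMap R A) = g.comp (algebraMap R R')) :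
    ∃ k' : R' ⊗[R] A →+* E, (∀ r, k' (r ⊗ₜ 1) = g r) ∧ ∀ a, k' (1 ⊗ₜ a) = k a := by
  let _ : Algebra R' E := g.toAlgebra
  let _ : Algebra R E := (g.comp (algebraMap R R')).toAlgebra
  have : IsScalarTower R R' E := .of_algebraMap_eq' rfl
  let kₐ : A →ₐ[R] E := { k with commutes' := RingHom.congr_fun h }
  refine ⟨(Algebra.TensorProduct.lift (Algebra.ofId R' E) kₐ fun _ _ => .all _ _).toRingHom,
    fun r => ?_, fun a => ?_⟩
  · exact (Algebra.TensorProduct.lift_tmul _ _ _ _ _).trans (by rw [map_one, mul_one]; rfl)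
  · exact (Algebra.TensorProduct.lift_tmul _ _ _ _ _).trans (by rw [map_one, one_mul]; rfl)

theorem ringHom_tensorProduct_ext {k k' : R' ⊗[R] A →+* E} (hl : ∀ r, k (r ⊗ₜ 1) = k' (r ⊗ₜ 1))
    (hr : ∀ a, k (1 ⊗ₜ a) = k' (1 ⊗ₜ a)) : k = k' :=
  Algebra.TensorProduct.ringHom_ext (RingHom.ext hl) (RingHom.ext hr)

theorem IsAdjoinAway.tensorProduct_base {f : R[X]} {y : A}
    (H : IsAdjoinAway (algebraMap R A) f y) :
    IsAdjoinAway (algebraMap R' (R' ⊗[R] A)) (f.map (algebraMap R R')) (1 ⊗ₜ y) := by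
  refine H.pushout (algebraMap R R') (Algebra.TensorProduct.includeRight : A →ₐ[R] R' ⊗[R] A)
    (algebraMap R' (R' ⊗[R] A)) (RingHom.ext fun r => ?_) (fun E _ g k h => ?_)
    (fun E _ k k' hl hr => ringHom_tensorProduct_ext (RingHom.congr_fun hl) (RingHom.congr_fun hr))
  · exact (Algebra.TensorProduct.tmul_one_eq_one_tmul r).symm
  · obtain ⟨k', hl, hr⟩ := exists_ringHom_tensorProduct g k h
    exact ⟨k', RingHom.ext hl, RingHom.ext hr⟩

theorem IsAdjoinAway.tensorProduct_map {j : D →ₐ[R] A} {h : D[X]} {x : A}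
    (H : IsAdjoinAway j.toRingHom h x) :
    IsAdjoinAway (Algebra.TensorProduct.map (AlgHom.id R' R') j).toRingHom
      (h.map (Algebra.TensorProduct.includeRight : D →ₐ[R] R' ⊗[R] D).toRingHom) (1 ⊗ₜ x) := by
  have hmap (r : R') : Algebra.TensorProduct.map (AlgHom.id R' R') j (r ⊗ₜ 1) = r ⊗ₜ 1 := by simp
  refine H.pushout (Algebra.TensorProduct.includeRight : D →ₐ[R] R' ⊗[R] D).toRingHom
    (Algebra.TensorProduct.includeRight : A →ₐ[R] R' ⊗[R] A).toRingHom
    (Algebra.TensorProduct.map (AlgHom.id R' R') j).toRingHom (RingHom.ext fun d => ?_)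
    (fun E _ g k h => ?_) (fun E _ k k' hl hr => ?_)
  · exact (Algebra.TensorProduct.map_tmul (AlgHom.id R' R') j 1 d).symm
  · have hk : k.comp (algebraMap R A) =
        (g.comp (algebraMap R' (R' ⊗[R] D))).comp (algebraMap R R') := RingHom.ext fun r => by
      have hr := RingHom.congr_fun h (algebraMap R D r)
      change k (j (algebraMap R D r)) = g ((1 : R') ⊗ₜ[R] algebraMap R D r) at hr
      rw [j.commutes, ← Algebra.TensorProduct.tmul_one_eq_one_tmul] at hr
      exact hr
    obtain ⟨k', hl, hr⟩ := exists_ringHom_tensorProduct _ k hk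
    refine ⟨k', ringHom_tensorProduct_ext (fun r => ?_) (fun d => ?_), RingHom.ext hr⟩
    · exact (congrArg k' (hmap r)).trans (hl r)
    · exact (congrArg k' (by simp)).trans ((hr (j d)).trans (RingHom.congr_fun h d))
  · refine ringHom_tensorProduct_ext (fun r => ?_) (RingHom.congr_fun hr)
    rw [← hmap r]
    exact RingHom.congr_fun hl (r ⊗ₜ 1)

end

namespace IsLaurentTower

theorem isNoetherianRing {R A : Type u} [CommRing R] [IsNoetherianRing R] [CommRing A] [Algebra R A]
    {f : R[X]} {l : List Bool} (H : IsLaurentTower R f l A) : IsNoetherianRing A := by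
  induction l generalizing A with
  | nil => exact H.choose_spec.isNoetherianRing
  | cons b l ih =>
    obtain ⟨D, _, _, j, x, hD, hx⟩ := H
    have := ih hD
    exact hx.isNoetherianRing

theorem tensorProduct {R R' A : Type u} [CommRing R] [CommRing R'] [Algebra R R'] [CommRing A]
    [Algebra R A] {f : R[X]} {l : List Bool} (H : IsLaurentTower R f l A) :
    IsLaurentTower R' (f.map (algebraMap R R')) l (R' ⊗[R] A) := by
  induction l generalizing A with
  | nil =>
    obtain ⟨y, hy⟩ := H
    exact ⟨1 ⊗ₜ y, hy.tensorProduct_base⟩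
  | cons b l ih =>
    obtain ⟨D, _, _, j, x, hD, hx⟩ := H
    refine ⟨R' ⊗[R] D, inferInstance, inferInstance,
      Algebra.TensorProduct.map (AlgHom.id R' R') j, 1 ⊗ₜ x, ih hD, ?_⟩
    have := hx.tensorProduct_map (R' := R')
    rwa [map_adjoinDenom] at this

theorem congr {R A A' : Type u} [CommRing R] [CommRing A] [Algebra R A] [CommRing A'] [Algebra R A']
    {f : R[X]} {l : List Bool} (e : A ≃ₐ[R] A') (H : IsLaurentTower R f l A) :
    IsLaurentTower R f l A' := by
  cases l with
  | nil =>
    obtain ⟨y, hy⟩ := H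
    have := hy.congr e.toRingEquiv
    rw [show e.toRingEquiv.toRingHom.comp (algebraMap R A) = algebraMap R A' from
      e.toAlgHom.comp_algebraMap] at this
    exact ⟨e y, this⟩
  | cons b l =>
    obtain ⟨D, _, _, j, x, hD, hx⟩ := H
    exact ⟨D, _, _, e.toAlgHom.comp j, e x, hD, hx.congr e.toRingEquiv⟩

theorem exists_of_append_singleton {K A : Type u} [CommRing K] [CommRing A] [Algebra K A] {f : K[X]}
    (l : List Bool) (b : Bool) (H : IsLaurentTower K f (l ++ [b]) A) :
    ∃ (C : Type u) (_ : CommRing C) (_ : Algebra K C) (_ : Algebra C A),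
      IsLaurentTower K f [] C ∧ IsLaurentTower C (adjoinDenom C b) l A := by
  induction l generalizing A with
  | nil =>
    obtain ⟨D, _, _, j, x, hD, hx⟩ := H
    exact ⟨D, _, _, j.toRingHom.toAlgebra, hD, x, hx⟩
  | cons c l ih =>
    obtain ⟨D, _, _, j, x, hD, hx⟩ := H
    obtain ⟨C, _, _, _, hC, hCD⟩ := ih hD
    exact ⟨C, _, _, (j.toRingHom.comp (algebraMap C D)).toAlgebra, hC, D, _, _,
      letI := (j.toRingHom.comp (algebraMap C D)).toAlgebra
      { j.toRingHom with commutes' := fun _ => rfl }, x, hCD, hx⟩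

theorem exists_algebra (R : Type u) [CommRing R] (f : R[X]) (l : List Bool) :
    ∃ (A : Type u) (_ : CommRing A) (_ : Algebra R A), IsLaurentTower R f l A := by
  induction l with
  | nil =>
    obtain ⟨A, _, j, y, hy⟩ := IsAdjoinAway.exists_ringHom f
    exact ⟨A, _, j.toAlgebra, y, hy⟩
  | cons b l ih =>
    obtain ⟨D, _, _, hD⟩ := ih
    obtain ⟨A, _, j, x, hx⟩ := IsAdjoinAway.exists_ringHom (adjoinDenom D b)
    exact ⟨A, _, (j.comp (algebraMap R D)).toAlgebra, D, _, _,
      letI := (j.comp (algebraMap R D)).toAlgebra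
      { j with commutes' := fun _ => rfl }, x, hD, hx⟩

end IsLaurentTower

/-! ### Special elements -/

/-- After inverting `s`, the polynomial `g` becomes a unit times a monic polynomial of degree `n`.
The degree is an explicit bound, so that the zero ring needs no separate treatment. -/
def IsMonicAway {S : Type*} [CommRing S] (s : S) (n : ℕ) (g : S[X]) : Prop :=
  g.natDegree ≤ n ∧ ∃ i : ℕ, g.coeff n ∣ s ^ i

/-- After inverting `s`, the polynomial `g` becomes invertible modulo `f`. -/
def IsUnitModAway {S : Type*} [CommRing S] (s : S) (f g : S[X]) : Prop :=
  ∃ (i : ℕ) (p : S[X]), f ∣ p * g - Polynomial.C (s ^ i)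

/-- Up to a power of `f(y)`, the element `a` is the value at `y` of a polynomial over `S` that is
monic and coprime to `f` after inverting `s`. -/
def IsSpecial {S A : Type*} [CommRing S] [CommRing A] (f : S[X]) (ι : S →+* A) (y : A) (s : S)
    (a : A) : Prop :=
  ∃ (k n : ℕ) (g : S[X]), IsMonicAway s n g ∧ IsUnitModAway s f g ∧
    a * f.eval₂ ι y ^ k = g.eval₂ ι y

section

variable {S : Type*} [CommRing S] {s : S}

namespace IsMonicAway

variable {m n : ℕ} {g h : S[X]}

theorem C {c : S} {i : ℕ} (hc : c ∣ s ^ i) : IsMonicAway s 0 (Polynomial.C c) :=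
  ⟨(Polynomial.natDegree_C c).le, i, by rwa [Polynomial.coeff_C_zero]⟩

theorem X : IsMonicAway s 1 (Polynomial.X : S[X]) :=
  ⟨Polynomial.natDegree_X_le, 0, by simp⟩

theorem mul (hg : IsMonicAway s m g) (hh : IsMonicAway s n h) : IsMonicAway s (m + n) (g * h) := by
  obtain ⟨hg, i, hi⟩ := hg
  obtain ⟨hh, j, hj⟩ := hh
  refine ⟨Polynomial.natDegree_mul_le_of_le hg hh, i + j, ?_⟩
  rw [Polynomial.coeff_mul_add_eq_of_natDegree_le hg hh, pow_add]
  exact mul_dvd_mul hi hj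

theorem pow (hg : IsMonicAway s m g) (n : ℕ) : IsMonicAway s (n * m) (g ^ n) := by
  obtain ⟨hg, i, hi⟩ := hg
  refine ⟨Polynomial.natDegree_pow_le_of_le n hg, i * n, ?_⟩
  rw [Polynomial.coeff_pow_of_natDegree_le hg, pow_mul]
  exact pow_dvd_pow_of_dvd hi n

theorem add_of_natDegree_lt (hg : IsMonicAway s m g) (hh : h.natDegree < m) :
    IsMonicAway s m (g + h) := by
  refine ⟨Polynomial.natDegree_add_le_of_degree_le hg.1 hh.le, ?_⟩
  rw [Polynomial.coeff_add, Polynomial.coeff_eq_zero_of_natDegree_lt hh, add_zero]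
  exact hg.2

theorem map {S' : Type*} [CommRing S'] (κ : S →+* S') (hg : IsMonicAway s m g) :
    IsMonicAway (κ s) m (g.map κ) := by
  obtain ⟨hg, i, hi⟩ := hg
  refine ⟨Polynomial.natDegree_map_le.trans hg, i, ?_⟩
  rw [Polynomial.coeff_map, ← map_pow]
  exact map_dvd κ hi

theorem of_monic (hg : g.Monic) : IsMonicAway s g.natDegree g :=
  ⟨le_rfl, 0, by simp [hg.coeff_natDegree]⟩

end IsMonicAway

namespace IsUnitModAway

variable {f g g' : S[X]}

theorem C (f : S[X]) : IsUnitModAway s f (Polynomial.C s) := ⟨1, 1, by simp⟩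

theorem congr (hg : IsUnitModAway s f g) (h : f ∣ g' - g) : IsUnitModAway s f g' := by
  obtain ⟨i, p, hp⟩ := hg
  refine ⟨i, p, ?_⟩
  convert dvd_add (h.mul_left p) hp using 1
  ring

theorem C_mul {c : S} (hc : IsUnit c) (hg : IsUnitModAway s f g) :
    IsUnitModAway s f (Polynomial.C c * g) := by
  obtain ⟨i, p, hp⟩ := hg
  obtain ⟨c', hc'⟩ := hc.exists_right_inv
  refine ⟨i, p * Polynomial.C c', ?_⟩
  rwa [mul_assoc, ← mul_assoc (Polynomial.C c'), ← Polynomial.C_mul, mul_comm c', hc',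
    Polynomial.C_1, one_mul]

theorem map {S' : Type*} [CommRing S'] (κ : S →+* S') (hg : IsUnitModAway s f g) :
    IsUnitModAway (κ s) (f.map κ) (g.map κ) := by
  obtain ⟨i, p, hp⟩ := hg
  refine ⟨i, p.map κ, ?_⟩
  simpa using Polynomial.map_dvd κ hp

end IsUnitModAway

namespace IsSpecial

variable {A : Type*} [CommRing A] {f : S[X]} {ι : S →+* A} {y a : A}

theorem map_self (f : S[X]) (ι : S →+* A) (y : A) (s : S) : IsSpecial f ι y s (ι s) :=
  ⟨0, 0, Polynomial.C s, .C (i := 1) (by simp), .C f, by simp⟩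

theorem of_mul_pow {n : ℕ} (h : IsSpecial f ι y s (a * f.eval₂ ι y ^ n)) :
    IsSpecial f ι y s a := by
  obtain ⟨k, m, g, hg, hgf, hev⟩ := h
  exact ⟨n + k, m, g, hg, hgf, by rw [pow_add, ← mul_assoc, hev]⟩

theorem of_pow {m : ℕ} : IsSpecial f ι y (s ^ m) a → IsSpecial f ι y s a := by
  rintro ⟨k, n, g, ⟨hdeg, i, hi⟩, ⟨j, p, hp⟩, hev⟩
  rw [← pow_mul] at hi hp
  exact ⟨k, n, g, ⟨hdeg, _, hi⟩, ⟨_, p, hp⟩, hev⟩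

theorem unit_mul {c : S} (hc : IsUnit c) (h : IsSpecial f ι y s a) :
    IsSpecial f ι y s (ι c * a) := by
  obtain ⟨k, m, g, hg, hgf, hev⟩ := h
  refine ⟨k, 0 + m, Polynomial.C c * g, (IsMonicAway.C (i := 0) ?_).mul hg, hgf.C_mul hc, ?_⟩
  · rw [pow_zero]
    exact hc.dvd
  · rw [Polynomial.eval₂_mul, Polynomial.eval₂_C, mul_assoc, hev]

end IsSpecial

/-- The polynomial `t f ^ N + (X f² + 1) ^ N`. It is monic and congruent to `1` modulo `f`, and it
takes the value `(t + z ^ N) f(y) ^ N` at `y`, where `z = y f(y) + f(y)⁻¹`. -/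
def shiftPoly (f : S[X]) (N : ℕ) (t : S) : S[X] :=
  Polynomial.C t * f ^ N + (Polynomial.X * f ^ 2 + 1) ^ N

theorem isMonicAway_shiftPoly {f : S[X]} {δ : ℕ} (hf : IsMonicAway s δ f) {N : ℕ} (hN : N ≠ 0)
    (t : S) : IsMonicAway s (N * (1 + 2 * δ)) (shiftPoly f N t) := by
  have hX : IsMonicAway s (1 + 2 * δ) (Polynomial.X * f ^ 2 + 1) := by
    refine (IsMonicAway.X.mul (hf.pow 2)).add_of_natDegree_lt ?_
    rw [Polynomial.natDegree_one]
    exact Nat.add_pos_left one_pos _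
  have hlt : N * δ < N * (1 + 2 * δ) := (Nat.mul_lt_mul_left (by omega)).2 (by omega)
  have hdeg : (Polynomial.C t * f ^ N).natDegree ≤ N * δ :=
    (Polynomial.natDegree_C_mul_le _ _).trans (Polynomial.natDegree_pow_le_of_le N hf.1)
  rw [shiftPoly, add_comm (_ * _)]
  exact (hX.pow N).add_of_natDegree_lt (hdeg.trans_lt hlt)

theorem dvd_shiftPoly_sub_one (f : S[X]) {N : ℕ} (hN : N ≠ 0) (t : S) :
    f ∣ shiftPoly f N t - 1 := by
  have h : f ∣ (Polynomial.X * f ^ 2 + 1) ^ N - 1 ^ N :=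
    dvd_trans ⟨Polynomial.X * f, by ring⟩ (sub_dvd_pow_sub_pow _ _ N)
  rw [one_pow] at h
  rw [shiftPoly, add_sub_assoc]
  exact dvd_add ((dvd_pow_self f hN).mul_left _) h

variable {A : Type*} [CommRing A] {ι : S →+* A} {y : A}

theorem eval₂_shiftPoly {f : S[X]} {z : A} (hz : z * f.eval₂ ι y = y * f.eval₂ ι y ^ 2 + 1) (N : ℕ)
    (t : S) : (shiftPoly f N t).eval₂ ι y = (ι t + z ^ N) * f.eval₂ ι y ^ N := by
  simp only [shiftPoly, Polynomial.eval₂_add, Polynomial.eval₂_mul, Polynomial.eval₂_pow,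
    Polynomial.eval₂_C, Polynomial.eval₂_X, Polynomial.eval₂_one]
  rw [← hz, mul_pow, add_mul]

/-- Horner's scheme for `F(x)`, keeping track of the leading coefficient and of the residue
modulo `q`. -/
theorem exists_eval_mul_pow_eq_eval₂ {f q W g : S[X]} {x : A} {δ ω N k n : ℕ}
    (hf : f.natDegree ≤ δ) (hN : N * δ ≤ ω) (hW : IsMonicAway s ω W) (hqW : q ∣ W - 1)
    (hx : x * f.eval₂ ι y ^ N = W.eval₂ ι y) (hg : IsMonicAway s n g) (e : ℕ) {F : A[X]}
    (hF : F.natDegree ≤ e) (hlead : F.coeff e * f.eval₂ ι y ^ k = g.eval₂ ι y)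
    (hcoeff : ∀ l < e, ∃ h : S[X], F.coeff l * f.eval₂ ι y ^ (k + N) = h.eval₂ ι y ∧
      h.natDegree < ω ∧ q ∣ h) :
    ∃ G : S[X], IsMonicAway s (n + e * ω) G ∧ q ∣ G - g ∧
      F.eval x * f.eval₂ ι y ^ (k + e * N) = G.eval₂ ι y := by
  induction e generalizing F with
  | zero =>
    refine ⟨g, by simpa using hg, by simp, ?_⟩
    rw [Polynomial.eq_C_of_natDegree_le_zero hF, Polynomial.eval_C, zero_mul, add_zero, hlead]
  | succ e ih =>
    obtain ⟨G, hG, hqG, hev⟩ := ih (F := F.divX)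
      (by rw [Polynomial.natDegree_divX_eq_natDegree_tsub_one]; omega)
      (by rw [Polynomial.coeff_divX, hlead])
      (fun l hl => by simpa only [Polynomial.coeff_divX] using hcoeff (l + 1) (by omega))
    obtain ⟨h, hh, hhω, hqh⟩ := hcoeff 0 (by omega)
    refine ⟨G * W + h * f ^ (e * N), ?_, ?_, ?_⟩
    · rw [add_mul, one_mul, ← add_assoc]
      refine (hG.mul hW).add_of_natDegree_lt ?_
      have hdeg : (h * f ^ (e * N)).natDegree ≤ h.natDegree + e * N * δ :=
        Polynomial.natDegree_mul_le_of_le le_rfl (Polynomial.natDegree_pow_le_of_le _ hf)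
      have : e * N * δ ≤ e * ω := by rw [mul_assoc]; gcongr
      omega
    · have : G * W + h * f ^ (e * N) - g = G * (W - 1) + (G - g) + h * f ^ (e * N) := by ring
      rw [this]
      exact dvd_add (dvd_add (hqW.mul_left _) hqG) (hqh.mul_right _)
    · conv_lhs => rw [← Polynomial.divX_mul_X_add F]
      simp only [Polynomial.eval_add, Polynomial.eval_mul, Polynomial.eval_X, Polynomial.eval_C,
        Polynomial.eval₂_add, Polynomial.eval₂_mul, Polynomial.eval₂_pow]
      rw [← hev, ← hx, ← hh]
      ring

end

section

variable {S S' D A : Type*} [CommRing S] [CommRing S'] [CommRing D] [CommRing A] {i : S →+* D}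
  {f : S[X]} {y : D} {s : S} {δ : ℕ}

theorem eval₂_map_of_comp_eq {κ : S →+* S'} {ι : S' →+* A} {j : D →+* A}
    (hι : ι.comp κ = j.comp i) (r : S[X]) : (r.map κ).eval₂ ι (j y) = j (r.eval₂ i y) := by
  rw [Polynomial.eval₂_map, hι, Polynomial.hom_eval₂]

namespace IsAdjoinAway

theorem exists_mul_eq (H : IsAdjoinAway i f y) :
    ∃ z, z * f.eval₂ i y = y * f.eval₂ i y ^ 2 + 1 := by
  obtain ⟨v, hv⟩ := H.isUnit.exists_right_inv
  exact ⟨(y * f.eval₂ i y ^ 2 + 1) * v, by rw [mul_assoc, mul_comm v, hv, mul_one]⟩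

theorem exists_coeff_mul_pow_eq (H : IsAdjoinAway i f y) (F : D[X]) :
    ∃ K d : ℕ, ∀ l, ∃ h : S[X], F.coeff l * f.eval₂ i y ^ K = h.eval₂ i y ∧ h.natDegree ≤ d := by
  obtain ⟨K, h, hh⟩ := H.exists_mul_pow_eq fun l : Fin (F.natDegree + 1) => F.coeff l
  refine ⟨K, Finset.univ.sup fun l => (h l).natDegree, fun l => ?_⟩
  by_cases hl : l < F.natDegree + 1
  · exact ⟨h ⟨l, hl⟩, hh ⟨l, hl⟩, Finset.le_sup (f := fun l => (h l).natDegree) (Finset.mem_univ _)⟩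
  · refine ⟨0, ?_, by simp⟩
    rw [Polynomial.coeff_eq_zero_of_natDegree_lt (by omega), zero_mul, Polynomial.eval₂_zero]

theorem eventually_coeff_mul_pow_eq (H : IsAdjoinAway i f y) (hf : f.natDegree ≤ δ) (F : D[X])
    (k : ℕ) : ∀ᶠ N in Filter.atTop, ∀ l, ∃ h : S[X],
      F.coeff l * f.eval₂ i y ^ (k + N) = h.eval₂ i y ∧ h.natDegree < N * (1 + 2 * δ) ∧ f ∣ h := by
  obtain ⟨K, d, hK⟩ := H.exists_coeff_mul_pow_eq F
  filter_upwards [Filter.eventually_gt_atTop (K + d + k * δ)] with N hN l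
  obtain ⟨h, hh, hd⟩ := hK l
  refine ⟨h * f ^ (k + N - K), ?_, ?_, (dvd_pow_self f (by omega)).mul_left h⟩
  · rw [Polynomial.eval₂_mul, Polynomial.eval₂_pow, ← hh, mul_assoc, ← pow_add]
    congr 2
    omega
  · have hdeg : (h * f ^ (k + N - K)).natDegree ≤ d + (k + N - K) * δ :=
      Polynomial.natDegree_mul_le_of_le hd (Polynomial.natDegree_pow_le_of_le _ hf)
    have hle : (k + N - K) * δ ≤ (k + N) * δ := Nat.mul_le_mul_right δ (by omega)
    nlinarith

end IsAdjoinAway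

namespace IsSpecial

variable {F : D[X]} {e : ℕ}

theorem eventually_eval₂_add_pow (H : IsAdjoinAway i f y) (hf : IsMonicAway s δ f) {z : D}
    (hz : z * f.eval₂ i y = y * f.eval₂ i y ^ 2 + 1) (hF : F.natDegree ≤ e)
    (hlead : IsSpecial f i y s (F.coeff e)) (j : D →+* A) (κ : S →+* S') :
    ∀ᶠ N in Filter.atTop, ∀ (ι : S' →+* A) (t : S'), ι.comp κ = j.comp i →
      IsSpecial (f.map κ) ι (j y) (κ s) (F.eval₂ j (ι t + j z ^ N)) := by
  obtain ⟨k, n, g, hg, hgf, hev⟩ := hlead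
  filter_upwards [Filter.eventually_gt_atTop 0, H.eventually_coeff_mul_pow_eq hf.1 F k]
    with N hN hcoeff ι t hι
  have hf' := hf.map κ
  have hval (r : S[X]) := eval₂_map_of_comp_eq (y := y) hι r
  have hz' : j z * (f.map κ).eval₂ ι (j y) = j y * (f.map κ).eval₂ ι (j y) ^ 2 + 1 := by
    simpa [hval] using congrArg j hz
  obtain ⟨G, hG, hGg, hGev⟩ := exists_eval_mul_pow_eq_eval₂ (N := N) (k := k) (F := F.map j) hf'.1
    (Nat.mul_le_mul_left N (by omega)) (isMonicAway_shiftPoly hf' hN.ne' t)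
    (dvd_shiftPoly_sub_one _ hN.ne' t) (eval₂_shiftPoly hz' N t).symm (hg.map κ) e
    (Polynomial.natDegree_map_le.trans hF)
    (by rw [Polynomial.coeff_map, hval, hval, ← map_pow, ← map_mul, hev])
    (fun l _ => by
      obtain ⟨h, hh, hdeg, hdvd⟩ := hcoeff l
      refine ⟨h.map κ, ?_, Polynomial.natDegree_map_le.trans_lt hdeg, Polynomial.map_dvd κ hdvd⟩
      rw [Polynomial.coeff_map, hval, hval, ← map_pow, ← map_mul, hh])
  rw [Polynomial.eval_map] at hGev
  exact ⟨_, _, G, hG, (hgf.map κ).congr hGg, hGev⟩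

theorem exists_add_mul (H : IsAdjoinAway i f y) (hf : IsMonicAway s δ f) (a : D) :
    ∃ b, IsSpecial f i y s (a + i s * b) := by
  obtain ⟨z, hz⟩ := H.exists_mul_eq
  have hlead : IsSpecial f i y s
      ((Polynomial.C (i s) * Polynomial.X + Polynomial.C a).coeff 1) := by
    simpa using map_self f i y s
  obtain ⟨N, hN⟩ := (eventually_eval₂_add_pow H hf hz Polynomial.natDegree_linear_le hlead
    (RingHom.id D) (RingHom.id S)).exists
  refine ⟨z ^ N, ?_⟩
  simpa [add_comm] using hN i 0 rfl

theorem eval_mul_pow {ι : S →+* A} {y : A} {F : A[X]} {g g₀ : S[X]} {t : S} {N K k k₀ n d : ℕ}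
    (hf : IsMonicAway s δ f) (hδ : 1 ≤ δ) (hF : F.natDegree ≤ e + 1) (hg : IsMonicAway s n g)
    (hlead : F.coeff (e + 1) * f.eval₂ ι y ^ k = g.eval₂ ι y) (hg₀ : IsUnitModAway s f g₀)
    (hconst : F.coeff 0 * f.eval₂ ι y ^ k₀ = g₀.eval₂ ι y)
    (hcoeff : ∀ l, ∃ h : S[X], F.coeff l * f.eval₂ ι y ^ K = h.eval₂ ι y ∧ h.natDegree ≤ d)
    (hN : k + K + d + g₀.natDegree < N) (ht : IsUnit t) :
    IsSpecial f ι y s (F.eval (ι t * f.eval₂ ι y ^ N)) := by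
  have hCt : IsMonicAway s 0 (Polynomial.C t) := .C (i := 0) (by simpa using ht.dvd)
  have hNδ : N ≤ N * δ := Nat.le_mul_of_pos_right N hδ
  have hx : ι t * f.eval₂ ι y ^ N * f.eval₂ ι y ^ 0 = (Polynomial.C t * f ^ N).eval₂ ι y := by
    simp [Polynomial.eval₂_mul, Polynomial.eval₂_pow]
  obtain ⟨G, hG, -, hGev⟩ := exists_eval_mul_pow_eq_eval₂ (N := 0) (k := k + K) (F := F.divX)
    hf.1 (by omega) (hCt.mul (hf.pow N)) (one_dvd _) hx (hg.mul (hf.pow K)) e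
    (by rw [Polynomial.natDegree_divX_eq_natDegree_tsub_one]; omega)
    (by
      rw [Polynomial.coeff_divX, Polynomial.eval₂_mul, Polynomial.eval₂_pow, ← hlead]
      ring)
    (fun l _ => by
      obtain ⟨h, hh, hd⟩ := hcoeff (l + 1)
      have hdeg : (h * f ^ k).natDegree ≤ d + k * δ :=
        Polynomial.natDegree_mul_le_of_le hd (Polynomial.natDegree_pow_le_of_le _ hf.1)
      refine ⟨h * f ^ k, ?_, hdeg.trans_lt (by nlinarith), one_dvd _⟩
      rw [Polynomial.coeff_divX, Polynomial.eval₂_mul, Polynomial.eval₂_pow, ← hh]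
      ring)
  obtain ⟨c, rfl⟩ : ∃ c, N = k + K + c := ⟨N - (k + K), by omega⟩
  have hcδ : k₀ + c ≤ (k₀ + c) * δ := Nat.le_mul_of_pos_right _ hδ
  refine ⟨k₀, _, Polynomial.C t * f ^ (k₀ + c) * G + g₀,
    ((hCt.mul (hf.pow (k₀ + c))).mul hG).add_of_natDegree_lt (by omega), hg₀.congr ?_, ?_⟩
  · rw [add_sub_cancel_right]
    exact ((dvd_pow_self f (by omega)).mul_left _).mul_right _
  · conv_lhs => rw [← Polynomial.divX_mul_X_add F]
    simp only [Polynomial.eval_add, Polynomial.eval_mul, Polynomial.eval_X, Polynomial.eval_C,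
      Polynomial.eval₂_add, Polynomial.eval₂_mul, Polynomial.eval₂_pow, Polynomial.eval₂_C]
    rw [← hGev, ← hconst]
    ring

theorem eventually_eval₂_mul_pow (H : IsAdjoinAway i f y) (hf : IsMonicAway s δ f) (hδ : 1 ≤ δ)
    (hF : F.natDegree ≤ e + 1) (hlead : IsSpecial f i y s (F.coeff (e + 1)))
    (hconst : IsSpecial f i y s (F.coeff 0)) (j : D →+* A) (κ : S →+* S') :
    ∀ᶠ N in Filter.atTop, ∀ (ι : S' →+* A) (t : S'), IsUnit t → ι.comp κ = j.comp i →
      IsSpecial (f.map κ) ι (j y) (κ s) (F.eval₂ j (ι t * j (f.eval₂ i y ^ N))) := by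
  obtain ⟨k, n, g, hg, -, hev⟩ := hlead
  obtain ⟨k₀, -, g₀, -, hg₀f, hev₀⟩ := hconst
  obtain ⟨K, d, hK⟩ := H.exists_coeff_mul_pow_eq F
  filter_upwards [Filter.eventually_gt_atTop (k + K + d + g₀.natDegree)] with N hN ι t ht hι
  have hval (r : S[X]) := eval₂_map_of_comp_eq (y := y) hι r
  have hcoeff {a : D} {k : ℕ} {r : S[X]} (h : a * f.eval₂ i y ^ k = r.eval₂ i y) :
      j a * (f.map κ).eval₂ ι (j y) ^ k = (r.map κ).eval₂ ι (j y) := by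
    rw [hval, hval, ← map_pow, ← map_mul, h]
  rw [map_pow, ← hval f, ← Polynomial.eval_map]
  refine eval_mul_pow (hf.map κ) hδ (Polynomial.natDegree_map_le.trans hF) (hg.map κ)
    (by rw [Polynomial.coeff_map, hcoeff hev]) (hg₀f.map κ)
    (by rw [Polynomial.coeff_map, hcoeff hev₀]) (K := K) (d := d) (fun l => ?_)
    (by have := Polynomial.natDegree_map_le (f := κ) (p := g₀); omega) ht
  obtain ⟨h, hh, hd⟩ := hK l
  exact ⟨h.map κ, by rw [Polynomial.coeff_map, hcoeff hh], Polynomial.natDegree_map_le.trans hd⟩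

end IsSpecial

end

/-! ### Noether normalization -/

namespace IsAdjoinAway

variable {R S D A : Type u} [CommRing R] [CommRing S] [CommRing D] [CommRing A] [Algebra R S]
  [Algebra R D] [Algebra R A] {f : R[X]} {i : S →ₐ[R] D} {y : D} {j : D →ₐ[R] A} {x : A}

theorem exists_swap (hy : IsAdjoinAway i.toRingHom (f.map (algebraMap R S)) y) {h : D[X]}
    (hx : IsAdjoinAway j.toRingHom h x) (h' : S[X]) :
    ∃ (S' : Type u) (_ : CommRing S') (_ : Algebra R S') (κ : S →ₐ[R] S') (t : S'),
      IsUnit (h'.eval₂ κ.toRingHom t) ∧ ∀ e, IsUnit (h'.eval₂ (j.comp i).toRingHom e) →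
        (h = 1 ∧ (∃ w, x = e + j w) ∨
          h = Polynomial.X ∧ h' = Polynomial.X ∧ ∃ w, IsUnit w ∧ x = e * j w) →
        ∃ ι : S' →ₐ[R] A, ι.toRingHom.comp κ.toRingHom = j.toRingHom.comp i.toRingHom ∧
          IsAdjoinAway ι.toRingHom (f.map (algebraMap R S')) (j y) ∧ ι t = e := by
  obtain ⟨S', _, κ, t, ht⟩ := exists_ringHom h'
  let _ : Algebra R S' := (κ.comp (algebraMap R S)).toAlgebra
  refine ⟨S', inferInstance, inferInstance, ⟨κ, fun _ => rfl⟩, t, ht.isUnit, fun e he hcase => ?_⟩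
  obtain ⟨ι, hι, rfl⟩ := ht.exists_lift _ he
  have hιR (r : R) : ι (algebraMap R S' r) = algebraMap R A r :=
    (RingHom.congr_fun hι (algebraMap R S r)).trans ((j.comp i).commutes r)
  have hy' := hy.comm hx ht hι hcase
  rw [Polynomial.map_map] at hy'
  exact ⟨⟨ι, hιR⟩, hι, hy', rfl⟩

theorem exists_swap_polynomial (hy : IsAdjoinAway i.toRingHom (f.map (algebraMap R S)) y)
    (hx : IsAdjoinAway j.toRingHom 1 x) :
    ∃ (S' : Type u) (_ : CommRing S') (_ : Algebra R S') (κ : S →ₐ[R] S') (t : S'), ∀ w : D,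
      ∃ ι : S' →ₐ[R] A, ι.toRingHom.comp κ.toRingHom = j.toRingHom.comp i.toRingHom ∧
        IsAdjoinAway ι.toRingHom (f.map (algebraMap R S')) (j y) ∧ x = ι t + j w := by
  obtain ⟨S', _, _, κ, t, -, H⟩ := hy.exists_swap hx 1
  refine ⟨S', inferInstance, inferInstance, κ, t, fun w => ?_⟩
  obtain ⟨ι, hι, hy', ht⟩ := H (x - j w) (by simp) (.inl ⟨rfl, w, by simp⟩)
  exact ⟨ι, hι, hy', by simp [ht]⟩

theorem exists_swap_laurent (hy : IsAdjoinAway i.toRingHom (f.map (algebraMap R S)) y)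
    (hx : IsAdjoinAway j.toRingHom Polynomial.X x) :
    ∃ (S' : Type u) (_ : CommRing S') (_ : Algebra R S') (κ : S →ₐ[R] S') (t : S'), IsUnit t ∧
      ∀ w : D, IsUnit w →
        ∃ ι : S' →ₐ[R] A, ι.toRingHom.comp κ.toRingHom = j.toRingHom.comp i.toRingHom ∧
          IsAdjoinAway ι.toRingHom (f.map (algebraMap R S')) (j y) ∧ x = ι t * j w := by
  obtain ⟨S', _, _, κ, t, ht, H⟩ := hy.exists_swap hx Polynomial.X
  rw [Polynomial.eval₂_X] at ht
  refine ⟨S', inferInstance, inferInstance, κ, t, ht, fun w hw => ?_⟩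
  obtain ⟨w', hw'⟩ := (hw.map j).exists_right_inv
  have hx' : x = x * w' * j w := by rw [mul_assoc, mul_comm w', hw', mul_one]
  have hxu : IsUnit x := by simpa using hx.isUnit
  obtain ⟨ι, hι, hy', ht⟩ := H (x * w')
    (by simpa using ⟨hxu, IsUnit.of_mul_eq_one _ ((mul_comm _ _).trans hw')⟩)
    (.inr ⟨rfl, rfl, w, hw, hx'⟩)
  exact ⟨ι, hι, hy', by rw [ht, ← hx']⟩

theorem le_height_leadingCoeff_comap [IsNoetherianRing D] {j : D →+* A} {h : D[X]}
    (hx : IsAdjoinAway j h x) {I : Ideal A} {n : ℕ∞} (hn : n ≤ I.height) :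
    n ≤ (I.comap (Polynomial.eval₂RingHom j x)).leadingCoeff.height := by
  let _ := (Polynomial.eval₂RingHom j x).toAlgebra
  have : IsLocalization.Away h A := hx
  refine le_trans ?_ (height_le_height_leadingCoeff _)
  exact hn.trans (IsLocalization.height_under (Submonoid.powers h) I).ge

end IsAdjoinAway

/-- Every `a` can be moved modulo `s` to an element that, for every ideal of height greater than
`d`, is special over `s` in a presentation `A = S[Y]_f` in which the ideal contains an element that
is special over `1`. -/
def HasSpecialPresentations (R : Type u) [CommRing R] (f : R[X]) (d : ℕ) (A : Type u) [CommRing A]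
    [Algebra R A] : Prop :=
  ∀ (a : A) (s : R), ∃ b, ∀ I : Ideal A, (d + 1 : ℕ) ≤ I.height →
    ∃ (S : Type u) (_ : CommRing S) (_ : Algebra R S) (ι : S →ₐ[R] A) (y : A),
      IsAdjoinAway ι.toRingHom (f.map (algebraMap R S)) y ∧
      (∃ F ∈ I, IsSpecial (f.map (algebraMap R S)) ι.toRingHom y 1 F) ∧
      IsSpecial (f.map (algebraMap R S)) ι.toRingHom y (algebraMap R S s) (a + algebraMap R A s * b)

section

variable {R : Type u} [CommRing R] {f : R[X]} {d : ℕ}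

theorem isMonicAway_map_of_monic {S : Type*} [CommRing S] [Algebra R S] (hf : f.Monic) (s : S) :
    IsMonicAway s f.natDegree (f.map (algebraMap R S)) := by
  refine ⟨Polynomial.natDegree_map_le, 0, ?_⟩
  rw [Polynomial.coeff_map, hf.coeff_natDegree, map_one, pow_zero]

theorem isSpecial_algebraMap {S D : Type*} [CommRing S] [CommRing D] [Algebra R S] [Algebra R D]
    (g : S[X]) (i : S →ₐ[R] D) (y : D) (s : R) :
    IsSpecial g i.toRingHom y (algebraMap R S s) (algebraMap R D s) := by
  rw [← i.commutes]
  exact .map_self g _ y _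

theorem map_map_algHom {S S' : Type*} [CommRing S] [CommRing S'] [Algebra R S] [Algebra R S']
    (κ : S →ₐ[R] S') (f : R[X]) :
    (f.map (algebraMap R S)).map κ.toRingHom = f.map (algebraMap R S') := by
  rw [Polynomial.map_map]
  exact congrArg (f.map ·) κ.comp_algebraMap

theorem IsSpecial.of_mul_unit_mul_pow {S A : Type*} [CommRing S] [CommRing A] {f : S[X]}
    {ι : S →+* A} {y a x : A} {s t : S} {N n : ℕ} (ht : IsUnit t)
    (hx : x = ι t * f.eval₂ ι y ^ N) (h : IsSpecial f ι y s (a * x ^ n)) :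
    IsSpecial f ι y s a := by
  obtain ⟨t', ht'⟩ := ht.exists_right_inv
  refine of_mul_pow (n := N * n) ?_
  convert h.unit_mul (.of_mul_eq_one_right (t ^ n) ?_ : IsUnit (t' ^ n)) using 1
  · rw [hx, mul_pow, ← pow_mul, mul_left_comm, ← mul_assoc (ι _), ← map_pow, ← map_mul, ← mul_pow,
      mul_comm t', ht', one_pow, map_one, one_mul]
  · rw [← mul_pow, ht', one_pow]

section

variable {S D A : Type u} [CommRing S] [CommRing D] [CommRing A] [Algebra R S] [Algebra R D]
  [Algebra R A] {i : S →ₐ[R] D} {y : D} {j : D →ₐ[R] A} {x : A} {r s : R} {F G : D[X]} {m n : ℕ}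

theorem exists_isSpecial_eval₂_polynomial (hf : f.Monic)
    (hy : IsAdjoinAway i.toRingHom (f.map (algebraMap R S)) y) (hx : IsAdjoinAway j.toRingHom 1 x)
    (hF : F.natDegree ≤ m) (hG : G.natDegree ≤ n)
    (hFm : IsSpecial (f.map (algebraMap R S)) i.toRingHom y (algebraMap R S r) (F.coeff m))
    (hGn : IsSpecial (f.map (algebraMap R S)) i.toRingHom y (algebraMap R S s) (G.coeff n)) :
    ∃ (S' : Type u) (_ : CommRing S') (_ : Algebra R S') (ι : S' →ₐ[R] A),
      IsAdjoinAway ι.toRingHom (f.map (algebraMap R S')) (j y) ∧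
      IsSpecial (f.map (algebraMap R S')) ι.toRingHom (j y) (algebraMap R S' r)
        (F.eval₂ j.toRingHom x) ∧
      IsSpecial (f.map (algebraMap R S')) ι.toRingHom (j y) (algebraMap R S' s)
        (G.eval₂ j.toRingHom x) := by
  obtain ⟨z, hz⟩ := hy.exists_mul_eq
  obtain ⟨S', _, _, κ, t, hswap⟩ := hy.exists_swap_polynomial hx
  have key {r : R} {F : D[X]} {m : ℕ} := IsSpecial.eventually_eval₂_add_pow (F := F) (e := m) hy
    (isMonicAway_map_of_monic hf (algebraMap R S r)) hz (j := j.toRingHom) (κ := κ.toRingHom)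
  obtain ⟨N, hFN, hGN⟩ := ((key hF hFm).and (key hG hGn)).exists
  obtain ⟨ι, hι, hy', rfl⟩ := hswap (z ^ N)
  refine ⟨S', inferInstance, inferInstance, ι, hy', ?_⟩
  rw [← map_map_algHom κ, ← κ.commutes, ← κ.commutes, map_pow]
  exact ⟨hFN _ t hι, hGN _ t hι⟩

theorem exists_isSpecial_eval₂_laurent (hf : f.Monic) (hδ : 1 ≤ f.natDegree)
    (hy : IsAdjoinAway i.toRingHom (f.map (algebraMap R S)) y)
    (hx : IsAdjoinAway j.toRingHom Polynomial.X x)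
    (hF : F.natDegree ≤ m + 1) (hG : G.natDegree ≤ n + 1)
    (hFm : IsSpecial (f.map (algebraMap R S)) i.toRingHom y (algebraMap R S r) (F.coeff (m + 1)))
    (hF₀ : IsSpecial (f.map (algebraMap R S)) i.toRingHom y (algebraMap R S r) (F.coeff 0))
    (hGn : IsSpecial (f.map (algebraMap R S)) i.toRingHom y (algebraMap R S s) (G.coeff (n + 1)))
    (hG₀ : IsSpecial (f.map (algebraMap R S)) i.toRingHom y (algebraMap R S s) (G.coeff 0)) :
    ∃ (S' : Type u) (_ : CommRing S') (_ : Algebra R S') (ι : S' →ₐ[R] A),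
      IsAdjoinAway ι.toRingHom (f.map (algebraMap R S')) (j y) ∧
      IsSpecial (f.map (algebraMap R S')) ι.toRingHom (j y) (algebraMap R S' r)
        (F.eval₂ j.toRingHom x) ∧
      IsSpecial (f.map (algebraMap R S')) ι.toRingHom (j y) (algebraMap R S' s)
        (G.eval₂ j.toRingHom x) ∧
      ∃ (t : S') (N : ℕ), IsUnit t ∧
        x = ι.toRingHom t * (f.map (algebraMap R S')).eval₂ ι.toRingHom (j y) ^ N := by
  obtain ⟨S', _, _, κ, t, ht, hswap⟩ := hy.exists_swap_laurent hx
  have key {r : R} {F : D[X]} {m : ℕ} := IsSpecial.eventually_eval₂_mul_pow (F := F) (e := m) hy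
    (isMonicAway_map_of_monic hf (algebraMap R S r)) hδ (j := j.toRingHom) (κ := κ.toRingHom)
  obtain ⟨N, hFN, hGN⟩ := ((key hF hFm hF₀).and (key hG hGn hG₀)).exists
  obtain ⟨ι, hι, hy', rfl⟩ := hswap _ (hy.isUnit.pow N)
  refine ⟨S', inferInstance, inferInstance, ι, hy', ?_⟩
  rw [← map_map_algHom κ, ← κ.commutes, ← κ.commutes]
  refine ⟨hFN _ t ht hι, hGN _ t ht hι, t, N, ht, ?_⟩
  rw [map_pow]
  exact congrArg (ι t * · ^ N) (eval₂_map_of_comp_eq hι _).symm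

end

theorem le_height_inf {D : Type*} [CommRing D] {I J : Ideal D} {n : ℕ∞} (hI : n ≤ I.height)
    (hJ : n ≤ J.height) : n ≤ (I ⊓ J).height := by
  rw [(I ⊓ J).height_eq_inf_minimalPrimes]
  refine le_iInf₂ fun p hp => ?_
  rcases (Ideal.IsPrime.inf_le hp.1.1).1 hp.1.2 with h | h
  · exact hI.trans (Ideal.height_mono h)
  · exact hJ.trans (Ideal.height_mono h)

theorem exists_mem_coeff_eq_leadingCoeff {D A : Type*} [CommRing D] [CommRing A] {j : D →+* A}
    {x x' : A} (hx : x * x' = 1) {I : Ideal A} {F₁ F₂ : D[X]} (h₁ : F₁.eval₂ j x ∈ I)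
    (h₂ : F₂.eval₂ j x' ∈ I) :
    ∃ (F : D[X]) (e : ℕ), F.natDegree ≤ e + 1 ∧ F.coeff (e + 1) = F₁.leadingCoeff ∧
      F.coeff 0 = F₂.leadingCoeff ∧ F.eval₂ j x ∈ I := by
  set c := F₂.natDegree + 1
  have hrev : F₂.reverse.natDegree < c :=
    Nat.lt_succ_of_le (Polynomial.reverse_natDegree_le _)
  refine ⟨F₁ * Polynomial.X ^ c + F₂.reverse, F₁.natDegree + F₂.natDegree, ?_, ?_, ?_, ?_⟩
  · refine Polynomial.natDegree_add_le_of_degree_le ?_ (by omega)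
    exact Polynomial.natDegree_mul_le_of_le (n := c) le_rfl (Polynomial.natDegree_X_pow_le c)
  · rw [Polynomial.coeff_add, Polynomial.coeff_eq_zero_of_natDegree_lt (p := F₂.reverse) (by omega),
      add_zero, add_assoc, Polynomial.coeff_mul_X_pow, Polynomial.leadingCoeff]
  · rw [Polynomial.coeff_add, Polynomial.coeff_mul_X_pow', if_neg (by omega), zero_add,
      Polynomial.coeff_zero_reverse]
  · rw [Polynomial.eval₂_add, Polynomial.eval₂_mul]
    refine I.add_mem (I.mul_mem_right _ h₁) ?_
    let _ : Invertible x := ⟨x', (mul_comm _ _).trans hx, hx⟩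
    let _ : Invertible x' := ⟨x, hx, (mul_comm _ _).trans hx⟩
    have hev : F₂.reverse.eval₂ j x * x' ^ F₂.natDegree = F₂.eval₂ j x' :=
      Polynomial.eval₂_reverse_mul_pow j x' F₂
    have hmem := I.mul_mem_right (x ^ F₂.natDegree) (hev ▸ h₂)
    rwa [mul_assoc, ← mul_pow, mul_comm x', hx, one_pow, mul_one] at hmem

theorem exists_coeff_eq_and_eval₂_eq {D A : Type*} [CommRing D] [CommRing A] (j : D →+* A)
    {x x' : A} (hx : x * x' = 1) {a : A} {n M : ℕ} {Fa : D[X]} (ha : a * x ^ n = Fa.eval₂ j x)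
    (hM : Fa.natDegree + n < M) (s : D) :
    ∃ (G : D[X]) (e : ℕ), G.natDegree ≤ e + 1 ∧ G.coeff (e + 1) = s ∧ G.coeff 0 = s ∧
      G.eval₂ j x = (a + j s * (x ^ M + x' ^ M)) * x ^ M := by
  have hdeg : (Fa * Polynomial.X ^ (M - n)).natDegree < 2 * M :=
    (Polynomial.natDegree_mul_le_of_le le_rfl (Polynomial.natDegree_X_pow_le _)).trans_lt
      (by omega)
  refine ⟨Fa * Polynomial.X ^ (M - n) + Polynomial.C s * Polynomial.X ^ (2 * M) + Polynomial.C s,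
    2 * M - 1, ?_, ?_, ?_, ?_⟩
  · rw [Polynomial.natDegree_add_C]
    exact Polynomial.natDegree_add_le_of_degree_le (by omega)
      ((Polynomial.natDegree_C_mul_X_pow_le _ _).trans (by omega))
  · rw [show 2 * M - 1 + 1 = 2 * M by omega, Polynomial.coeff_add, Polynomial.coeff_add,
      Polynomial.coeff_eq_zero_of_natDegree_lt hdeg, Polynomial.coeff_C_mul_X_pow, if_pos rfl,
      Polynomial.coeff_C_of_ne_zero (by omega), zero_add, add_zero]
  · rw [Polynomial.coeff_add, Polynomial.coeff_add, Polynomial.coeff_mul_X_pow', if_neg (by omega),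
      Polynomial.coeff_C_mul_X_pow, if_neg (by omega), Polynomial.coeff_C_zero, zero_add, zero_add]
  · have hx' : x' ^ M * x ^ M = 1 := by rw [← mul_pow, mul_comm, hx, one_pow]
    have hM' : x ^ n * x ^ (M - n) = x ^ M := by rw [← pow_add, Nat.add_sub_cancel' (by omega)]
    simp only [Polynomial.eval₂_add, Polynomial.eval₂_mul, Polynomial.eval₂_C,
      Polynomial.eval₂_X_pow]
    rw [← ha, mul_assoc a, hM']
    linear_combination -j s * hx'

namespace HasSpecialPresentations

theorem of_isAdjoinAway [IsNoetherianRing R] (hd : ringKrullDim R ≤ d) (hf : f.Monic)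
    {A : Type u} [CommRing A] [Algebra R A] {y : A} (hy : IsAdjoinAway (algebraMap R A) f y) :
    HasSpecialPresentations R f d A := by
  intro a s
  obtain ⟨b, hb⟩ := IsSpecial.exists_add_mul (s := s) hy (.of_monic hf) a
  refine ⟨b, fun I hI => ⟨R, inferInstance, inferInstance, Algebra.ofId R A, y, ?_⟩⟩
  rw [Algebra.algebraMap_self, Polynomial.map_id]
  refine ⟨hy, ?_, hb⟩
  let _ := (Polynomial.eval₂RingHom (algebraMap R A) y).toAlgebra
  have : IsLocalization.Away f A := hy
  obtain ⟨g, hg, hgm, p, q, hpq⟩ := exists_monic_isCoprime_mem_comap hd hf hI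
  refine ⟨_, hg, 0, _, g, .of_monic hgm, ⟨0, p, -q, ?_⟩, by rw [pow_zero, mul_one]; rfl⟩
  rw [pow_zero, Polynomial.C_1]
  linear_combination hpq

variable {D A : Type u} [CommRing D] [CommRing A] [Algebra R D] [Algebra R A] [IsNoetherianRing D]
  {j : D →ₐ[R] A} {x : A}

theorem exists_isSpecial_mem {A : Type u} [CommRing A] [Algebra R A]
    (hA : HasSpecialPresentations R f d A) {I : Ideal A} (hI : (d + 1 : ℕ) ≤ I.height) :
    ∃ (S : Type u) (_ : CommRing S) (_ : Algebra R S) (ι : S →ₐ[R] A) (y : A),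
      IsAdjoinAway ι.toRingHom (f.map (algebraMap R S)) y ∧
      ∃ F ∈ I, IsSpecial (f.map (algebraMap R S)) ι.toRingHom y 1 F := by
  obtain ⟨b, hb⟩ := hA 0 0
  obtain ⟨S, _, _, ι, y, hy, hF, -⟩ := hb I hI
  exact ⟨S, inferInstance, inferInstance, ι, y, hy, hF⟩

theorem of_polynomial (hf : f.Monic) (hD : HasSpecialPresentations R f d D)
    (hx : IsAdjoinAway j.toRingHom 1 x) : HasSpecialPresentations R f d A := by
  intro a s
  obtain ⟨n, p, hp⟩ := hx.exists_mul_pow_eq fun _ : Unit => a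
  obtain ⟨Fa, rfl⟩ : ∃ Fa : D[X], a = Fa.eval₂ j.toRingHom x := ⟨p (), by simpa using hp ()⟩
  set M := Fa.natDegree + 1
  refine ⟨x ^ M, fun I hI => ?_⟩
  obtain ⟨S, _, _, i, y, hy, c, hc, hsp⟩ :=
    hD.exists_isSpecial_mem (hx.le_height_leadingCoeff_comap hI)
  obtain ⟨F, hF, rfl⟩ := (Ideal.mem_leadingCoeff _ _).1 hc
  set G := Fa + Polynomial.C (algebraMap R D s) * Polynomial.X ^ M with hG
  have hlead : G.coeff M = algebraMap R D s := by
    rw [hG, Polynomial.coeff_add, Polynomial.coeff_C_mul_X_pow, if_pos rfl,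
      Polynomial.coeff_eq_zero_of_natDegree_lt (Nat.lt_succ_self _), zero_add]
  obtain ⟨S', _, _, ι, hy', hFS, hGS⟩ := exists_isSpecial_eval₂_polynomial (r := 1) (s := s)
    (G := G) hf hy hx le_rfl
    (Polynomial.natDegree_add_le_of_degree_le (Nat.le_succ _)
      (Polynomial.natDegree_C_mul_X_pow_le _ _))
    ((map_one (algebraMap R S)).symm ▸ hsp) (hlead ▸ isSpecial_algebraMap _ i y s)
  refine ⟨S', inferInstance, inferInstance, ι, j y, hy',
    ⟨_, hF, map_one (algebraMap R S') ▸ hFS⟩, ?_⟩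
  simpa [hG] using hGS

theorem of_laurent (hf : f.Monic) (hδ : 1 ≤ f.natDegree) (hD : HasSpecialPresentations R f d D)
    (hx : IsAdjoinAway j.toRingHom Polynomial.X x) : HasSpecialPresentations R f d A := by
  intro a s
  obtain ⟨x', hx'⟩ := hx.isUnit.exists_right_inv
  rw [Polynomial.eval₂_X] at hx'
  obtain ⟨n, p, hp⟩ := hx.exists_mul_pow_eq fun _ : Unit => a
  replace hp := hp ()
  rw [Polynomial.eval₂_X] at hp
  set M := (p ()).natDegree + n + 1
  refine ⟨x ^ M + x' ^ M, fun I hI => ?_⟩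
  obtain ⟨S, _, _, i, y, hy, c, hc, hsp⟩ := hD.exists_isSpecial_mem
    (le_height_inf (hx.le_height_leadingCoeff_comap hI)
      ((hx.inv hx').le_height_leadingCoeff_comap hI))
  obtain ⟨⟨F₁, hF₁, rfl⟩, F₂, hF₂, hF₂₁⟩ :=
    (Ideal.mem_inf.1 hc).imp (Ideal.mem_leadingCoeff _ _).1 (Ideal.mem_leadingCoeff _ _).1
  obtain ⟨F, m, hFdeg, hFm, hF₀, hFI⟩ := exists_mem_coeff_eq_leadingCoeff hx' hF₁ hF₂
  rw [hF₂₁, ← hFm] at hF₀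
  rw [← map_one (algebraMap R S), ← hFm] at hsp
  obtain ⟨G, e, hGdeg, hGe, hG₀, hGx⟩ := exists_coeff_eq_and_eval₂_eq j.toRingHom hx' hp
    (Nat.lt_succ_self _) (algebraMap R D s)
  have hs := isSpecial_algebraMap (f.map (algebraMap R S)) i y s
  obtain ⟨S', _, _, ι, hy', hFS, hGS, t, N, ht, hxt⟩ := exists_isSpecial_eval₂_laurent
    (G := G) hf hδ hy hx hFdeg hGdeg hsp (hF₀ ▸ hsp) (hGe ▸ hs) (hG₀ ▸ hs)
  refine ⟨S', inferInstance, inferInstance, ι, j y, hy', ⟨_, hFI, map_one (algebraMap R S') ▸ hFS⟩,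
    IsSpecial.of_mul_unit_mul_pow (n := M) ht hxt ?_⟩
  rw [hGx] at hGS
  exact j.commutes s ▸ hGS

theorem of_isLaurentTower [IsNoetherianRing R] (hd : ringKrullDim R ≤ d) (hf : f.Monic)
    {l : List Bool} (hl : true ∈ l → 1 ≤ f.natDegree) {A : Type u} [CommRing A] [Algebra R A]
    (H : IsLaurentTower R f l A) : HasSpecialPresentations R f d A := by
  induction l generalizing A with
  | nil =>
    obtain ⟨y, hy⟩ := H
    exact of_isAdjoinAway hd hf hy
  | cons b l ih =>
    obtain ⟨D, _, _, j, x, HD, hx⟩ := H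
    have := HD.isNoetherianRing
    specialize ih (fun h => hl (List.mem_cons_of_mem _ h)) HD
    cases b with
    | false => exact of_polynomial hf ih hx
    | true => exact of_laurent hf (hl List.mem_cons_self) ih hx

end HasSpecialPresentations

end

/-! ### Raising heights by prime avoidance -/

section

variable {A : Type*} [CommRing A]

theorem exists_forall_mem_iff_notMem {T : Finset (Ideal A)} (hT : ∀ Q ∈ T, Q.IsPrime)
    (hanti : IsAntichain (· ≤ ·) (T : Set (Ideal A))) (a : A) :
    ∃ b, ∀ Q ∈ T, b ∈ Q ↔ a ∉ Q := by
  classical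
  have hne : ¬ (((∏ Q ∈ T with a ∉ Q, Q : Ideal A) : Set A) ⊆
      ⋃ Q ∈ ((T.filter (a ∈ ·) : Finset (Ideal A)) : Set (Ideal A)), (Q : Set A)) := by
    rw [Ideal.subset_union_prime ⊥ ⊥ fun Q hQ _ _ => hT Q (Finset.mem_filter.1 hQ).1]
    rintro ⟨Q, hQ, hle⟩
    obtain ⟨hQT, haQ⟩ := Finset.mem_filter.1 hQ
    obtain ⟨Q', hQ', hle'⟩ := (Ideal.IsPrime.prod_le (hT Q hQT)).1 hle
    obtain ⟨hQT', haQ'⟩ := Finset.mem_filter.1 hQ'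
    exact haQ' (hanti.eq hQT' hQT hle' ▸ haQ)
  obtain ⟨b, hb, hb'⟩ := Set.not_subset.1 hne
  refine ⟨b, fun Q hQ => ⟨fun hbQ ha => hb' ?_, fun ha => ?_⟩⟩
  · exact Set.mem_biUnion (Finset.mem_coe.2 (Finset.mem_filter.2 ⟨hQ, ha⟩)) hbQ
  · exact (Ideal.prod_le_inf.trans (Finset.inf_le (f := id) (Finset.mem_filter.2 ⟨hQ, ha⟩))) hb

theorem exists_succ_le_height [IsNoetherianRing A] {c : A} {I : Ideal A} {n : ℕ}
    (hI : ∀ Q : Ideal A, Q.IsPrime → I ≤ Q → c ∉ Q → (n : ℕ∞) ≤ Q.height) (a : A) :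
    ∃ b, ∀ Q : Ideal A, Q.IsPrime → I ≤ Q → a + c * b ∈ Q → c ∉ Q →
      ((n + 1 : ℕ) : ℕ∞) ≤ Q.height := by
  have hfin := Ideal.finite_minimalPrimes_of_isNoetherianRing A I
  obtain ⟨b, hb⟩ := exists_forall_mem_iff_notMem (T := hfin.toFinset)
    (fun Q hQ => (hfin.mem_toFinset.1 hQ).1.1)
    (by rw [hfin.coe_toFinset]; exact setOfPred_minimal_antichain _) a
  refine ⟨b, fun Q hQ hIQ haQ hc => ?_⟩
  obtain ⟨Q', hQ', hle⟩ := Ideal.exists_minimalPrimes_le hIQ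
  have hQ'p := hQ'.1.1
  have hc' : c ∉ Q' := fun h => hc (hle h)
  have hbQ' := hb Q' (hfin.mem_toFinset.2 hQ')
  have haQ' : a + c * b ∉ Q' := by
    by_cases ha : a ∈ Q'
    · rw [Ideal.add_mem_iff_right _ ha]
      exact hQ'p.mul_notMem hc' fun hb => hbQ'.1 hb ha
    · rwa [Ideal.add_mem_iff_left _ (Q'.mul_mem_left _ (hbQ'.2 ha))]
  have hlt : Q' < Q := lt_of_le_of_ne hle fun h => haQ' (h ▸ haQ)
  refine le_trans ?_ (Ideal.height_add_one_le_of_lt_of_isPrime hlt)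
  push_cast
  gcongr
  exact hI Q' hQ'p hQ'.1.2 hc'

theorem exists_add_le_height [IsNoetherianRing A] {c : A} {I : Ideal A} {n m : ℕ}
    (hI : ∀ Q : Ideal A, Q.IsPrime → I ≤ Q → c ∉ Q → (n : ℕ∞) ≤ Q.height) (a : Fin m → A) :
    ∃ b : Fin m → A, ∀ Q : Ideal A, Q.IsPrime → I ≤ Q → (∀ i, a i + c * b i ∈ Q) → c ∉ Q →
      ((n + m : ℕ) : ℕ∞) ≤ Q.height := by
  induction m generalizing n I with
  | zero => exact ⟨0, fun Q hQ hIQ _ hc => hI Q hQ hIQ hc⟩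
  | succ m ih =>
    obtain ⟨b₀, hb₀⟩ := exists_succ_le_height hI (a 0)
    obtain ⟨b, hb⟩ := ih (I := I ⊔ Ideal.span {a 0 + c * b₀}) (n := n + 1)
      (fun Q hQ hIQ hc => hb₀ Q hQ (le_sup_left.trans hIQ)
        (hIQ (Ideal.mem_sup_right (Ideal.mem_span_singleton_self _))) hc) (Fin.tail a)
    refine ⟨Fin.cons b₀ b, fun Q hQ hIQ hmem hc => ?_⟩
    rw [add_comm m, ← add_assoc]
    refine hb Q hQ (sup_le hIQ ?_) (fun i => by simpa [Fin.tail] using hmem i.succ) hc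
    simpa [Ideal.span_singleton_le_iff_mem] using hmem 0

variable {P : Type*} [AddCommGroup P] [Module A P]

theorem orderIdeal_le_orderIdeal_add_smul_sup (c : A) (x z : P) :
    orderIdeal (A := A) x ≤ orderIdeal (x + c • z) ⊔ Ideal.span {c} := by
  rintro _ ⟨φ, rfl⟩
  have h : φ x = φ (x + c • z) - c * φ z := by simp
  rw [Module.Dual.eval_apply, h]
  exact Ideal.sub_mem _ (Ideal.mem_sup_left (apply_mem_orderIdeal φ _))
    (Ideal.mul_mem_right _ _ (Ideal.mem_sup_right (Ideal.mem_span_singleton_self c)))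

theorem exists_lt_height_orderIdeal [IsNoetherianRing A] {c : A} {r : ℕ}
    (b : ScaledBasis c (Fin (r + 1)) P) {x : P}
    (hx : orderIdeal x ⊔ Ideal.span {c} = ⊤) {a : A}
    (ha : ∀ Q : Ideal A, Q.IsPrime → c ∉ Q → b.coords x 0 + c ^ 2 * a ∈ Q → Q.height ≠ 0) :
    ∃ x' : P, b.coords x' 0 = b.coords x 0 + c ^ 2 * a ∧
      orderIdeal x' ⊔ Ideal.span {c} = ⊤ ∧ (r + 1 : ℕ) ≤ (orderIdeal (A := A) x').height := by
  obtain ⟨a', ha'⟩ := exists_add_le_height (c := c ^ 2) (n := 1)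
    (I := Ideal.span {b.coords x 0 + c ^ 2 * a}) (fun Q hQ hle hc => by
      rw [Nat.cast_one, Order.one_le_iff_ne_zero]
      exact ha Q hQ (fun h => hc (Q.pow_mem_of_mem h 2 two_pos))
        (hle (Ideal.mem_span_singleton_self _))) fun i => b.coords x i.succ
  have hcoords (i) : b.coords (x + c • b.lift (Fin.cons a a')) i =
      b.coords x i + c ^ 2 * (Fin.cons a a' : Fin (r + 1) → A) i := by
    simp [b.coords_lift, pow_two, mul_assoc]
  have htop := eq_top_iff.2 (hx.ge.trans
    (sup_le (orderIdeal_le_orderIdeal_add_smul_sup c x (b.lift (Fin.cons a a'))) le_sup_right))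
  refine ⟨_, by simpa using hcoords 0, htop, ?_⟩
  rw [Ideal.height_eq_inf_minimalPrimes]
  refine le_iInf₂ fun Q hQ => ?_
  have := hQ.1.1
  have hmem (i) := hQ.1.2 (apply_mem_orderIdeal (LinearMap.proj i ∘ₗ b.coords) _)
  simp only [LinearMap.comp_apply, LinearMap.proj_apply, hcoords] at hmem
  rw [add_comm r]
  refine ha' Q this ?_ (fun i => by simpa using hmem i.succ) fun hc => ?_
  · simpa [Ideal.span_singleton_le_iff_mem] using hmem 0
  · refine this.ne_top (top_le_iff.1 (htop.ge.trans (sup_le hQ.1.2 ?_)))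
    rw [Ideal.span_singleton_le_iff_mem]
    exact this.mem_of_pow_mem 2 hc

end

/-! ### Unimodular elements from special coordinates -/

section

variable {S : Type*} [CommRing S] {s : S}

theorem IsMonicAway.exists_monic_map_eq {S' : Type*} [CommRing S'] {κ : S →+* S'}
    (hs : IsUnit (κ s)) {n : ℕ} {g : S[X]} (hg : IsMonicAway s n g) :
    ∃ g₀ : S'[X], g₀.Monic ∧ g.map κ = Polynomial.C (κ (g.coeff n)) * g₀ := by
  obtain ⟨hdeg, i, hi⟩ := hg
  obtain ⟨u, hu⟩ := (isUnit_of_dvd_unit (map_dvd κ hi)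
    (by rw [map_pow]; exact hs.pow i)).exists_right_inv
  refine ⟨Polynomial.C u * g.map κ, ?_, ?_⟩
  · refine Polynomial.monic_of_natDegree_le_of_coeff_eq_one n
      ((Polynomial.natDegree_C_mul_le _ _).trans (Polynomial.natDegree_map_le.trans hdeg)) ?_
    rw [Polynomial.coeff_C_mul, Polynomial.coeff_map, mul_comm, hu]
  · rw [← mul_assoc, ← Polynomial.C_mul, hu, Polynomial.C_1, one_mul]

theorem IsMonicAway.isUnit_coeff {n : ℕ} {g : S[X]} (hg : IsMonicAway 1 n g) :
    IsUnit (g.coeff n) := by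
  obtain ⟨-, i, hi⟩ := hg
  exact isUnit_of_dvd_one (one_pow (M := S) i ▸ hi)

theorem IsUnitModAway.isCoprime_map {S' : Type*} [CommRing S'] {κ : S →+* S'}
    (hs : IsUnit (κ s)) {f g : S[X]} (hg : IsUnitModAway s f g) :
    IsCoprime (g.map κ) (f.map κ) := by
  obtain ⟨i, p, q, hpq⟩ := hg
  obtain ⟨u, hu⟩ := hs.exists_right_inv
  have hu' : (Polynomial.C (κ s) * Polynomial.C u) ^ i = (1 : S'[X]) := by
    rw [← Polynomial.C_mul, hu, Polynomial.C_1, one_pow]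
  refine ⟨Polynomial.C u ^ i * p.map κ, -(Polynomial.C u ^ i * q.map κ), ?_⟩
  replace hpq := congrArg (Polynomial.map κ) hpq
  simp only [Polynomial.map_sub, Polynomial.map_mul, Polynomial.map_pow, Polynomial.map_C,
    map_pow] at hpq
  linear_combination Polynomial.C u ^ i * hpq + hu'

end

section

variable {S A B : Type u} [CommRing S] [CommRing A] [CommRing B] [Algebra A B] {s : S}
  {ι : S →+* A} {f : S[X]} {y : A}

theorem IsSpecial.notMem_of_height_eq_zero {a : A} (ha : IsSpecial f ι y s a)
    (H : IsAdjoinAway ι f y) {Q : Ideal A} [Q.IsPrime] (h0 : Q.height = 0) (hs : ι s ∉ Q) :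
    a ∉ Q := by
  intro haQ
  obtain ⟨k, n, g, ⟨-, i, hi⟩, -, hev⟩ := ha
  let _ := (Polynomial.eval₂RingHom ι y).toAlgebra
  have : IsLocalization.Away f A := H
  set Q' := Q.under S[X]
  have hgQ : g ∈ Q' := by
    change g.eval₂ ι y ∈ Q
    rw [← hev]
    exact Q.mul_mem_right _ haQ
  have hmin : Q'.height = 0 := (IsLocalization.height_under (Submonoid.powers f) Q).trans h0
  rw [Ideal.height_eq_zero_iff] at hmin
  have : (Q'.comap (Polynomial.C : S →+* S[X])).IsPrime := Ideal.IsPrime.comap _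
  have hcoeff := Ideal.mem_map_C_iff.1
    (hmin.2 ⟨Ideal.isPrime_map_C_of_isPrime, bot_le⟩ Ideal.map_comap_le hgQ) n
  refine hs (Ideal.IsPrime.mem_of_pow_mem ‹_› i ?_)
  rw [← map_pow]
  refine Q.mem_of_dvd (map_dvd ι hi) ?_
  have hev : (Polynomial.C (g.coeff n)).eval₂ ι y ∈ Q := hcoeff
  rwa [Polynomial.eval₂_C] at hev

theorem IsSpecial.isIntegral_quotient_mk {I : Ideal A} {F : A} (hF : IsSpecial f ι y 1 F)
    (hFI : F ∈ I) (H : IsAdjoinAway ι f y) : ((Ideal.Quotient.mk I).comp ι).IsIntegral := by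
  obtain ⟨k, n, g, hg, ⟨i, p, q, hpq⟩, hev⟩ := hF
  set π := Ideal.Quotient.mk I
  let _ : Algebra S (A ⧸ I) := (π.comp ι).toAlgebra
  have hgI : π (g.eval₂ ι y) = 0 :=
    Ideal.Quotient.eq_zero_iff_mem.2 (by rw [← hev]; exact I.mul_mem_right _ hFI)
  have hy : IsIntegral S (π y) := by
    obtain ⟨g₀, hg₀, hgg₀⟩ := hg.exists_monic_map_eq (κ := RingHom.id S) isUnit_one
    refine ⟨g₀, hg₀, ?_⟩
    rw [Polynomial.map_id] at hgg₀
    obtain ⟨u, hu⟩ := hg.isUnit_coeff.exists_left_inv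
    have hgu : g₀ = Polynomial.C u * g := by
      rw [hgg₀, ← mul_assoc, ← Polynomial.C_mul, RingHom.id_apply, hu, Polynomial.C_1, one_mul]
    change g₀.eval₂ (π.comp ι) (π y) = 0
    rw [hgu, Polynomial.eval₂_mul, ← Polynomial.hom_eval₂ g, hgI, mul_zero]
  have hpoly (h : S[X]) : IsIntegral S (π (h.eval₂ ι y)) := by
    rw [Polynomial.hom_eval₂]
    exact (adjoin_le_integralClosure hy) (Polynomial.aeval_mem_adjoin_singleton S (π y))
  have hf : π (-q.eval₂ ι y) * π (f.eval₂ ι y) = 1 := by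
    have := congrArg (fun r => π (r.eval₂ ι y)) hpq
    simp only [one_pow, map_one, Polynomial.eval₂_sub, Polynomial.eval₂_mul, map_sub, map_mul, hgI,
      mul_zero, zero_sub, Polynomial.eval₂_one] at this
    rw [map_neg]
    linear_combination this
  intro w
  obtain ⟨w, rfl⟩ := Ideal.Quotient.mk_surjective w
  obtain ⟨m, h, hh⟩ := H.exists_mul_pow_eq fun _ : Unit => w
  have hw : π w = π ((h ()).eval₂ ι y) * π (-q.eval₂ ι y) ^ m := by
    rw [← hh, map_mul, map_pow, mul_assoc, ← mul_pow, mul_comm (π (f.eval₂ ι y)), hf, one_pow,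
      mul_one]
  change IsIntegral S (π w)
  rw [hw, map_neg]
  exact (hpoly _).mul ((hpoly q).neg.pow m)

theorem IsSpecial.exists_isCoprime_mem {I : Ideal A} {F : A} (hF : IsSpecial f ι y 1 F)
    (hFI : F ∈ I) (H : IsAdjoinAway ι f y) (hs : I ⊔ Ideal.span {ι s} = ⊤) :
    ∃ t, IsCoprime s t ∧ ι t ∈ I := by
  set φ := (Ideal.Quotient.mk I).comp ι with hφ
  have hint : φ.kerLift.IsIntegral :=
    (hF.isIntegral_quotient_mk hFI H).tower_top (Ideal.Quotient.mk _) φ.kerLift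
  have := hint.isLocalHom φ.kerLift_injective
  have hu : IsUnit (φ s) := by
    obtain ⟨a, ha, b, hb, hab⟩ := Submodule.mem_sup.1 (hs ▸ Submodule.mem_top (x := (1 : A)))
    obtain ⟨w, rfl⟩ := Ideal.mem_span_singleton.1 hb
    refine .of_mul_eq_one (Ideal.Quotient.mk I w) ?_
    rw [hφ, RingHom.comp_apply, ← map_mul, ← map_one (Ideal.Quotient.mk I), ← hab, map_add,
      Ideal.Quotient.eq_zero_iff_mem.2 ha, zero_add]
  obtain ⟨c, hc⟩ := (isUnit_of_map_unit φ.kerLift (Ideal.Quotient.mk _ s) hu).exists_right_inv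
  obtain ⟨c, rfl⟩ := Ideal.Quotient.mk_surjective c
  refine ⟨1 - s * c, ⟨c, 1, by ring⟩, ?_⟩
  have : 1 - s * c ∈ RingHom.ker φ := by
    rw [← Ideal.Quotient.eq_zero_iff_mem, map_sub, map_mul, hc, map_one, sub_self]
  exact Ideal.Quotient.eq_zero_iff_mem.1 this

theorem IsAdjoinAway.exists_away (H : IsAdjoinAway ι f y) (q : S) (Q : Type u) [CommRing Q]
    [Algebra S Q] [IsLocalization.Away q Q] [IsLocalization.Away (ι q) B] :
    ∃ κ : Q →+* B, κ.comp (algebraMap S Q) = (algebraMap A B).comp ι ∧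
      IsAdjoinAway κ (f.map (algebraMap S Q)) (algebraMap A B y) := by
  have hq : IsUnit ((algebraMap A B).comp ι q) := IsLocalization.Away.algebraMap_isUnit (ι q)
  have hκ := IsLocalization.Away.lift_comp (S := Q) q hq
  refine ⟨IsLocalization.Away.lift (S := Q) q hq, hκ, H.pushout _ _ _ hκ.symm
    (fun E _ g k hk => ?_) fun E _ k k' _ h => IsLocalization.ringHom_ext (.powers (ι q)) h⟩
  have hkq : IsUnit (k (ι q)) := by
    rw [← RingHom.comp_apply, hk]
    exact (IsLocalization.Away.algebraMap_isUnit q).map g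
  have hlift := IsLocalization.Away.lift_comp (S := B) (ι q) hkq
  refine ⟨IsLocalization.Away.lift (S := B) (ι q) hkq, ?_, hlift⟩
  apply IsLocalization.ringHom_ext (Submonoid.powers q)
  rw [RingHom.comp_assoc, hκ, ← RingHom.comp_assoc, hlift, hk]

theorem IsSpecial.exists_isIsotopic_single (H : IsAdjoinAway ι f y) {q : S}
    [IsLocalization.Away (ι q) B] (hsq : s ∣ q) {κ : Type*} [Fintype κ] [DecidableEq κ]
    [Nontrivial κ] {v : κ → A} {i₀ : κ} (hi₀ : IsSpecial f ι y s (v i₀))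
    (hv : Ideal.span (Set.range fun i => algebraMap A B (v i)) = ⊤) :
    ∃ (c : A) (N : ℕ), c ∣ ι s ^ N ∧
      IsIsotopic (fun i => algebraMap A B (v i)) (Pi.single i₀ (algebraMap A B c)) := by
  obtain ⟨ρ, hρ, H'⟩ := H.exists_away (B := B) q (Localization.Away q)
  set Q := Localization.Away q
  let _ := (Polynomial.eval₂RingHom ρ (algebraMap A B y)).toAlgebra
  have : IsLocalization.Away (f.map (algebraMap S Q)) B := H'
  have hs : IsUnit (algebraMap S Q s) :=
    isUnit_of_dvd_unit (map_dvd _ hsq) (IsLocalization.Away.algebraMap_isUnit q)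
  obtain ⟨k, n, g, hg, hgf, hev⟩ := hi₀
  obtain ⟨φ, hφ⟩ := H.isUnit.exists_right_inv
  obtain ⟨g₀, hg₀, hgg₀⟩ := hg.exists_monic_map_eq hs
  obtain ⟨-, N, hN⟩ := hg
  have hcdvd : φ ^ k * ι (g.coeff n) ∣ ι s ^ N := by
    refine (IsUnit.mul_left_dvd ?_).2 (by simpa using map_dvd ι hN)
    exact (IsUnit.of_mul_eq_one_right _ hφ).pow k
  refine ⟨φ ^ k * ι (g.coeff n), N, hcdvd,
    isIsotopic_single_of_monic (f.map (algebraMap S Q)) hv ?_ hg₀ ?_ ?_⟩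
  · refine isUnit_of_dvd_unit (map_dvd (algebraMap A B) hcdvd) ?_
    rw [map_pow, ← RingHom.comp_apply, ← hρ]
    exact (hs.map ρ).pow N
  · exact (hgg₀ ▸ hgf.isCoprime_map hs).of_mul_left_right
  · have hgB : algebraMap A B (g.eval₂ ι y) =
        algebraMap A B (ι (g.coeff n)) * algebraMap Q[X] B g₀ := by
      rw [Polynomial.hom_eval₂, ← hρ, ← Polynomial.eval₂_map, hgg₀, Polynomial.eval₂_mul,
        Polynomial.eval₂_C, ← RingHom.comp_apply ρ, hρ]
      rfl
    have hv₀ : v i₀ = φ ^ k * g.eval₂ ι y := by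
      rw [← hev, mul_left_comm, ← mul_pow, mul_comm φ, hφ, one_pow, mul_one]
    rw [hv₀, map_mul, map_mul, hgB, mul_assoc]

theorem ScaledBasis.span_range_coords_eq_top {P κ : Type*} [AddCommGroup P] [Module A P]
    [Finite κ] {c t : A} (b : ScaledBasis c κ P) {x : P} {ψ : P →ₗ[A] A} (hψ : ψ x = t)
    (ht : IsUnit (algebraMap A B (c * t))) :
    Ideal.span (Set.range fun i => algebraMap A B (b.coords x i)) = ⊤ := by
  classical
  have := Fintype.ofFinite κ
  have hct : ∑ i, b.coords x i * ψ (b.lift fun j => if i = j then 1 else 0) = c * t := by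
    rw [← hψ, ← smul_eq_mul c, ← map_smul, ← b.lift_coords, ← LinearMap.comp_apply ψ,
      LinearMap.pi_apply_eq_sum_univ (ψ ∘ₗ b.lift)]
    rfl
  refine Ideal.eq_top_of_isUnit_mem _ ?_ ht
  rw [← hct, map_sum]
  refine Ideal.sum_mem _ fun i _ => ?_
  rw [map_mul]
  exact Ideal.mul_mem_right _ _ (Ideal.subset_span ⟨i, rfl⟩)

theorem IsSpecial.exists_orderIdeal_eq_top (H : IsAdjoinAway ι f y) {P κ : Type*}
    [AddCommGroup P] [Module A P] [Finite κ] [Nontrivial κ] (b : ScaledBasis (ι s) κ P) {x : P}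
    {i₀ : κ} (hi₀ : IsSpecial f ι y s (b.coords x i₀))
    {F : A} (hF : IsSpecial f ι y 1 F) (hFx : F ∈ orderIdeal x)
    (hx : orderIdeal x ⊔ Ideal.span {ι s} = ⊤) : ∃ z : P, orderIdeal (A := A) z = ⊤ := by
  classical
  have := Fintype.ofFinite κ
  obtain ⟨t, hst, ψ, hψ⟩ := hF.exists_isCoprime_mem hFx H hx
  have : IsLocalization.Away (ι (s * t)) (Localization.Away (ι s * ι t)) := by
    rw [map_mul]
    infer_instance
  obtain ⟨c, N, hc, hiso⟩ := IsSpecial.exists_isIsotopic_single H (Dvd.intro t rfl) hi₀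
    (b.span_range_coords_eq_top (B := Localization.Away (ι s * ι t)) hψ
      (IsLocalization.Away.algebraMap_isUnit _))
  exact exists_orderIdeal_eq_top_of_isIsotopic (hst.map ι) b hψ hc hiso

end

theorem HasSpecialPresentations.exists_orderIdeal_eq_top {R : Type u} [CommRing R] {f : R[X]}
    {d r : ℕ} {A : Type u} [CommRing A] [IsNoetherianRing A] [Algebra R A]
    (hA : HasSpecialPresentations R f d A) (hdr : d ≤ r) (hr : 1 ≤ r) {s : R} {P : Type*}
    [AddCommGroup P] [Module A P] (b : ScaledBasis (algebraMap R A s) (Fin (r + 1)) P) {x : P}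
    (hx : orderIdeal x ⊔ Ideal.span {algebraMap R A s} = ⊤) :
    ∃ z : P, orderIdeal (A := A) z = ⊤ := by
  have : Nontrivial (Fin (r + 1)) := Fin.nontrivial_iff_two_le.2 (by omega)
  obtain ⟨a, ha⟩ := hA (b.coords x 0) (s ^ 2)
  simp only [map_pow] at ha
  obtain ⟨x', hx'₀, hx', hht⟩ := exists_lt_height_orderIdeal b hx (a := a) fun Q hQ hs hmem h0 => by
    obtain ⟨S, _, _, ι, y, H, -, hsp⟩ := ha ⊤ (by simp)
    refine hsp.notMem_of_height_eq_zero H h0 (fun h => hs ?_) hmem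
    exact hQ.mem_of_pow_mem 2 (by simpa using h)
  obtain ⟨S, _, _, ι, y, H, ⟨F, hFI, hF⟩, hsp⟩ :=
    ha _ (le_trans (by gcongr) hht : (d + 1 : ℕ) ≤ (orderIdeal x').height)
  rw [← ι.commutes] at hx'
  have hb : ∃ b' : ScaledBasis (ι (algebraMap R S s)) (Fin (r + 1)) P, b'.coords = b.coords := by
    rw [ι.commutes]
    exact ⟨b, rfl⟩
  obtain ⟨b', hb'⟩ := hb
  refine IsSpecial.exists_orderIdeal_eq_top H b' (i₀ := 0) ?_ hF hFI hx'
  rw [hb', hx'₀]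
  exact hsp.of_pow

/-! ### Clearing denominators in bases -/

section

variable {A B P ι : Type*} [CommRing A] [CommRing B] [Algebra A B] [AddCommGroup P] [Module A P]
  [Module.Finite A P] [Module.Projective A P] [Finite ι]

theorem exists_scaledBasis (S : Submonoid A) [IsLocalization S B]
    (e : B ⊗[A] P ≃ₗ[B] (ι → B)) : ∃ s ∈ S, Nonempty (ScaledBasis s ι P) := by
  have := Module.finitePresentation_of_projective A P
  let i : P →ₗ[A] B ⊗[A] P := TensorProduct.mk A B P 1
  let j : (ι → A) →ₗ[A] (ι → B) := .pi fun k => Algebra.linearMap A B ∘ₗ .proj k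
  let e' : B ⊗[A] P ≃ₗ[A] (ι → B) := e.restrictScalars A
  obtain ⟨c, t, hc⟩ :=
    Module.FinitePresentation.exists_lift_of_isLocalizedModule S j (e'.toLinearMap ∘ₗ i)
  obtain ⟨l, t', hl⟩ :=
    Module.FinitePresentation.exists_lift_of_isLocalizedModule S i (e'.symm.toLinearMap ∘ₗ j)
  have hc (x : P) : j (c x) = t • e' (i x) := LinearMap.congr_fun hc x
  have hl (v : ι → A) : i (l v) = t' • e'.symm (j v) := LinearMap.congr_fun hl v
  obtain ⟨s, hs⟩ := Module.Finite.exists_smul_of_comp_eq_of_isLocalizedModule S i (l ∘ₗ c)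
    ((t * t') • LinearMap.id) (LinearMap.ext fun x => by
      simp [hc, hl, Submonoid.smul_def, smul_smul, mul_comm])
  obtain ⟨s', hs'⟩ := Module.Finite.exists_smul_of_comp_eq_of_isLocalizedModule S j (c ∘ₗ l)
    ((t * t') • LinearMap.id) (LinearMap.ext fun v => by
      simp [hc, hl, Submonoid.smul_def, smul_smul])
  simp only [LinearMap.ext_iff, LinearMap.smul_apply, LinearMap.comp_apply, LinearMap.id_apply,
    Submonoid.smul_def] at hs hs'
  refine ⟨s * s' * (t * t' : S), (s * s' * (t * t')).2,
    ⟨(s * s' : A) • c, l, fun v => ?_, fun x => ?_⟩⟩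
  · rw [LinearMap.smul_apply, mul_smul, hs', smul_smul, smul_smul, mul_assoc]
  · rw [LinearMap.smul_apply, map_smul, mul_comm (s : A), mul_smul, hs, smul_smul, smul_smul,
      mul_assoc]

end

section

variable {A P ι κ : Type*} [CommRing A] [AddCommGroup P] [Module A P] [Fintype κ]

/-- Glues scaled bases along pairwise orthogonal elements. -/
def ScaledBasis.sum {s : κ → A} (b : ∀ k, ScaledBasis (s k) ι P) {w : κ → A}
    (hw : Pairwise fun k k' => w k * w k' = 0) :
    ScaledBasis (∑ k, w k * w k * s k) ι P where
  coords := ∑ k, w k • (b k).coords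
  lift := ∑ k, w k • (b k).lift
  coords_lift v := by
    simp only [LinearMap.sum_apply, LinearMap.smul_apply, map_sum, map_smul, Finset.sum_smul,
      Finset.smul_sum, smul_smul]
    refine Finset.sum_congr rfl fun k _ => ?_
    rw [Finset.sum_eq_single k (fun k' _ hne => by rw [hw hne.symm, zero_smul]) (by simp),
      (b k).coords_lift, smul_smul]
  lift_coords x := by
    simp only [LinearMap.sum_apply, LinearMap.smul_apply, map_sum, map_smul, Finset.sum_smul,
      Finset.smul_sum, smul_smul]
    refine Finset.sum_congr rfl fun k _ => ?_
    rw [Finset.sum_eq_single k (fun k' _ hne => by rw [hw hne.symm, zero_smul]) (by simp),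
      (b k).lift_coords, smul_smul]

end

section

variable {R : Type*} [CommRing R]

theorem exists_notMem_and_forall_minimalPrimes_mem [IsNoetherianRing R] {p : Ideal R}
    (hp : p ∈ minimalPrimes R) : ∃ t ∉ p, ∀ q ∈ minimalPrimes R, q ≠ p → t ∈ q := by
  classical
  have hfin := minimalPrimes.finite_of_isNoetherianRing R
  have hle : ¬ (hfin.toFinset.erase p).inf id ≤ p := by
    rw [Ideal.IsPrime.inf_le' hp.1.1]
    rintro ⟨q, hq, hqp⟩
    rw [Finset.mem_erase, hfin.mem_toFinset] at hq
    exact hq.1 (hqp.antisymm (hp.2 hq.2.1 hqp))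
  obtain ⟨t, ht, htp⟩ := Set.not_subset.1 hle
  refine ⟨t, htp, fun q hq hne => ?_⟩
  have hinf : (hfin.toFinset.erase p).inf id ≤ q :=
    Finset.inf_le (f := id) (Finset.mem_erase.2 ⟨hne, hfin.mem_toFinset.2 hq⟩)
  exact hinf ht

variable [IsReduced R]

theorem eq_zero_of_forall_minimalPrimes_mem {x : R} (hx : ∀ p ∈ minimalPrimes R, x ∈ p) :
    x = 0 := by
  have : x ∈ nilradical R := by
    rw [nilradical, ← Ideal.sInf_minimalPrimes]
    exact Submodule.mem_sInf.2 hx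
  exact (mem_nilradical.1 this).eq_zero

theorem mem_nonZeroDivisors_of_forall_minimalPrimes_notMem {s : R}
    (hs : ∀ p ∈ minimalPrimes R, s ∉ p) : s ∈ nonZeroDivisors R := by
  refine mem_nonZeroDivisors_iff_right.2 fun x hx =>
    eq_zero_of_forall_minimalPrimes_mem fun p hp => ?_
  exact (hp.1.1.mem_or_mem (hx ▸ p.zero_mem : x * s ∈ p)).resolve_right (hs p hp)

theorem isField_of_mem_minimalPrimes (p : Ideal R) [p.IsPrime] (hp : p ∈ minimalPrimes R) :
    IsField (Localization.AtPrime p) := by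
  have := Ring.KrullDimLE.of_isLocalization p hp (Localization.AtPrime p)
  exact Ring.KrullDimLE.isField_of_isReduced

theorem exists_nonZeroDivisors_scaledBasis [IsNoetherianRing R] {A P ι : Type*} [CommRing A]
    [Algebra R A] [AddCommGroup P] [Module A P]
    (H : ∀ p ∈ minimalPrimes R, ∃ s ∉ p, Nonempty (ScaledBasis (algebraMap R A s) ι P)) :
    ∃ s ∈ nonZeroDivisors R, Nonempty (ScaledBasis (algebraMap R A s) ι P) := by
  have : Fintype (minimalPrimes R) := (minimalPrimes.finite_of_isNoetherianRing R).fintype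
  choose s hs b using fun p : minimalPrimes R => H p.1 p.2
  choose t ht ht' using fun p : minimalPrimes R => exists_notMem_and_forall_minimalPrimes_mem p.2
  have htq {p q : minimalPrimes R} (h : p ≠ q) : t p ∈ q.1 :=
    ht' p q.1 q.2 fun h' => h (Subtype.ext h'.symm)
  have htt : Pairwise fun p q => t p * t q = 0 := fun p q hpq =>
    eq_zero_of_forall_minimalPrimes_mem fun z hz => by
      by_cases hpz : p = ⟨z, hz⟩
      · exact z.mul_mem_left _ (htq (q := ⟨z, hz⟩) fun h => hpq (hpz.trans h.symm))
      · exact z.mul_mem_right _ (htq (q := ⟨z, hz⟩) hpz)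
  refine ⟨∑ p, t p * t p * s p,
    mem_nonZeroDivisors_of_forall_minimalPrimes_notMem fun z hz => ?_, ?_⟩
  · classical
    have hz' := hz.1.1
    rw [← Finset.add_sum_erase _ _ (Finset.mem_univ (⟨z, hz⟩ : minimalPrimes R)),
      Ideal.add_mem_iff_left]
    · exact hz'.mul_notMem (hz'.mul_notMem (ht ⟨z, hz⟩) (ht ⟨z, hz⟩)) (hs ⟨z, hz⟩)
    · exact Ideal.sum_mem _ fun q hq =>
        z.mul_mem_right _ (z.mul_mem_right _ (htq (q := ⟨z, hz⟩) (Finset.ne_of_mem_erase hq)))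
  · simp only [map_sum, map_mul]
    refine ⟨ScaledBasis.sum (fun p => (b p).some) fun p q hpq => ?_⟩
    simp only [← map_mul, htt hpq, map_zero]

end

/-! ### Projective modules of constant rank -/

section

variable {A P : Type*} [CommRing A] [AddCommGroup P] [Module A P]

theorem exists_scaledBasis_of_rankAtStalk [Module.Finite A P] [Module.Projective A P]
    (S : Submonoid A) (B : Type*) [CommRing B] [Algebra A B] [IsLocalization S B]
    [Module.Free B (B ⊗[A] P)] {r : ℕ} (hr : ∀ p : PrimeSpectrum A, Module.rankAtStalk P p = r) :
    ∃ s ∈ S, Nonempty (ScaledBasis s (Fin r) P) := by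
  rcases subsingleton_or_nontrivial B with h | h
  · have := Module.subsingleton B (B ⊗[A] P)
    exact exists_scaledBasis S (0 : B ⊗[A] P ≃ₗ[B] (Fin r → B))
  · obtain ⟨q⟩ : Nonempty (PrimeSpectrum B) := inferInstance
    have hrank := congrFun (Module.rankAtStalk_eq_finrank_of_free (R := B) (M := B ⊗[A] P)) q
    rw [Module.rankAtStalk_baseChange, hr] at hrank
    exact exists_scaledBasis S (Module.finBasisOfFinrankEq B _ hrank.symm).equivFun

theorem ScaledBasis.mem_range_contractLeft {s : A} (b : ScaledBasis s (Fin 1) P) :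
    s ∈ LinearMap.range (contractLeft A P) := by
  refine ⟨(.proj 0 ∘ₗ b.coords) ⊗ₜ b.lift fun _ => 1, ?_⟩
  simp [contractLeft_apply, b.coords_lift]

theorem ScaledBasis.smul_eq_zero_of_contractLeft_eq_zero {s : A} (b : ScaledBasis s (Fin 1) P)
    {t : Module.Dual A P ⊗[A] P} (ht : contractLeft A P t = 0) : (s * s) • t = 0 := by
  let φ : Module.Dual A P := .proj 0 ∘ₗ b.coords
  let e : P := b.lift fun _ => 1
  have hφ (x : P) : φ x • e = s • x := by
    rw [← b.lift_coords, ← map_smul]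
    congr 1
    ext i
    simp [φ, Subsingleton.elim i 0]
  have key (t : Module.Dual A P ⊗[A] P) :
      (s * s) • t = (s * contractLeft A P t) • (φ ⊗ₜ[A] e) := by
    induction t with
    | zero => simp
    | add x y hx hy => rw [smul_add, hx, hy, map_add, mul_add, add_smul]
    | tmul ψ x =>
      have hψ : s • ψ = ψ e • φ := LinearMap.ext fun z => by
        simpa [mul_comm] using (congrArg ψ (hφ z)).symm
      have hψx : φ x * ψ e = s * ψ x := by simpa using congrArg ψ (hφ x)
      calc (s * s) • ψ ⊗ₜ[A] x = (s • ψ) ⊗ₜ (s • x) := by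
            rw [TensorProduct.smul_tmul_smul]
        _ = (φ x * ψ e) • (φ ⊗ₜ e) := by
            rw [hψ, ← hφ, TensorProduct.smul_tmul_smul, mul_comm]
        _ = (s * contractLeft A P (ψ ⊗ₜ x)) • (φ ⊗ₜ e) := by rw [hψx, contractLeft_apply]
  rw [key, ht, mul_zero, zero_smul]

theorem invertible_of_rankAtStalk_eq_one [Module.Finite A P] [Module.Projective A P]
    (hr : ∀ p : PrimeSpectrum A, Module.rankAtStalk P p = 1) : Module.Invertible A P := by
  have hloc (m : Ideal A) (hm : m.IsMaximal) : ∃ s ∉ m, Nonempty (ScaledBasis s (Fin 1) P) := by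
    have : Module.Free (Localization.AtPrime m) (Localization.AtPrime m ⊗[A] P) :=
      Module.free_of_flat_of_isLocalRing
    exact exists_scaledBasis_of_rankAtStalk m.primeCompl (Localization.AtPrime m) hr
  refine ⟨⟨(injective_iff_map_eq_zero _).2 fun t ht => ?_, ?_⟩⟩
  · suffices Ideal.torsionOf A _ t = ⊤ by
      simpa [Ideal.mem_torsionOf_iff] using (Ideal.eq_top_iff_one _).1 this
    by_contra hne
    obtain ⟨m, hm, hle⟩ := Ideal.exists_le_maximal _ hne
    obtain ⟨s, hs, ⟨b⟩⟩ := hloc m hm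
    exact hm.isPrime.mul_notMem hs hs (hle (b.smul_eq_zero_of_contractLeft_eq_zero ht))
  · rw [← LinearMap.range_eq_top]
    by_contra hne
    obtain ⟨m, hm, hle⟩ := Ideal.exists_le_maximal _ hne
    obtain ⟨s, hs, ⟨b⟩⟩ := hloc m hm
    exact hs (hle b.mem_range_contractLeft)

theorem exists_equiv_prod_of_orderIdeal_eq_top {x : P} (hx : orderIdeal (A := A) x = ⊤) :
    ∃ φ : P →ₗ[A] A, Nonempty (P ≃ₗ[A] LinearMap.ker φ × A) := by
  obtain ⟨φ, hφ⟩ := mem_orderIdeal.1 ((Ideal.eq_top_iff_one _).1 hx)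
  refine ⟨φ, ⟨(lequivProdOfRightSplitExact (j := (LinearMap.ker φ).subtype) (g := φ)
    (f := LinearMap.toSpanSingleton A P x) (Submodule.subtype_injective _) (by simp) ?_).symm⟩⟩
  ext
  simpa using hφ

end

/-- The Serre dimension of `A` is less than `d`: every finitely generated projective `A`-module of
constant rank at least `d` has a unimodular element. Only modules in the universe of `A` are
considered. -/
def SerreDimLT (A : Type u) [CommRing A] (d : ℕ) : Prop :=
  ∀ (P : Type u) [AddCommGroup P] [Module A P] [Module.Finite A P] [Module.Projective A P] (r : ℕ),
    d ≤ r → (∀ p : PrimeSpectrum A, Module.rankAtStalk P p = r) →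
      ∃ x : P, orderIdeal (A := A) x = ⊤

/-- Every finitely generated projective `A`-module of constant rank is free. Only modules in the
universe of `A` are considered. -/
def HasFreeProjectives (A : Type u) [CommRing A] : Prop :=
  ∀ (P : Type u) [AddCommGroup P] [Module A P] [Module.Finite A P] [Module.Projective A P] (r : ℕ),
    (∀ p : PrimeSpectrum A, Module.rankAtStalk P p = r) → Module.Free A P

theorem SerreDimLT.of_subsingleton (R A : Type u) [CommRing R] [Subsingleton R] [CommRing A]
    [Algebra R A] {d : ℕ} : SerreDimLT A d := by
  have := (algebraMap R A).codomain_trivial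
  exact fun P _ _ _ _ _ _ _ => ⟨0, Subsingleton.elim _ _⟩

theorem SerreDimLT.hasFreeProjectives {A : Type u} [CommRing A] [IsDomain A]
    [UniqueFactorizationMonoid A] (H : SerreDimLT A 2) : HasFreeProjectives A := by
  intro P _ _ _ _ r hr
  induction r generalizing P with
  | zero =>
    have : Subsingleton P := Module.rankAtStalk_eq_zero_iff_subsingleton.1 (funext hr)
    infer_instance
  | succ r ih =>
    rcases Nat.eq_zero_or_pos r with rfl | hpos
    · have := invertible_of_rankAtStalk_eq_one hr
      have : IsGCDMonoid A := ⟨UniqueFactorizationMonoid.toGCDMonoid A⟩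
      infer_instance
    · obtain ⟨x, hx⟩ := H P (r + 1) (by lia) hr
      obtain ⟨φ, ⟨e⟩⟩ := exists_equiv_prod_of_orderIdeal_eq_top hx
      let incl := e.symm.toLinearMap ∘ₗ LinearMap.inl A (LinearMap.ker φ) A
      let retr := LinearMap.fst A (LinearMap.ker φ) A ∘ₗ e.toLinearMap
      have hri : retr ∘ₗ incl = .id := by ext; simp [retr, incl]
      have : Module.Projective A (LinearMap.ker φ) := .of_split incl retr hri
      have : Module.Finite A (LinearMap.ker φ) :=
        .of_surjective retr fun y => ⟨incl y, LinearMap.congr_fun hri y⟩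
      have := ih (LinearMap.ker φ) fun p => by
        have hp := congrFun (Module.rankAtStalk_eq_of_equiv e) p
        rw [hr, Module.rankAtStalk_prod, Pi.add_apply, Module.rankAtStalk_self,
          Pi.one_apply] at hp
        lia
      exact Module.Free.of_equiv e.symm

/-! ### Lifting unimodular elements -/

section

variable {A P : Type*} [CommRing A] [AddCommGroup P] [Module A P] [Module.Projective A P]

theorem exists_orderIdeal_sup_ker_eq_top {B : Type*} [CommRing B] [Algebra A B]
    (hs : Function.Surjective (algebraMap A B)) {z : B ⊗[A] P}
    (hz : orderIdeal (A := B) z = ⊤) :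
    ∃ x : P, orderIdeal x ⊔ RingHom.ker (algebraMap A B) = ⊤ := by
  obtain ⟨ψ, hψ⟩ := mem_orderIdeal.1 ((Ideal.eq_top_iff_one _).1 hz)
  obtain ⟨x, rfl⟩ := TensorProduct.mk_surjective A P B hs z
  obtain ⟨φ, hφ⟩ := Module.projective_lifting_property (Algebra.linearMap A B)
    (ψ.restrictScalars A ∘ₗ TensorProduct.mk A B P 1) hs
  have hφx : algebraMap A B (φ x) = 1 := (LinearMap.congr_fun hφ x).trans hψ
  refine ⟨x, (Ideal.eq_top_iff_one _).2 ?_⟩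
  rw [← add_sub_cancel (φ x) 1]
  exact add_mem (Ideal.mem_sup_left (apply_mem_orderIdeal φ x))
    (Ideal.mem_sup_right (by simp [RingHom.mem_ker, hφx]))

end

section

variable {R A : Type u} [CommRing R] [CommRing A] [Algebra R A] {P : Type u} [AddCommGroup P]
  [Module A P]

attribute [local instance] Algebra.TensorProduct.rightAlgebra

theorem ker_algebraMap_quotient_tensorProduct (I : Ideal R) :
    RingHom.ker (algebraMap A ((R ⧸ I) ⊗[R] A)) = I.map (algebraMap R A) := by
  ext a
  have hker : (1 : R ⧸ I) ⊗ₜ[R] a = 0 ↔ a ∈ I • (⊤ : Submodule R A) := by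
    rw [← (TensorProduct.quotTensorEquivQuotSMul A I).map_eq_zero_iff,
      TensorProduct.quotTensorEquivQuotSMul_mk_one_tmul, Submodule.Quotient.mk_eq_zero]
  rw [Ideal.smul_top_eq_map] at hker
  exact hker

theorem SerreDimLT.exists_orderIdeal_sup_map_eq_top [Module.Finite A P] [Module.Projective A P]
    {I : Ideal R} {d r : ℕ} (H : SerreDimLT ((R ⧸ I) ⊗[R] A) d) (hdr : d ≤ r)
    (hr : ∀ p : PrimeSpectrum A, Module.rankAtStalk P p = r) :
    ∃ x : P, orderIdeal x ⊔ I.map (algebraMap R A) = ⊤ := by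
  obtain ⟨z, hz⟩ := H (((R ⧸ I) ⊗[R] A) ⊗[A] P) r hdr
    fun q => by rw [Module.rankAtStalk_baseChange, hr]
  rw [← ker_algebraMap_quotient_tensorProduct]
  exact exists_orderIdeal_sup_ker_eq_top
    (TensorProduct.mk_surjective R A (R ⧸ I) Ideal.Quotient.mk_surjective) hz

theorem orderIdeal_eq_top_of_sup_map_nilradical {x : P}
    (hx : orderIdeal x ⊔ (nilradical R).map (algebraMap R A) = ⊤) : orderIdeal (A := A) x = ⊤ := by
  by_contra hne
  obtain ⟨m, hm, hle⟩ := Ideal.exists_le_maximal _ hne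
  have hnil : (nilradical R).map (algebraMap R A) ≤ m :=
    Ideal.map_le_iff_le_comap.2 (nilradical_le_prime _)
  exact hm.ne_top (top_le_iff.1 (hx ▸ sup_le hle hnil))

end

/-! ### Induction on the dimension of the base -/

section

variable {R A : Type u} [CommRing R] [CommRing A] [Algebra R A]

/-- Over every field, a Laurent tower of shape `l` has only free projective modules of constant
rank. A tower with a Laurent variable is only considered for `f` of positive degree. -/
def HasFreeProjectivesOverFields (l : List Bool) : Prop :=
  ∀ (K : Type u) [CommRing K], IsField K → ∀ f : K[X], f.Monic → (true ∈ l → 1 ≤ f.natDegree) →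
    ∀ (A : Type u) [CommRing A] [Algebra K A], IsLaurentTower K f l A → HasFreeProjectives A

namespace IsLaurentTower

variable {f : R[X]} {l : List Bool}

theorem exists_nonZeroDivisors_scaledBasis (hlf : HasFreeProjectivesOverFields.{u} l)
    [IsNoetherianRing R] [IsReduced R] (hf : f.Monic) (hl : true ∈ l → 1 ≤ f.natDegree)
    (H : IsLaurentTower R f l A) {P : Type u} [AddCommGroup P] [Module A P] [Module.Finite A P]
    [Module.Projective A P] {r : ℕ} (hr : ∀ p : PrimeSpectrum A, Module.rankAtStalk P p = r) :
    ∃ s ∈ nonZeroDivisors R, Nonempty (ScaledBasis (algebraMap R A s) (Fin r) P) := by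
  refine SerreDimension.exists_nonZeroDivisors_scaledBasis fun p hp => ?_
  have := hp.1.1
  let K := Localization.AtPrime p
  let _ : Algebra A (K ⊗[R] A) := Algebra.TensorProduct.rightAlgebra
  have : Module.Free (K ⊗[R] A) ((K ⊗[R] A) ⊗[A] P) :=
    hlf K (isField_of_mem_minimalPrimes p hp) (f.map (algebraMap R K)) (hf.map _)
      (fun h => by rw [hf.natDegree_map]; exact hl h) (K ⊗[R] A) H.tensorProduct
      ((K ⊗[R] A) ⊗[A] P) r fun q => by rw [Module.rankAtStalk_baseChange, hr]
  obtain ⟨_, ⟨s, hs, rfl⟩, b⟩ := exists_scaledBasis_of_rankAtStalk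
    (Algebra.algebraMapSubmonoid A p.primeCompl) (K ⊗[R] A) hr
  exact ⟨s, hs, b⟩

theorem serreDimLT_of_quotient_nilradical {d : ℕ} (H : SerreDimLT ((R ⧸ nilradical R) ⊗[R] A) d) :
    SerreDimLT A d := by
  intro P _ _ _ _ r hdr hr
  obtain ⟨x, hx⟩ := H.exists_orderIdeal_sup_map_eq_top hdr hr (P := P)
  exact ⟨x, orderIdeal_eq_top_of_sup_map_nilradical hx⟩

theorem serreDimLT_succ_of_isReduced (hlf : HasFreeProjectivesOverFields.{u} l)
    [IsNoetherianRing R] [IsReduced R] (hf : f.Monic) (hl : true ∈ l → 1 ≤ f.natDegree)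
    (H : IsLaurentTower R f l A) {d : ℕ} (hd : ringKrullDim R ≤ d)
    (ih : ∀ s ∈ nonZeroDivisors R, SerreDimLT ((R ⧸ Ideal.span {s}) ⊗[R] A) d) :
    SerreDimLT A (d + 1) := by
  intro P _ _ _ _ r hdr hr
  obtain ⟨r, rfl⟩ : ∃ r', r = r' + 1 := ⟨r - 1, by lia⟩
  obtain ⟨s, hs, ⟨b⟩⟩ := H.exists_nonZeroDivisors_scaledBasis hlf hf hl hr
  rcases Nat.eq_zero_or_pos r with rfl | hpos
  · obtain rfl : d = 0 := by lia
    have : Ring.KrullDimLE 0 R := Ring.krullDimLE_iff.2 hd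
    have : IsArtinianRing R := isArtinianRing_iff_isNoetherianRing_krullDimLE_zero.2 ⟨‹_›, ‹_›⟩
    have hsu : IsUnit s := IsArtinianRing.isUnit_of_mem_nonZeroDivisors hs
    have hs_mem : algebraMap R A s ∈ orderIdeal (b.lift fun _ => 1) :=
      mem_orderIdeal.2 ⟨.proj 0 ∘ₗ b.coords, by simp [b.coords_lift]⟩
    exact ⟨_, Ideal.eq_top_of_isUnit_mem _ hs_mem (hsu.map _)⟩
  · obtain ⟨x, hx⟩ := (ih s hs).exists_orderIdeal_sup_map_eq_top (by lia) hr (P := P)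
    rw [Ideal.map_span, Set.image_singleton] at hx
    have := H.isNoetherianRing
    exact (HasSpecialPresentations.of_isLaurentTower hd hf hl H).exists_orderIdeal_eq_top
      (by lia) hpos b hx

theorem serreDimLT (hlf : HasFreeProjectivesOverFields.{u} l) [IsNoetherianRing R] (hf : f.Monic)
    (hl : true ∈ l → 1 ≤ f.natDegree) (H : IsLaurentTower R f l A) {d : ℕ}
    (hd : ringKrullDim R < d) : SerreDimLT A d := by
  induction d generalizing R A f with
  | zero =>
    have hR : Subsingleton R := by
      by_contra! h
      exact ringKrullDim_nonneg_of_nontrivial.not_gt hd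
    exact .of_subsingleton R A
  | succ d ih =>
    refine serreDimLT_of_quotient_nilradical (R := R) ?_
    rcases subsingleton_or_nontrivial (R ⧸ nilradical R) with _ | _
    · exact .of_subsingleton (R ⧸ nilradical R) _
    have : IsReduced (R ⧸ nilradical R) :=
      (Ideal.isRadical_iff_quotient_reduced _).1 (Ideal.radical_isRadical _)
    have hf' : (f.map (algebraMap R (R ⧸ nilradical R))).Monic := hf.map _
    have hl' (h : true ∈ l) : 1 ≤ (f.map (algebraMap R (R ⧸ nilradical R))).natDegree := by
      rw [hf.natDegree_map]
      exact hl h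
    have hdim : ringKrullDim (R ⧸ nilradical R) ≤ d :=
      (ringKrullDim_quotient_le _).trans (ENat.WithBot.lt_add_one_iff.1 (by exact_mod_cast hd))
    refine serreDimLT_succ_of_isReduced hlf hf' hl' H.tensorProduct hdim fun s hs => ?_
    rcases subsingleton_or_nontrivial ((R ⧸ nilradical R) ⧸ Ideal.span {s}) with _ | _
    · exact .of_subsingleton ((R ⧸ nilradical R) ⧸ Ideal.span {s}) _
    have hdim' := (ringKrullDim_quotient_succ_le_of_nonZeroDivisor hs).trans hdim
    refine ih (hf'.map (algebraMap _ ((R ⧸ nilradical R) ⧸ Ideal.span {s}))) (fun h => ?_)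
      H.tensorProduct.tensorProduct ?_
    · rw [hf'.natDegree_map]
      exact hl' h
    · have := hdim'.trans_lt (ENat.WithBot.lt_add_one_iff.2 le_rfl)
      exact lt_of_add_lt_add_right this

end IsLaurentTower

end

/-! ### Towers over a field -/

theorem isPrincipalIdealRing_of_isLocalization {R S : Type*} [CommRing R] [CommRing S]
    [Algebra R S] (M : Submonoid R) [IsLocalization M S] [IsPrincipalIdealRing R] :
    IsPrincipalIdealRing S := by
  refine ⟨fun J => ?_⟩
  rw [← IsLocalization.map_under M S J]
  obtain ⟨a, ha⟩ := IsPrincipalIdealRing.principal (J.under R)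
  refine ⟨algebraMap R S a, ?_⟩
  rw [ha, ← Ideal.span, Ideal.map_span, Set.image_singleton]

section

variable {D A : Type*} [CommRing D] [CommRing A] {j : D →+* A} {h : D[X]} {x : A}

theorem IsAdjoinAway.isDomain [IsDomain D] (hh : h ≠ 0) (H : IsAdjoinAway j h x) : IsDomain A := by
  let _ := (Polynomial.eval₂RingHom j x).toAlgebra
  have : IsLocalization.Away h A := H
  exact IsLocalization.Away.isDomain A hh

theorem IsAdjoinAway.uniqueFactorizationMonoid [IsDomain D] [UniqueFactorizationMonoid D]
    (H : IsAdjoinAway j h x) : UniqueFactorizationMonoid A := by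
  let _ := (Polynomial.eval₂RingHom j x).toAlgebra
  have : IsLocalization.Away h A := H
  exact UniqueFactorizationMonoid.of_isLocalization (Submonoid.powers h) A

end

theorem adjoinDenom_ne_zero (D : Type u) [CommRing D] [Nontrivial D] (b : Bool) :
    adjoinDenom D b ≠ 0 := by
  cases b
  exacts [one_ne_zero, Polynomial.X_ne_zero]

namespace IsLaurentTower

variable {K : Type u} [Field K] {f : K[X]} {A : Type u} [CommRing A] [Algebra K A]

theorem isDomain_and_uniqueFactorizationMonoid (hf : f ≠ 0) {l : List Bool}
    (H : IsLaurentTower K f l A) : IsDomain A ∧ UniqueFactorizationMonoid A := by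
  induction l generalizing A with
  | nil =>
    obtain ⟨y, hy⟩ := H
    exact ⟨hy.isDomain hf, hy.uniqueFactorizationMonoid⟩
  | cons b l ih =>
    obtain ⟨D, _, _, j, x, hD, hx⟩ := H
    obtain ⟨_, _⟩ := ih hD
    exact ⟨hx.isDomain (adjoinDenom_ne_zero D b), hx.uniqueFactorizationMonoid⟩

theorem isPrincipalIdealRing (H : IsLaurentTower K f [] A) : IsPrincipalIdealRing A := by
  obtain ⟨y, hy⟩ := H
  let _ := (Polynomial.eval₂RingHom (algebraMap K A) y).toAlgebra
  have : IsLocalization.Away f A := hy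
  exact isPrincipalIdealRing_of_isLocalization (Submonoid.powers f)

end IsLaurentTower

namespace HasFreeProjectivesOverFields

theorem nil : HasFreeProjectivesOverFields.{u} [] := by
  intro K _ hK f hf _ A _ _ H P _ _ _ _ r _
  let _ := hK.toField
  have := H.isPrincipalIdealRing
  have := (H.isDomain_and_uniqueFactorizationMonoid hf.ne_zero).1
  infer_instance

-- The innermost variable is exchanged with `Y`: over a field, `K[Y]_f` is a principal ideal domain,
-- so a one-dimensional base for the remaining variables.
theorem append_singleton {l : List Bool} {b : Bool} (hl : HasFreeProjectivesOverFields.{u} l)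
    (hb : b = false → true ∉ l) : HasFreeProjectivesOverFields.{u} (l ++ [b]) := by
  intro K _ hK f hf _ A _ _ H
  let _ := hK.toField
  obtain ⟨_, _⟩ := H.isDomain_and_uniqueFactorizationMonoid hf.ne_zero
  obtain ⟨C, _, _, _, hC, hA⟩ := H.exists_of_append_singleton
  have := hC.isPrincipalIdealRing
  have := (hC.isDomain_and_uniqueFactorizationMonoid hf.ne_zero).1
  have hdim : ringKrullDim C < 2 :=
    (Ring.krullDimLE_iff (n := 1).1 inferInstance).trans_lt (by norm_num)
  refine SerreDimLT.hasFreeProjectives (hA.serreDimLT hl ?_ (fun ht => ?_) hdim)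
  · cases b
    exacts [Polynomial.monic_one, Polynomial.monic_X]
  · cases b
    exacts [absurd ht (hb rfl), Polynomial.natDegree_X.ge]

theorem replicate_append_replicate (m n : ℕ) :
    HasFreeProjectivesOverFields.{u} (List.replicate m false ++ List.replicate n true) := by
  induction n with
  | zero =>
    rw [List.replicate_zero, List.append_nil]
    induction m with
    | zero => exact nil
    | succ m ih => exact List.replicate_succ' ▸ ih.append_singleton fun _ => by simp
  | succ n ih =>
    rw [List.replicate_succ', ← List.append_assoc]
    exact ih.append_singleton (by simp)

end HasFreeProjectivesOverFields

/-! ### Laurent overrings -/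

section

variable {R : Type u} [CommRing R] {f : R[X]} {ι : Type}

/-- `A` is the `R`-algebra obtained by adjoining to `R[Y]_f` a family of independent variables, a
Laurent variable at `i` if `t i = true` and a polynomial variable otherwise; `y` and `v i` are the
variables. The encoding is by the universal property among rings in the universe of `R`, which is
visibly symmetric in all the variables. -/
structure IsLaurentOverring (f : R[X]) (t : ι → Bool) {A : Type u} [CommRing A] [Algebra R A]
    (y : A) (v : ι → A) : Prop where
  isUnit_eval₂ : IsUnit (f.eval₂ (algebraMap R A) y)
  isUnit_var (i : ι) (hi : t i = true) : IsUnit (v i)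
  exists_lift (E : Type u) [CommRing E] (g : R →+* E) (e : E) (w : ι → E)
    (he : IsUnit (f.eval₂ g e)) (hw : ∀ i, t i = true → IsUnit (w i)) :
    ∃ k : A →+* E, k.comp (algebraMap R A) = g ∧ k y = e ∧ ∀ i, k (v i) = w i
  hom_ext (E : Type u) [CommRing E] (k k' : A →+* E)
    (hR : k.comp (algebraMap R A) = k'.comp (algebraMap R A)) (hy : k y = k' y)
    (hv : ∀ i, k (v i) = k' (v i)) : k = k'

namespace IsLaurentOverring

variable {t : ι → Bool} {A A' : Type u} [CommRing A] [Algebra R A] [CommRing A'] [Algebra R A']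
  {y : A} {v : ι → A} {y' : A'} {v' : ι → A'}

theorem nonempty_algEquiv (H : IsLaurentOverring f t y v) (H' : IsLaurentOverring f t y' v') :
    Nonempty (A ≃ₐ[R] A') := by
  obtain ⟨k, hR, hy, hv⟩ := H.exists_lift A' (algebraMap R A') y' v' H'.isUnit_eval₂ H'.isUnit_var
  obtain ⟨k', hR', hy', hv'⟩ := H'.exists_lift A (algebraMap R A) y v H.isUnit_eval₂ H.isUnit_var
  have hkk' : k.comp k' = .id _ := H'.hom_ext _ _ _
    (by rw [RingHom.comp_assoc, hR', hR, RingHom.id_comp]) (by simp [hy, hy']) (by simp [hv, hv'])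
  have hk'k : k'.comp k = .id _ := H.hom_ext _ _ _
    (by rw [RingHom.comp_assoc, hR, hR', RingHom.id_comp]) (by simp [hy, hy']) (by simp [hv, hv'])
  exact ⟨.ofRingEquiv (f := .ofRingHom k k' hkk' hk'k) (RingHom.congr_fun hR)⟩

theorem reindex {κ : Type} (H : IsLaurentOverring f t y v) (e : κ ≃ ι) :
    IsLaurentOverring f (t ∘ e) y (v ∘ e) where
  isUnit_eval₂ := H.isUnit_eval₂
  isUnit_var i hi := H.isUnit_var _ hi
  exists_lift E _ g z w hz hw := by
    obtain ⟨k, hR, hy, hv⟩ := H.exists_lift E g z (w ∘ e.symm) hz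
      fun i hi => hw _ (by simpa using hi)
    exact ⟨k, hR, hy, fun i => by simpa using hv (e i)⟩
  hom_ext E _ k k' hR hy hv := H.hom_ext E k k' hR hy fun i => by simpa using hv (e.symm i)

theorem of_isAdjoinAway (hy : IsAdjoinAway (algebraMap R A) f y) (t : Fin 0 → Bool) :
    IsLaurentOverring f t y Fin.elim0 where
  isUnit_eval₂ := hy.isUnit
  isUnit_var i := i.elim0
  exists_lift E _ g e w he _ := by
    obtain ⟨k, hR, hy⟩ := hy.exists_lift g he
    exact ⟨k, hR, hy, fun i => i.elim0⟩
  hom_ext E _ k k' hR hk _ := hy.hom_ext hR hk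

theorem cons {n : ℕ} {t : Fin n → Bool} {v : Fin n → A} (H : IsLaurentOverring f t y v)
    (j : A →ₐ[R] A') {b : Bool} {x : A'} (hx : IsAdjoinAway j.toRingHom (adjoinDenom A b) x) :
    IsLaurentOverring f (Fin.cons b t : Fin (n + 1) → Bool) (j y)
      (Fin.cons x fun i => j (v i) : Fin (n + 1) → A') := by
  have hj : j.toRingHom.comp (algebraMap R A) = algebraMap R A' := j.comp_algebraMap
  have hxunit : b = true → IsUnit x := by
    rintro rfl
    simpa [adjoinDenom] using hx.isUnit
  refine ⟨?_, Fin.cases hxunit fun i hi => (H.isUnit_var i hi).map j,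
    fun E _ g e w he hw => ?_, fun E _ k k' hR hy hv => ?_⟩
  · rw [← hj]
    exact (Polynomial.hom_eval₂ f (algebraMap R A) j.toRingHom y) ▸ H.isUnit_eval₂.map j.toRingHom
  · obtain ⟨k, hkR, hky, hkv⟩ := H.exists_lift E g e (fun i => w i.succ) he
      fun i hi => hw i.succ hi
    have hw₀ : IsUnit ((adjoinDenom A b).eval₂ k (w 0)) := by
      cases b
      · simp [adjoinDenom]
      · simpa [adjoinDenom] using hw 0 rfl
    obtain ⟨k', hk'j, hk'x⟩ := hx.exists_lift k hw₀
    have hk' (a : A) : k' (j a) = k a := RingHom.congr_fun hk'j a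
    refine ⟨k', ?_, (hk' y).trans hky, Fin.cases hk'x fun i => (hk' _).trans (hkv i)⟩
    rw [← hj, ← RingHom.comp_assoc, hk'j, hkR]
  · refine hx.hom_ext (H.hom_ext E _ _ ?_ hy fun i => hv i.succ) (hv 0)
    rw [RingHom.comp_assoc, RingHom.comp_assoc, hj, hR]

end IsLaurentOverring

theorem IsLaurentTower.exists_isLaurentOverring {l : List Bool} {A : Type u} [CommRing A]
    [Algebra R A] (H : IsLaurentTower R f l A) : ∃ y v, IsLaurentOverring f l.get (A := A) y v := by
  induction l generalizing A with
  | nil =>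
    obtain ⟨y, hy⟩ := H
    exact ⟨y, _, .of_isAdjoinAway hy _⟩
  | cons b l ih =>
    obtain ⟨D, _, _, j, x, hD, hx⟩ := H
    obtain ⟨y, v, hyv⟩ := ih hD
    refine ⟨j y, (Fin.cons x fun i => j (v i) : Fin (l.length + 1) → A), ?_⟩
    have hget : (b :: l).get = (Fin.cons b l.get : Fin (l.length + 1) → Bool) :=
      funext (Fin.cases rfl fun _ => rfl)
    rw [hget]
    exact hyv.cons j hx

end

/-- The type of the variables of `R[X_1,…,X_m,Y_1^{±1},…,Y_n^{±1}]`: only the `Y_j` are Laurent. -/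
def isLaurentVar (m n : ℕ) : Fin m ⊕ Fin n → Bool :=
  Sum.elim (fun _ => false) (fun _ => true)

namespace IsLaurentOverring

section

variable {R A : Type u} [CommRing R] {f : R[X]} [CommRing A] [Algebra R A] {m n : ℕ} {y : A}

theorem isLaurentTower {v : Fin m ⊕ Fin n → A} (H : IsLaurentOverring f (isLaurentVar m n) y v) :
    IsLaurentTower R f (List.replicate m false ++ List.replicate n true) A := by
  obtain ⟨T, _, _, hT⟩ :=
    IsLaurentTower.exists_algebra R f (List.replicate m false ++ List.replicate n true)
  obtain ⟨y', v', hyv'⟩ := hT.exists_isLaurentOverring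
  have hlen : m + n = (List.replicate m false ++ List.replicate n true).length := by simp
  have hreindex := hyv'.reindex (finSumFinEquiv.trans (finCongr hlen))
  have ht : (List.replicate m false ++ List.replicate n true).get ∘
      finSumFinEquiv.trans (finCongr hlen) = isLaurentVar m n := by
    funext i
    cases i <;> simp [isLaurentVar]
  rw [ht] at hreindex
  obtain ⟨e⟩ := hreindex.nonempty_algEquiv H
  exact hT.congr e

theorem swap {v : Fin m ⊕ Fin (n + 1) → A}
    (H : IsLaurentOverring (1 : R[X]) (isLaurentVar m (n + 1)) y v) :
    IsLaurentOverring (Polynomial.X : R[X]) (isLaurentVar (m + 1) n) (v (Sum.inr 0))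
      (Sum.elim (Fin.cons y fun i => v (Sum.inl i) : Fin (m + 1) → A)
        fun i => v (Sum.inr i.succ)) where
  isUnit_eval₂ := by
    rw [Polynomial.eval₂_X]
    exact H.isUnit_var _ rfl
  isUnit_var
    | .inl _, hi => by cases hi
    | .inr _, _ => H.isUnit_var _ rfl
  exists_lift E _ g e w he hw := by
    rw [Polynomial.eval₂_X] at he
    obtain ⟨k, hkR, hky, hkv⟩ := H.exists_lift E g (w (Sum.inl 0))
      (Sum.elim (fun i => w (Sum.inl i.succ)) (Fin.cons e fun i => w (Sum.inr i))) (by simp)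
      (Sum.rec (fun i hi => by cases hi) (Fin.cases (fun _ => he) fun i _ => hw (Sum.inr i) rfl))
    exact ⟨k, hkR, hkv (Sum.inr 0), Sum.rec (Fin.cases hky fun i => hkv (Sum.inl i))
      fun i => hkv (Sum.inr i.succ)⟩
  hom_ext E _ k k' hR hy hv := H.hom_ext E k k' hR (hv (Sum.inl 0))
    (Sum.rec (fun i => hv (Sum.inl i.succ)) (Fin.cases hy fun i => hv (Sum.inr i)))

theorem serreDimLT [IsNoetherianRing R] (hf : f.Monic) {v : Fin m ⊕ Fin n → A}
    (H : IsLaurentOverring f (isLaurentVar m n) y v) {d : ℕ} (hd : ringKrullDim R < d) :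
    SerreDimLT A d := by
  rcases subsingleton_or_nontrivial R with _ | _
  · exact .of_subsingleton R A
  rcases n with _ | n
  · exact H.isLaurentTower.serreDimLT (.replicate_append_replicate m 0) hf (by simp) hd
  rcases Nat.eq_zero_or_pos f.natDegree with hf0 | hfpos
  · obtain rfl : f = 1 := hf.natDegree_eq_zero.1 hf0
    exact H.swap.isLaurentTower.serreDimLT (.replicate_append_replicate (m + 1) n)
      Polynomial.monic_X (fun _ => Polynomial.natDegree_X.ge) hd
  · exact H.isLaurentTower.serreDimLT (.replicate_append_replicate m (n + 1)) hf (fun _ => hfpos) hd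

end

end IsLaurentOverring

section

variable {R B E : Type*} [CommRing R] {m n : ℕ} [CommRing B] [Algebra R B]
  [Algebra (MvPolynomial (Fin m ⊕ Fin n) R) B] [IsScalarTower R (MvPolynomial (Fin m ⊕ Fin n) R) B]
  [IsLocalization (Ymonoid R m n) B] [CommRing E]

variable (B) in
theorem exists_ringHom_of_isUnit (g : R →+* E) {w : Fin m ⊕ Fin n → E}
    (hw : ∀ j, IsUnit (w (Sum.inr j))) : ∃ k : B →+* E, k.comp (algebraMap R B) = g ∧
      ∀ i, k (algebraMap (MvPolynomial (Fin m ⊕ Fin n) R) B (X i)) = w i := by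
  have hle : Ymonoid R m n ≤ (IsUnit.submonoid E).comap (eval₂Hom g w) := by
    refine Submonoid.closure_le.2 ?_
    rintro _ ⟨j, rfl⟩
    simpa [IsUnit.mem_submonoid_iff] using hw j
  have hY (z : Ymonoid R m n) : IsUnit (eval₂Hom g w z) := hle z.2
  refine ⟨IsLocalization.lift hY, RingHom.ext fun r => ?_, fun i => ?_⟩
  · rw [IsScalarTower.algebraMap_eq R (MvPolynomial (Fin m ⊕ Fin n) R) B]
    simp [IsLocalization.lift_eq, algebraMap_eq]
  · simp [IsLocalization.lift_eq]

theorem ringHom_ext_of_isLocalization_Ymonoid {k k' : B →+* E}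
    (hR : k.comp (algebraMap R B) = k'.comp (algebraMap R B))
    (hX : ∀ i, k (algebraMap (MvPolynomial (Fin m ⊕ Fin n) R) B (X i)) =
      k' (algebraMap (MvPolynomial (Fin m ⊕ Fin n) R) B (X i))) : k = k' := by
  refine IsLocalization.ringHom_ext (Ymonoid R m n) (MvPolynomial.ringHom_ext (fun r => ?_) hX)
  rw [IsScalarTower.algebraMap_eq R (MvPolynomial (Fin m ⊕ Fin n) R) B] at hR
  exact RingHom.congr_fun hR r

end

theorem IsLaurentOverring.of_isLocalization {R A B : Type u} [CommRing R] {m n : ℕ} [CommRing B]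
    [Algebra R B] [Algebra (MvPolynomial (Fin m ⊕ Fin n) R) B]
    [IsScalarTower R (MvPolynomial (Fin m ⊕ Fin n) R) B] [IsLocalization (Ymonoid R m n) B]
    (f : R[X]) [CommRing A] [Algebra B[X] A] [Algebra R A] [IsScalarTower R B[X] A]
    [IsLocalization.Away (f.map (algebraMap R B)) A] :
    IsLaurentOverring f (isLaurentVar m n) (algebraMap B[X] A Polynomial.X) fun i =>
      algebraMap B[X] A
        (Polynomial.C (algebraMap (MvPolynomial (Fin m ⊕ Fin n) R) B (X i))) := by
  have hA := IsAdjoinAway.of_isLocalization (A := A) (f.map (algebraMap R B))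
  have hRA : algebraMap R A =
      ((algebraMap B[X] A).comp Polynomial.C).comp (algebraMap R B) :=
    IsScalarTower.algebraMap_eq R B[X] A
  refine ⟨?_, ?_, fun E _ g e w he hw => ?_, fun E _ k k' hR hy hv => ?_⟩
  · rw [hRA, ← Polynomial.eval₂_map]
    exact hA.isUnit
  · rintro (i | j) h
    · cases h
    · have hY : IsUnit (algebraMap (MvPolynomial (Fin m ⊕ Fin n) R) B (X (Sum.inr j))) :=
        IsLocalization.map_units B
          (⟨X (Sum.inr j), Submonoid.subset_closure ⟨j, rfl⟩⟩ : Ymonoid R m n)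
      exact (hY.map Polynomial.C).map (algebraMap B[X] A)
  · obtain ⟨k, hkR, hkv⟩ := exists_ringHom_of_isUnit B g fun j => hw (Sum.inr j) rfl
    obtain ⟨k', hk'B, hk'X⟩ := hA.exists_lift k (e := e) (by rwa [Polynomial.eval₂_map, hkR])
    refine ⟨k', ?_, hk'X, fun i => (RingHom.congr_fun hk'B _).trans (hkv i)⟩
    rw [hRA, ← RingHom.comp_assoc, hk'B, hkR]
  · refine hA.hom_ext (ringHom_ext_of_isLocalization_Ymonoid (R := R) ?_ hv) hy
    rwa [hRA] at hR

/-! ### Independence of the universe -/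

theorem nonempty_ringEquiv_of_algEquiv {R B B' A A' : Type*} [CommRing R] [CommRing B]
    [Algebra R B] [CommRing B'] [Algebra R B'] (e : B ≃ₐ[R] B') (f : R[X]) [CommRing A]
    [Algebra B[X] A] [IsLocalization.Away (f.map (algebraMap R B)) A] [CommRing A']
    [Algebra B'[X] A'] [IsLocalization.Away (f.map (algebraMap R B')) A'] :
    Nonempty (A ≃+* A') := by
  refine ⟨IsLocalization.ringEquivOfRingEquiv (M := .powers (f.map (algebraMap R B)))
    (T := .powers (f.map (algebraMap R B'))) A A' (Polynomial.mapEquiv e.toRingEquiv) ?_⟩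
  rw [Submonoid.map_powers]
  congr 1
  change Polynomial.map _ (f.map _) = _
  rw [Polynomial.map_map]
  congr 1
  exact e.toAlgHom.comp_algebraMap

theorem SerreDimLT.exists_orderIdeal_eq_top_of_ringEquiv {A₀ : Type u} {A P : Type*} [CommRing A₀]
    [CommRing A] [AddCommGroup P] [Module A P] [Module.Finite A P] [Module.Projective A P]
    {d r : ℕ} (H : SerreDimLT A₀ d) (e : A ≃+* A₀) (hdr : d ≤ r)
    (hr : ∀ p : PrimeSpectrum A, Module.rankAtStalk P p = r) :
    ∃ x : P, orderIdeal (A := A) x = ⊤ := by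
  let _ : Algebra A A₀ := e.toRingHom.toAlgebra
  obtain ⟨N, π, hπ⟩ := Module.Finite.exists_fin' A₀ (A₀ ⊗[A] P)
  let q := π.quotKerEquivOfSurjective hπ
  have : Module.Projective A₀ ((Fin N → A₀) ⧸ LinearMap.ker π) := .of_equiv q.symm
  obtain ⟨z, hz⟩ := H ((Fin N → A₀) ⧸ LinearMap.ker π) r hdr fun p => by
    rw [Module.rankAtStalk_eq_of_equiv q, Module.rankAtStalk_baseChange, hr]
  obtain ⟨φ, hφ⟩ := mem_orderIdeal.1 ((Ideal.eq_top_iff_one _).1 hz)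
  have hqz : orderIdeal (A := A₀) (q z) = ⊤ := (Ideal.eq_top_iff_one _).2
    (mem_orderIdeal.2 ⟨φ ∘ₗ q.symm.toLinearMap, by simpa using hφ⟩)
  obtain ⟨x, hx⟩ := exists_orderIdeal_sup_ker_eq_top e.surjective hqz
  have hker : RingHom.ker (algebraMap A A₀) = ⊥ :=
    (RingHom.injective_iff_ker_eq_bot _).1 e.injective
  exact ⟨x, by rwa [hker, sup_bot_eq] at hx⟩

end SerreDimension

/-- **Theorem (Serre dimension of `B[Y, f⁻¹]`, `f` monic).**
Let `R` be a commutative Noetherian ring of finite Krull dimension `d`,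
`B = R[X_1,…,X_m,Y_1^{±1},…,Y_n^{±1}]` a Laurent polynomial ring over `R`,
`f ∈ R[Y]` a monic polynomial and `A = B[Y, f⁻¹]` the localization of `B[Y]` at the powers
of `f`.  Then every finitely generated projective `A`-module of constant rank `≥ d + 1`
has a unimodular element. -/
theorem serre_dimension_of_laurent_overring
    (R : Type*) [CommRing R] [IsNoetherianRing R] (d : ℕ) (hdim : ringKrullDim R = d)
    (m n : ℕ)
    (B : Type*) [CommRing B] [Algebra R B] [Algebra (MvPolynomial (Fin m ⊕ Fin n) R) B]
    [IsScalarTower R (MvPolynomial (Fin m ⊕ Fin n) R) B]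
    [IsLocalization (Ymonoid R m n) B]
    (f : Polynomial R) (hf : f.Monic)
    (A : Type*) [CommRing A] [Algebra (Polynomial B) A]
    [IsLocalization.Away (f.map (algebraMap R B)) A]
    (P : Type*) [AddCommGroup P] [Module A P] [Module.Finite A P] [Module.Projective A P]
    (r : ℕ) (hr : d + 1 ≤ r)
    (hrank : ∀ p : PrimeSpectrum A,
      Module.finrank (Localization.AtPrime p.asIdeal) (LocalizedModule p.asIdeal.primeCompl P)
        = r) :
    ∃ (v : P) (φ : P →ₗ[A] A), φ v = 1 := by
  let B₀ := Localization (Ymonoid R m n)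
  let A₀ := Localization.Away (f.map (algebraMap R B₀))
  obtain ⟨e⟩ : Nonempty (A ≃+* A₀) := SerreDimension.nonempty_ringEquiv_of_algEquiv
    ((IsLocalization.algEquiv (Ymonoid R m n) B B₀).restrictScalars R) f
  have hdim' : ringKrullDim R < (d + 1 : ℕ) := by
    rw [hdim]
    exact_mod_cast Nat.lt_succ_self d
  have hA₀ : SerreDimension.SerreDimLT A₀ (d + 1) :=
    (SerreDimension.IsLaurentOverring.of_isLocalization (m := m) (n := n) (B := B₀) f).serreDimLT
      hf hdim'
  obtain ⟨x, hx⟩ := hA₀.exists_orderIdeal_eq_top_of_ringEquiv e hr hrank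
  exact ⟨x, SerreDimension.mem_orderIdeal.1 ((Ideal.eq_top_iff_one _).1 hx)⟩
end
end

section
/- Let A be a commutative Noetherian ring, Q a finitely generated A-module, and s ∈ A such that the localization Q_s is a free A_s-module of rank r. Then there exist p_1,…,p_r ∈ Q, A-linear maps φ_1,…,φ_r : Q → A, and an integer t ≥ 1 such that, writing s' = s^t: (i) the annihilator of s' in A equals the annihilator of s'^2; (ii) s'Q ⊆ F and s'·Hom_A(Q,A) ⊆ G, where F = Σ_{i=1}^r A p_i ⊆ Q and G = Σ_{i=1}^r A φ_i ⊆ Hom_A(Q,A); (iii) φ_i(p_j) = s' if i = j and φ_i(p_j) = 0 if i ≠ j. -/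
noncomputable section

/-!
A basis of `Q_s` is an isomorphism `Q_s ≃ A_s ^ r`. Up to powers of `s`, it and its inverse lift to
maps `Φ : Q → A ^ r` and `Ψ : A ^ r → Q` with `Ψ ∘ Φ` and `Φ ∘ Ψ` both multiplication by the same
power `s'` of `s`. The images `p i` of the standard basis vectors under `Ψ` and the coordinates
`φ i` of `Φ` then have all the required properties: `Ψ ∘ Φ = s'` gives `s' • q = ∑ φ i q • p i` and
`s' • ψ = ψ ∘ Ψ ∘ Φ = ∑ ψ (p i) • φ i`, while `Φ ∘ Ψ = s'` says `φ i (p j) = s' δᵢⱼ`.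
Lifting a map into `A_s ^ r` out of a module that is merely finitely generated uses that a single
power of `s` kills the kernel of `A → A_s`.
-/

theorem mul_eq_zero_iff_sq_mul_eq_zero {A : Type*} [CommSemiring A] (S : Submonoid A)
    (Aₛ : Type*) [CommSemiring Aₛ] [Algebra A Aₛ] [IsLocalization S Aₛ] {c d : A} (hd : d ∈ S)
    (hc : ∀ a, algebraMap A Aₛ a = 0 → c * a = 0) (hcd : c ∣ d) (a : A) :
    d * a = 0 ↔ d ^ 2 * a = 0 := by
  refine ⟨fun h => by rw [pow_two, mul_assoc, h, mul_zero], fun h => ?_⟩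
  have ca_eq_zero : c * a = 0 :=
    hc a ((IsLocalization.map_eq_zero_iff S Aₛ a).2 ⟨⟨d ^ 2, pow_mem hd 2⟩, h⟩)
  exact zero_dvd_iff.1 (ca_eq_zero ▸ mul_dvd_mul_right hcd a)

section Localization

variable {A : Type*} [CommRing A] (S : Submonoid A)
  {M Mₛ N Nₛ : Type*} [AddCommGroup M] [AddCommGroup Mₛ] [AddCommGroup N] [AddCommGroup Nₛ]
  [Module A M] [Module A Mₛ] [Module A N] [Module A Nₛ]
  (g : N →ₗ[A] Nₛ) [IsLocalizedModule S g]

theorem exists_forall_smul_eq_zero_of_localization_eq_zero [IsNoetherian A N] :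
    ∃ c : S, ∀ x, g x = 0 → c • x = 0 := by
  obtain ⟨c, hc⟩ := Module.Finite.exists_smul_of_comp_eq_of_isLocalizedModule S g
    (LinearMap.ker g).subtype 0 (by ext x; simp)
  refine ⟨c, fun x hx => ?_⟩
  simpa using LinearMap.congr_fun hc ⟨x, hx⟩

theorem exists_lift_of_smul_eq_zero [Module.Finite A M] {c : S}
    (hc : ∀ x, g x = 0 → c • x = 0) (l : M →ₗ[A] Nₛ) :
    ∃ (h : M →ₗ[A] N) (d : S), g ∘ₗ h = d • l := by
  obtain ⟨k, π, hπ⟩ := Module.Finite.exists_fin' A M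
  obtain ⟨h₀, d, hh₀⟩ := Module.FinitePresentation.exists_lift_of_isLocalizedModule S g (l ∘ₗ π)
  have ker_le : LinearMap.ker π ≤ LinearMap.ker (c • h₀) := fun x hx => by
    refine hc _ ?_
    simpa [LinearMap.mem_ker.1 hx] using LinearMap.congr_fun hh₀ x
  let h : M →ₗ[A] N :=
    (LinearMap.ker π).liftQ (c • h₀) ker_le ∘ₗ (π.quotKerEquivOfSurjective hπ).symm
  have h_comp : h ∘ₗ π = c • h₀ := LinearMap.ext fun x => by simp [h]
  refine ⟨h, c * d, ?_⟩
  rw [← LinearMap.cancel_right hπ, LinearMap.comp_assoc, h_comp, LinearMap.comp_smul, hh₀,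
    smul_smul, LinearMap.smul_comp]

theorem exists_comp_eq_smul_id_of_localization_equiv [Module.Finite A M]
    [Module.FinitePresentation A N] (f : M →ₗ[A] Mₛ) [IsLocalizedModule S f] {c : S}
    (hc : ∀ x, g x = 0 → c • x = 0) (e : Mₛ ≃ₗ[A] Nₛ) :
    ∃ (d : S) (Φ : M →ₗ[A] N) (Ψ : N →ₗ[A] M),
      Ψ ∘ₗ Φ = d • LinearMap.id ∧ Φ ∘ₗ Ψ = d • LinearMap.id := by
  obtain ⟨Φ, a, hΦ⟩ := exists_lift_of_smul_eq_zero S g hc (e.toLinearMap ∘ₗ f)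
  obtain ⟨Ψ, b, hΨ⟩ :=
    Module.FinitePresentation.exists_lift_of_isLocalizedModule S f (e.symm.toLinearMap ∘ₗ g)
  replace hΦ x : g (Φ x) = a • e (f x) := LinearMap.congr_fun hΦ x
  replace hΨ y : f (Ψ y) = b • e.symm (g y) := LinearMap.congr_fun hΨ y
  obtain ⟨u, hu⟩ := Module.Finite.exists_smul_of_comp_eq_of_isLocalizedModule S f
    (Ψ ∘ₗ Φ) ((a * b) • LinearMap.id) (by
      ext x
      simp [hΦ, hΨ, Submonoid.smul_def, smul_smul, mul_comm])
  obtain ⟨v, hv⟩ := Module.Finite.exists_smul_of_comp_eq_of_isLocalizedModule S g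
    (Φ ∘ₗ Ψ) ((a * b) • LinearMap.id) (by
      ext y
      simp [hΦ, hΨ, Submonoid.smul_def, smul_smul])
  refine ⟨u * v * (a * b), (u * v) • Φ, Ψ, ?_, ?_⟩
  · rw [LinearMap.comp_smul, mul_comm u, mul_smul, hu, smul_smul, smul_smul]
  · rw [LinearMap.smul_comp, mul_smul, hv, smul_smul, smul_smul]

end Localization

section StandardBasis

variable {A ι M : Type*} [Finite ι] [AddCommMonoid M]

theorem apply_mem_span_range_apply_single [Semiring A] [Module A M] [DecidableEq ι]
    (Ψ : (ι → A) →ₗ[A] M) (x : ι → A) :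
    Ψ x ∈ Submodule.span A (Set.range fun i => Ψ (Pi.single i 1)) := by
  have mem_map := Submodule.mem_map_of_mem (f := Ψ) ((Pi.basisFun A ι).mem_span x)
  rw [Submodule.map_span, ← Set.range_comp] at mem_map
  simpa only [Function.comp_def, Pi.basisFun_apply] using mem_map

theorem comp_mem_span_range_proj_comp [CommSemiring A] [Module A M]
    (ψ : (ι → A) →ₗ[A] A) (Φ : M →ₗ[A] ι → A) :
    ψ ∘ₗ Φ ∈ Submodule.span A (Set.range fun i => LinearMap.proj i ∘ₗ Φ) := by
  classical
  cases nonempty_fintype ι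
  have expansion : ψ ∘ₗ Φ = ∑ i, ψ (Pi.single i 1) • (LinearMap.proj i ∘ₗ Φ) := by
    ext q
    conv_lhs => rw [LinearMap.comp_apply, pi_eq_sum_univ' (Φ q), map_sum]
    simp [mul_comm]
  rw [expansion]
  exact Submodule.sum_smul_mem _ _ fun i _ => Submodule.subset_span ⟨i, rfl⟩

end StandardBasis

theorem nonempty_basis_fin_of_finrank_eq {R M : Type*} [CommSemiring R] [AddCommMonoid M]
    [Module R M] [Module.Free R M] [Module.Finite R M] {r : ℕ} (hr : Module.finrank R M = r) :
    Nonempty (Module.Basis (Fin r) R M) := by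
  cases subsingleton_or_nontrivial R
  · exact ⟨.ofRepr (Module.subsingletonEquiv R M (Fin r))⟩
  · exact ⟨Module.finBasisOfFinrankEq R M hr⟩

theorem lindel_dual_submodules_general {A Aₛ Q Qₛ ι : Type*} [CommRing A] [CommRing Aₛ]
    [Algebra A Aₛ] [AddCommGroup Q] [Module A Q] [Module.Finite A Q] [AddCommGroup Qₛ]
    [Module A Qₛ] [Module Aₛ Qₛ] [IsScalarTower A Aₛ Qₛ] [Finite ι] [DecidableEq ι]
    (s : A) [IsLocalization.Away s Aₛ] (f : Q →ₗ[A] Qₛ) [IsLocalizedModule (.powers s) f]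
    (b : Module.Basis ι Aₛ Qₛ) {n : ℕ} (hn : ∀ a : A, algebraMap A Aₛ a = 0 → s ^ n * a = 0) :
    ∃ (t : ℕ) (p : ι → Q) (φ : ι → (Q →ₗ[A] A)), 1 ≤ t ∧
      (∀ a : A, s ^ t * a = 0 ↔ (s ^ t) ^ 2 * a = 0) ∧
      (∀ q : Q, s ^ t • q ∈ Submodule.span A (Set.range p)) ∧
      (∀ ψ : Q →ₗ[A] A, s ^ t • ψ ∈ Submodule.span A (Set.range φ)) ∧
      (∀ i j, φ i (p j) = if i = j then s ^ t else 0) := by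
  let g : (ι → A) →ₗ[A] ι → Aₛ := .pi fun i => Algebra.linearMap A Aₛ ∘ₗ .proj i
  have hg (x : ι → A) (hx : g x = 0) : (⟨s ^ n, n, rfl⟩ : Submonoid.powers s) • x = 0 :=
    funext fun i => hn _ (congr_fun hx i)
  obtain ⟨⟨_, u, rfl⟩, Φ₀, Ψ, hΨΦ₀, hΦ₀Ψ⟩ :=
    exists_comp_eq_smul_id_of_localization_equiv (.powers s) g f hg
      (b.equivFun.restrictScalars A)
  let t := n + 1 + u
  let Φ := s ^ (n + 1) • Φ₀
  have hΨΦ : Ψ ∘ₗ Φ = s ^ t • LinearMap.id := by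
    rw [LinearMap.comp_smul, hΨΦ₀, pow_add _ (n + 1), mul_smul]; rfl
  have hΦΨ : Φ ∘ₗ Ψ = s ^ t • LinearMap.id := by
    rw [LinearMap.smul_comp, hΦ₀Ψ, pow_add _ (n + 1), mul_smul]; rfl
  refine ⟨t, fun i => Ψ (Pi.single i 1), fun i => .proj i ∘ₗ Φ, by lia, fun a => ?_, fun q => ?_,
    fun ψ => ?_, fun i j => ?_⟩
  · exact mul_eq_zero_iff_sq_mul_eq_zero (.powers s) Aₛ ⟨t, rfl⟩ hn
      (pow_dvd_pow s (by lia)) a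
  · have hq : Ψ (Φ q) = s ^ t • q := LinearMap.congr_fun hΨΦ q
    exact hq ▸ apply_mem_span_range_apply_single Ψ (Φ q)
  · have hψ : (ψ ∘ₗ Ψ) ∘ₗ Φ = s ^ t • ψ := by
      rw [LinearMap.comp_assoc, hΨΦ, LinearMap.comp_smul, LinearMap.comp_id]
    exact hψ ▸ comp_mem_span_range_proj_comp (ψ ∘ₗ Ψ) Φ
  · have hij : Φ (Ψ (Pi.single j 1)) i = s ^ t * (Pi.single j 1 : ι → A) i :=
      congr_fun (LinearMap.congr_fun hΦΨ (Pi.single j 1)) i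
    simp [hij, Pi.single_apply]

/-- **Proposition (Lindel).** Let `A` be a commutative Noetherian ring, `Q` a finitely
generated `A`-module and `s ∈ A` such that `Q_s` is a free `A_s`-module of rank `r`.
Then there exist `p_1,…,p_r ∈ Q`, `φ_1,…,φ_r ∈ Q* = Hom_A(Q, A)` and `t ≥ 1` such that,
with `s' = s^t`:
(i) `(0 :_A s'A) = (0 :_A s'²A)`;
(ii) `s'·Q ⊆ F` and `s'·Q* ⊆ G`, where `F = Σ A p_i` and `G = Σ A φ_i`;
(iii) `(φ_i (p_j)) = diag (s', …, s')`. -/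
theorem lindel_dual_submodules
    (A : Type*) [CommRing A] [IsNoetherianRing A]
    (Q : Type*) [AddCommGroup Q] [Module A Q] [Module.Finite A Q]
    (s : A) (r : ℕ)
    [Module.Free (Localization (Submonoid.powers s)) (LocalizedModule (Submonoid.powers s) Q)]
    (hrank : Module.finrank (Localization (Submonoid.powers s))
      (LocalizedModule (Submonoid.powers s) Q) = r) :
    ∃ (t : ℕ) (p : Fin r → Q) (φ : Fin r → (Q →ₗ[A] A)), 1 ≤ t ∧
      (∀ a : A, s ^ t * a = 0 ↔ (s ^ t) ^ 2 * a = 0) ∧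
      (∀ q : Q, s ^ t • q ∈ Submodule.span A (Set.range p)) ∧
      (∀ ψ : Q →ₗ[A] A, s ^ t • ψ ∈ Submodule.span A (Set.range φ)) ∧
      (∀ i j, φ i (p j) = if i = j then s ^ t else 0) := by
  obtain ⟨⟨_, n, rfl⟩, hn⟩ := exists_forall_smul_eq_zero_of_localization_eq_zero
    (.powers s) (Algebra.linearMap A (Localization (.powers s)))
  obtain ⟨b⟩ := nonempty_basis_fin_of_finrank_eq hrank
  exact lindel_dual_submodules_general s (LocalizedModule.mkLinearMap (.powers s) Q) b hn
end
end
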